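/- For every positive integer h there exists an integer c_h such that the following holds: for every finite simple graph G with no odd K_h-minor and every positive integer k, if χ_pcf(Q) ≤ k for every induced bipartite subgraph Q of G, then χ_pcf(G) ≤ k + c_h. -/

import Mathlib

open SimpleGraph

universe u v

namespace CFPaper

variable {V : Type u} {W : Type v}

/-- A coloring is proper if adjacent vertices get distinct colors. -/
def Proper (G : SimpleGraph V) (φ : V → ℕ) : Prop :=
  ∀ ⦃u w : V⦄, G.Adj u w → φ u ≠ φ w

/-- A coloring is conflict-free if every non-isolated vertex has a color appearing
exactly once in its open neighborhood. -/
def ConflictFree (G : SimpleGraph V) (φ : V → ℕ) : Prop :=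
  ∀ v : V, (G.neighborSet v).Nonempty →
    ∃ c : ℕ, {u : V | G.Adj v u ∧ φ u = c}.ncard = 1

/-- `G` is conflict-free `k`-choosable (k a real number). -/
def CFChoosable (G : SimpleGraph V) (k : ℝ) : Prop :=
  ∀ L : V → Finset ℕ, (∀ v, k ≤ ((L v).card : ℝ)) →
    ∃ φ : V → ℕ, (∀ v, φ v ∈ L v) ∧ Proper G φ ∧ ConflictFree G φ

/-- A coloring is `S`-achieved if for every non-isolated vertex there are `s ∈ S`
and a color appearing exactly `s` times in its open neighborhood. -/
def SAchieved (S : Set ℕ) (G : SimpleGraph V) (φ : V → ℕ) : Prop :=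
  ∀ v : V, (G.neighborSet v).Nonempty →
    ∃ s ∈ S, ∃ c : ℕ, {u : V | G.Adj v u ∧ φ u = c}.ncard = s

/-- `G` is `S`-achieved `t`-choosable. -/
def SChoosable (S : Set ℕ) (G : SimpleGraph V) (t : ℕ) : Prop :=
  ∀ L : V → Finset ℕ, (∀ v, t ≤ (L v).card) →
    ∃ φ : V → ℕ, (∀ v, φ v ∈ L v) ∧ Proper G φ ∧ SAchieved S G φ

/-- `G` is properly `S`-achieved `t`-colorable (colors from `{1,…,t}`). -/
def SColorable (S : Set ℕ) (G : SimpleGraph V) (t : ℕ) : Prop :=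
  ∃ φ : V → ℕ, (∀ v, φ v ∈ Finset.Icc 1 t) ∧ Proper G φ ∧ SAchieved S G φ

/-- `G` has a proper conflict-free coloring with colors from `{1,…,t}`. -/
def PCFColorable (G : SimpleGraph V) (t : ℕ) : Prop :=
  ∃ φ : V → ℕ, (∀ v, φ v ∈ Finset.Icc 1 t) ∧ Proper G φ ∧ ConflictFree G φ

/-- The proper conflict-free chromatic number. -/
noncomputable def chiPCF (G : SimpleGraph V) : ℕ := sInf {t : ℕ | PCFColorable G t}

/-- `(B x : x : ι)` is a tree-decomposition of `G` with underlying tree `T`. -/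
structure IsTreeDecomp (G : SimpleGraph V) {ι : Type*} (T : SimpleGraph ι) (B : ι → Set V) :
    Prop where
  tree : T.IsTree
  bags_connected : ∀ vv : V, (T.induce {x : ι | vv ∈ B x}).Connected
  edge_in_bag : ∀ ⦃a b : V⦄, G.Adj a b → ∃ x : ι, a ∈ B x ∧ b ∈ B x

/-- The torso of a tree-decomposition at a node `x`. -/
def torso (G : SimpleGraph V) {ι : Type*} (T : SimpleGraph ι) (B : ι → Set V) (x : ι) :
    SimpleGraph (B x) :=
  SimpleGraph.fromRel fun a b =>
    G.Adj a b ∨ ∃ y : ι, T.Adj x y ∧ (a : V) ∈ B y ∧ (b : V) ∈ B y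

/-- The frame of a tree-decomposition at a node `x`. -/
def frame (G : SimpleGraph V) {ι : Type*} (T : SimpleGraph ι) (B : ι → Set V) (x : ι) :
    Set (Set (B x)) :=
  {s : Set (B x) | ∃ y : ι, T.Adj x y ∧ s = {a : B x | (a : V) ∈ B y}}

/-- A subgraph `H` of `G` is `C`-compatible: every edge of `H` has both ends in some member
of `C`. -/
def Compatible (C : Set (Set V)) (H : SimpleGraph V) : Prop :=
  ∀ ⦃a b : V⦄, H.Adj a b → ∃ c ∈ C, a ∈ c ∧ b ∈ c

/-- `G` is `(S,C,L,t)`-extendable. -/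
def Extendable (S : Set ℕ) (G : SimpleGraph V) (C : Set (Set V)) (L : V → Finset ℕ)
    (t : ℕ) : Prop :=
  ∀ (Wc : Set V), G.IsClique Wc → Wc.ncard ≤ t →
  ∀ (H : SimpleGraph V), H ≤ G → Compatible C H →
  ∀ (φW : V → ℕ), (∀ w ∈ Wc, φW w ∈ L w) →
    (∀ a ∈ Wc, ∀ b ∈ Wc, G.Adj a b → φW a ≠ φW b) →
  ∀ (f : V → ℕ) (g : V → Bool),
  ∃ φ : V → ℕ, (∀ w, φ w ∈ L w) ∧ Proper G φ ∧ (∀ w ∈ Wc, φ w = φW w) ∧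
    (∀ w ∈ Wc, g w = false → ∀ u : V, G.Adj w u → u ∉ Wc → φ u ≠ f w) ∧
    (∀ w : V, (w ∉ Wc ∨ (w ∈ Wc ∧ g w = true)) →
      (((G \ H).neighborSet w = ∅) ∨
        ∃ c : ℕ, {u : V | (G \ H).Adj w u ∧ φ u = c}.ncard ∈ S))

/-- `H` is a minor of `G` (branch-set definition). -/
def IsMinor (H : SimpleGraph W) (G : SimpleGraph V) : Prop :=
  ∃ ρ : W → Set V,
    (∀ w : W, (G.induce (ρ w)).Connected) ∧
    (Pairwise fun a b => Disjoint (ρ a) (ρ b)) ∧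
    ∀ ⦃a b : W⦄, H.Adj a b → ∃ x ∈ ρ a, ∃ y ∈ ρ b, G.Adj x y

/-- The spanning subgraph of `G` whose edges are those between `A` and its complement. -/
def crossGraph (G : SimpleGraph V) (A : Set V) : SimpleGraph V :=
  SimpleGraph.fromRel fun x y => G.Adj x y ∧ x ∈ A ∧ y ∉ A

/-- The odd contraction of `G` determined by the bipartition `{A, Aᶜ}`: contract each
connected component of the spanning bipartite subgraph between `A` and `Aᶜ`. -/
def oddContract (G : SimpleGraph V) (A : Set V) :
    SimpleGraph ((crossGraph G A).ConnectedComponent) :=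
  SimpleGraph.fromRel fun Ct Dt =>
    ∃ x y : V, (crossGraph G A).connectedComponentMk x = Ct ∧
      (crossGraph G A).connectedComponentMk y = Dt ∧ G.Adj x y

/-- `OddContractions G H`: `H` is obtained from `G` by repeatedly applying odd
contractions. -/
inductive OddContractions : ∀ {α : Type u}, SimpleGraph α → ∀ {β : Type u}, SimpleGraph β → Prop
  | refl {α : Type u} (G : SimpleGraph α) : OddContractions G G
  | step {α : Type u} (G : SimpleGraph α) (A : Set α) {β : Type u} {H : SimpleGraph β} :
      OddContractions (oddContract G A) H → OddContractions G H

/-- `H` is an odd minor of `G`: `H` is isomorphic to a graph obtained from a subgraph of `G`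
by repeatedly applying odd contractions. -/
def IsOddMinor (H : SimpleGraph W) (G : SimpleGraph V) : Prop :=
  ∃ (s : Set V) (G₀ : SimpleGraph s), G₀ ≤ G.induce s ∧
    ∃ (β : Type u) (K : SimpleGraph β), OddContractions G₀ K ∧ Nonempty (H ≃g K)

/-- The graph obtained from `H` by subdividing each edge `e` exactly `n e` times, where
`σ` chooses an orientation of each edge. -/
def subdivGraph (H : SimpleGraph W) (σ : H.edgeSet → W × W) (n : H.edgeSet → ℕ) :
    SimpleGraph (W ⊕ (Σ e : H.edgeSet, Fin (n e))) :=
  SimpleGraph.fromRel fun a b =>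
    (∃ (x y : W) (h : H.Adj x y),
        a = Sum.inl x ∧ b = Sum.inl y ∧ n ⟨s(x, y), H.mem_edgeSet.mpr h⟩ = 0) ∨
    (∃ (x : W) (p : Σ e : H.edgeSet, Fin (n e)), a = Sum.inl x ∧ b = Sum.inr p ∧
        ((x = (σ p.1).1 ∧ (p.2 : ℕ) = 0) ∨ (x = (σ p.1).2 ∧ (p.2 : ℕ) = n p.1 - 1))) ∨
    (∃ p q : Σ e : H.edgeSet, Fin (n e), a = Sum.inr p ∧ b = Sum.inr q ∧ p.1 = q.1 ∧
        (p.2 : ℕ) + 1 = (q.2 : ℕ))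

/-- `σ` is a valid orientation of the edges of `H`. -/
def ValidOrientation (H : SimpleGraph W) (σ : H.edgeSet → W × W) : Prop :=
  ∀ e : H.edgeSet, s((σ e).1, (σ e).2) = (e : Sym2 W)

/-- `G` contains a subdivision of `H` as a subgraph. -/
def ContainsSubdivision (H : SimpleGraph W) (G : SimpleGraph V) : Prop :=
  ∃ (σ : H.edgeSet → W × W) (n : H.edgeSet → ℕ), ValidOrientation H σ ∧
    ∃ f : subdivGraph H σ n →g G, Function.Injective f

/-- The strong product of two graphs. -/
def strongProd {α : Type*} {β : Type*} (A : SimpleGraph α) (B : SimpleGraph β) :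
    SimpleGraph (α × β) :=
  SimpleGraph.fromRel fun p q =>
    (A.Adj p.1 q.1 ∧ p.2 = q.2) ∨ (p.1 = q.1 ∧ B.Adj p.2 q.2) ∨
      (A.Adj p.1 q.1 ∧ B.Adj p.2 q.2)


/-- A layering of `G`. -/
def IsLayering (G : SimpleGraph V) (Vl : ℕ → Set V) : Prop :=
  (∀ vv : V, ∃ i : ℕ, vv ∈ Vl i) ∧ (Pairwise fun i j => Disjoint (Vl i) (Vl j)) ∧
  ∀ ⦃a b : V⦄, G.Adj a b → ∃ i : ℕ, a ∈ Vl i ∪ Vl (i + 1) ∧ b ∈ Vl i ∪ Vl (i + 1)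

/-- bichromatic link inside `S` -/
def Link (G : SimpleGraph V) (c : V → Bool) (S : Set V) (a b : V) : Prop :=
  a ∈ S ∧ b ∈ S ∧ G.Adj a b ∧ c a ≠ c b

/-- `S` is nonempty and connected by bichromatic edges -/
def CC (G : SimpleGraph V) (c : V → Bool) (S : Set V) : Prop :=
  S.Nonempty ∧ ∀ x ∈ S, ∀ y ∈ S, Relation.ReflTransGen (Link G c S) x y

/-- link inside `S` -/
def CLink (G : SimpleGraph V) (S : Set V) (a b : V) : Prop :=
  a ∈ S ∧ b ∈ S ∧ G.Adj a b

/-- `S` is nonempty and connected -/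
def Conn (G : SimpleGraph V) (S : Set V) : Prop :=
  S.Nonempty ∧ ∀ x ∈ S, ∀ y ∈ S, Relation.ReflTransGen (CLink G S) x y

/-- branch set model of an odd clique minor -/
def OddModel (G : SimpleGraph V) (h : ℕ) : Prop :=
  ∃ (ρ : Fin h → Set V) (c : V → Bool), (∀ i, CC G c (ρ i)) ∧
    (∀ i j, i ≠ j → Disjoint (ρ i) (ρ j)) ∧
    ∀ i j, i ≠ j → ∃ x ∈ ρ i, ∃ y ∈ ρ j, G.Adj x y ∧ c x = c y

/-- clique minor model inside `S` -/
def HasK (G : SimpleGraph V) (T : ℕ) (S : Set V) : Prop :=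
  ∃ ρ : Fin T → Set V, (∀ i, ρ i ⊆ S) ∧ (∀ i, Conn G (ρ i)) ∧
    (∀ i j, i ≠ j → Disjoint (ρ i) (ρ j)) ∧
    ∀ i j, i ≠ j → ∃ x ∈ ρ i, ∃ y ∈ ρ j, G.Adj x y

theorem isOddMinor_of_oddModel {G : SimpleGraph V} {h : ℕ} (H : OddModel G h) :
    IsOddMinor (⊤ : SimpleGraph (Fin h)) G := by
  classical
  obtain ⟨ρ, c, hcc, hdis, hmono⟩ := H
  set s : Set V := {v | ∃ i, v ∈ ρ i} with hs
  let lbl : s → Fin h := fun x => x.2.choose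
  have hlbl : ∀ x : s, (x : V) ∈ ρ (lbl x) := fun x => x.2.choose_spec
  have hlbl' : ∀ (x : s) i, (x : V) ∈ ρ i → lbl x = i := by
    intro x i hi
    by_contra hne
    exact Set.disjoint_left.1 (hdis _ _ hne) (hlbl x) hi
  let G₀ : SimpleGraph s :=
    { Adj := fun x y => G.Adj x y ∧ ((lbl x = lbl y ∧ c x ≠ c y) ∨ (lbl x ≠ lbl y ∧ c x = c y))
      symm := ⟨by
        rintro x y ⟨h1, h2⟩
        refine ⟨h1.symm, ?_⟩
        rcases h2 with ⟨h2, h3⟩ | ⟨h2, h3⟩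
        · exact Or.inl ⟨h2.symm, h3.symm⟩
        · exact Or.inr ⟨h2.symm, h3.symm⟩⟩
      loopless := ⟨fun x hx => hx.1.ne rfl⟩ }
  let A : Set s := {x | c x = true}
  have hcross : ∀ x y, (crossGraph G₀ A).Adj x y ↔ G.Adj x y ∧ lbl x = lbl y ∧ c x ≠ c y := by
    intro x y
    simp only [crossGraph, SimpleGraph.fromRel_adj]
    constructor
    · rintro ⟨hne, ⟨⟨h1, h2⟩, h3, h4⟩ | ⟨⟨h1, h2⟩, h3, h4⟩⟩
      · have h3' : c x = true := h3
        have h4' : ¬ c y = true := h4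
        rcases h2 with h2 | h2
        · exact ⟨h1, h2⟩
        · exact absurd (h2.2 ▸ h3') h4'
      · have h3' : c y = true := h3
        have h4' : ¬ c x = true := h4
        rcases h2 with h2 | h2
        · exact ⟨h1.symm, h2.1.symm, h2.2.symm⟩
        · exact absurd (h2.2 ▸ h3') h4'
    · rintro ⟨h1, h2, h3⟩
      refine ⟨fun e => h1.ne (by rw [e]), ?_⟩
      by_cases hx : c x = true
      · left
        exact ⟨⟨h1, Or.inl ⟨h2, h3⟩⟩, hx, fun hy => h3 (hx.trans (Eq.symm hy))⟩
      · right
        refine ⟨⟨h1.symm, Or.inl ⟨h2.symm, h3.symm⟩⟩, ?_, hx⟩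
        show c y = true
        cases hcy : c y
        · cases hcx : c x
          · exact absurd (hcx.trans hcy.symm) h3
          · exact absurd hcx hx
        · rfl
  have hreach : ∀ x y : s, (crossGraph G₀ A).Reachable x y → lbl x = lbl y := by
    rintro x y ⟨w⟩
    induction w with
    | nil => rfl
    | cons hadj _ ih => exact ((hcross _ _).1 hadj).2.1.trans ih
  have hreach2 : ∀ i (x y : V) (hx : x ∈ ρ i) (hy : y ∈ ρ i),
      (crossGraph G₀ A).Reachable ⟨x, i, hx⟩ ⟨y, i, hy⟩ := by
    intro i x y hx hy
    have := (hcc i).2 x hx y hy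
    revert hy
    induction this with
    | refl => intro hy; exact SimpleGraph.Reachable.refl _
    | tail _ hl ih =>
      intro hy
      refine (ih hl.1).trans (SimpleGraph.Adj.reachable ?_)
      rw [hcross]
      exact ⟨hl.2.2.1, (hlbl' _ i hl.1).trans (hlbl' _ i hy).symm, hl.2.2.2⟩
  choose p hp using fun i => (hcc i).1
  let f : Fin h → (crossGraph G₀ A).ConnectedComponent :=
    fun i => (crossGraph G₀ A).connectedComponentMk ⟨p i, i, hp i⟩
  have hfinj : Function.Injective f := by
    intro i j hij
    have := hreach _ _ (SimpleGraph.ConnectedComponent.exact hij)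
    rwa [hlbl' _ i (hp i), hlbl' _ j (hp j)] at this
  have hfsurj : Function.Surjective f := by
    intro C
    induction C using SimpleGraph.ConnectedComponent.ind with
    | h x =>
      refine ⟨lbl x, ?_⟩
      exact SimpleGraph.ConnectedComponent.sound (hreach2 (lbl x) _ _ (hp _) (hlbl x))
  refine ⟨s, G₀, fun x y hxy => hxy.1, _, oddContract G₀ A, .step _ A (.refl _), ⟨?_⟩⟩
  refine ⟨Equiv.ofBijective f ⟨hfinj, hfsurj⟩, ?_⟩
  intro i j
  simp only [Equiv.ofBijective_apply, SimpleGraph.top_adj]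
  constructor
  · intro hadj e
    exact hadj.ne (by rw [e])
  · intro hne
    rw [oddContract, SimpleGraph.fromRel_adj]
    refine ⟨fun e => hne (hfinj e), Or.inl ?_⟩
    obtain ⟨x, hx, y, hy, hadj, hc⟩ := hmono i j hne
    refine ⟨⟨x, i, hx⟩, ⟨y, j, hy⟩, ?_, ?_, hadj, Or.inr ⟨?_, hc⟩⟩
    · exact SimpleGraph.ConnectedComponent.sound (hreach2 i _ _ hx (hp i))
    · exact SimpleGraph.ConnectedComponent.sound (hreach2 j _ _ hy (hp j))
    · rw [hlbl' _ i hx, hlbl' _ j hy]; exact hne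

theorem Link.symm {G : SimpleGraph V} {c : V → Bool} {S : Set V} {a b : V}
    (h : Link G c S a b) : Link G c S b a :=
  ⟨h.2.1, h.1, h.2.2.1.symm, h.2.2.2.symm⟩

theorem CLink.symm {G : SimpleGraph V} {S : Set V} {a b : V}
    (h : CLink G S a b) : CLink G S b a :=
  ⟨h.2.1, h.1, h.2.2.symm⟩

theorem rtg_symm {α : Type*} {r : α → α → Prop} (hr : ∀ a b, r a b → r b a) {a b : α}
    (h : Relation.ReflTransGen r a b) : Relation.ReflTransGen r b a := by
  induction h with
  | refl => exact .refl
  | tail _ hl ih => exact (Relation.ReflTransGen.single (hr _ _ hl)).trans ih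

theorem conn_of_root {G : SimpleGraph V} {S : Set V} (r : V) (hr : r ∈ S)
    (h : ∀ x ∈ S, Relation.ReflTransGen (CLink G S) x r) : Conn G S :=
  ⟨⟨r, hr⟩, fun x hx y hy =>
    (h x hx).trans (rtg_symm (fun _ _ => CLink.symm) (h y hy))⟩

theorem cc_of_root {G : SimpleGraph V} {c : V → Bool} {S : Set V} (r : V) (hr : r ∈ S)
    (h : ∀ x ∈ S, Relation.ReflTransGen (Link G c S) x r) : CC G c S :=
  ⟨⟨r, hr⟩, fun x hx y hy =>
    (h x hx).trans (rtg_symm (fun _ _ => Link.symm) (h y hy))⟩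

/-- restriction of the edges to a set -/
def restr (G : SimpleGraph V) (S : Set V) : SimpleGraph V where
  Adj a b := a ∈ S ∧ b ∈ S ∧ G.Adj a b
  symm := ⟨fun _ _ h => ⟨h.2.1, h.1, h.2.2.symm⟩⟩
  loopless := ⟨fun _ h => h.2.2.ne rfl⟩

theorem exists_closer {G : SimpleGraph V} {r v : V} (hr : G.Reachable r v)
    (hd : 1 ≤ G.dist r v) : ∃ u, G.Adj v u ∧ G.dist r u + 1 = G.dist r v ∧ G.Reachable r u := by
  obtain ⟨w, hw⟩ := hr.symm.exists_walk_length_eq_dist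
  cases w with
  | nil => simp at hd
  | @cons _ u _ hadj w =>
    refine ⟨u, hadj, ?_, w.reachable.symm⟩
    have h1 : G.dist r u ≤ w.length := by
      rw [SimpleGraph.dist_comm]; exact SimpleGraph.dist_le w
    have h2 : G.dist r v ≤ G.dist r u + 1 := by
      obtain ⟨w', hw'⟩ := w.reachable.symm.exists_walk_length_eq_dist
      have := SimpleGraph.dist_le (w'.concat hadj.symm)
      rw [SimpleGraph.Walk.length_concat] at this
      omega
    rw [SimpleGraph.Walk.length_cons, SimpleGraph.dist_comm] at hw
    omega

theorem dist_adj_cases {G : SimpleGraph V} {r v u : V} (hr : G.Reachable r v)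
    (hadj : G.Adj v u) : G.dist r u ≤ G.dist r v + 1 := by
  obtain ⟨w', hw'⟩ := hr.exists_walk_length_eq_dist
  have := SimpleGraph.dist_le (w'.concat hadj)
  rw [SimpleGraph.Walk.length_concat] at this
  omega

theorem chromatic (G : SimpleGraph V) (T : ℕ) : ∀ S : Set V, HasK G T S ∨
    ∃ c : V → ℕ, (∀ v, c v < 2 ^ T) ∧ ∀ u ∈ S, ∀ v ∈ S, G.Adj u v → c u ≠ c v := by
  classical
  induction T with
  | zero =>
    intro S
    exact Or.inl ⟨fun i => i.elim0, fun i => i.elim0, fun i => i.elim0, fun i => i.elim0,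
      fun i => i.elim0⟩
  | succ T ih =>
    intro S
    set GS := restr G S with hGS
    let root : V → V := fun v => (GS.connectedComponentMk v).out
    have hroot : ∀ v, GS.Reachable (root v) v := fun v =>
      SimpleGraph.ConnectedComponent.exact (Quot.out_eq _)
    have hrootadj : ∀ u v, GS.Reachable u v → root u = root v := by
      intro u v huv
      have : GS.connectedComponentMk u = GS.connectedComponentMk v :=
        SimpleGraph.ConnectedComponent.sound huv
      simp only [root, this]
    let d : V → ℕ := fun v => GS.dist (root v) v
    let Lay : V → ℕ → Set V := fun r n => {u | u ∈ S ∧ root u = r ∧ d u = n}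
    by_cases hK : ∃ v ∈ S, 1 ≤ d v ∧ HasK G T (Lay (root v) (d v))
    · left
      obtain ⟨v, hv, hdv, ρ, hsub, hconn, hdis, hadj⟩ := hK
      let Ball : Set V := {u | u ∈ S ∧ root u = root v ∧ d u < d v}
      have hcloser : ∀ x ∈ S, root x = root v → 1 ≤ d x →
          ∃ u, u ∈ S ∧ root u = root v ∧ d u + 1 = d x ∧ G.Adj x u := by
        intro x hx hrx hdx
        obtain ⟨u, h1, h2, h3⟩ := exists_closer (hroot x) hdx
        have h4 : root u = root x := hrootadj u x h1.symm.reachable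
        refine ⟨u, h1.2.1, h4.trans hrx, ?_, h1.2.2⟩
        show GS.dist (root u) u + 1 = _
        rw [h4]; exact h2
      have key : ∀ n, ∀ x ∈ S, root x = root v → d x = n →
          ∃ y ∈ S, root y = root v ∧ d y = 0 ∧ (n < d v →
            Relation.ReflTransGen (CLink G Ball) x y) := by
        intro n
        induction n with
        | zero => intro x hx hr hd; exact ⟨x, hx, hr, hd, fun _ => .refl⟩
        | succ n ihn =>
          intro x hx hr hd
          obtain ⟨u, hu1, hu2, hu3, hu4⟩ := hcloser x hx hr (by omega)
          obtain ⟨y, hy1, hy2, hy3, hy4⟩ := ihn u hu1 hu2 (by omega)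
          refine ⟨y, hy1, hy2, hy3, fun hlt => ?_⟩
          refine .head ⟨⟨hx, hr, by omega⟩, ⟨hu1, hu2, by omega⟩, hu4⟩ (hy4 (by omega))
      have hzero : ∀ y, root y = root v → d y = 0 → y = root v := by
        intro y h1 h2
        have := ((hroot y).dist_eq_zero_iff).1 h2
        rw [← this, h1]
      have hBall : Conn G Ball := by
        obtain ⟨y, hy1, hy2, hy3, -⟩ := key _ v hv rfl rfl
        have hy := hzero y hy2 hy3
        refine conn_of_root y ⟨hy1, hy2, by omega⟩ ?_
        intro x hx
        obtain ⟨z, hz1, hz2, hz3, hz4⟩ := key _ x hx.1 hx.2.1 rfl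
        have hz := hzero z hz2 hz3
        rw [hy, ← hz]
        exact hz4 hx.2.2
      have hBadj : ∀ i, ∃ x ∈ Ball, ∃ y ∈ ρ i, G.Adj x y := by
        intro i
        obtain ⟨y, hy⟩ := (hconn i).1
        have hyL := hsub i hy
        obtain ⟨u, hu1, hu2, hu3, hu4⟩ := hcloser y hyL.1 hyL.2.1 (by rw [hyL.2.2]; exact hdv)
        have := hyL.2.2
        exact ⟨u, ⟨hu1, hu2, by omega⟩, y, hy, hu4.symm⟩
      have hBdis : ∀ i, Disjoint Ball (ρ i) := by
        intro i
        rw [Set.disjoint_left]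
        intro x hx hx'
        have h1 := (hsub i hx').2.2
        have h2 := hx.2.2
        omega
      refine ⟨Fin.cons Ball ρ, ?_, ?_, ?_, ?_⟩
      · intro i
        refine Fin.cases ?_ (fun i => ?_) i
        · exact fun x hx => hx.1
        · simp only [Fin.cons_succ]; exact fun x hx => (hsub i hx).1
      · intro i
        refine Fin.cases ?_ (fun i => ?_) i
        · exact hBall
        · simp only [Fin.cons_succ]; exact hconn i
      · intro i j
        refine Fin.cases ?_ (fun i => ?_) i <;> refine Fin.cases ?_ (fun j => ?_) j
        · intro h; exact absurd rfl h
        · intro _; simpa using hBdis j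
        · intro _; simpa using (hBdis i).symm
        · intro h; simp only [Fin.cons_succ]
          exact hdis i j (fun e => h (by rw [e]))
      · intro i j
        refine Fin.cases ?_ (fun i => ?_) i <;> refine Fin.cases ?_ (fun j => ?_) j
        · intro h; exact absurd rfl h
        · intro _; simpa using hBadj j
        · intro _
          obtain ⟨x, hx, y, hy, hxy⟩ := hBadj i
          simp only [Fin.cons_succ, Fin.cons_zero]
          exact ⟨y, hy, x, hx, hxy.symm⟩
        · intro h; simp only [Fin.cons_succ]
          exact hadj i j (fun e => h (by rw [e]))
    · right
      push Not at hK
      have : ∀ r n, ∃ c : V → ℕ, (∀ v, c v < 2 ^ T) ∧ ((∃ v ∈ S, root v = r ∧ d v = n ∧ 1 ≤ n) →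
          ∀ u ∈ Lay r n, ∀ v ∈ Lay r n, G.Adj u v → c u ≠ c v) := by
        intro r n
        by_cases h : ∃ v ∈ S, root v = r ∧ d v = n ∧ 1 ≤ n
        · obtain ⟨v, hv, rfl, rfl, hn⟩ := h
          obtain ⟨c, hc1, hc2⟩ := (ih (Lay (root v) (d v))).resolve_left (hK v hv hn)
          exact ⟨c, hc1, fun _ => hc2⟩
        · exact ⟨fun _ => 0, fun _ => by positivity, fun h' => absurd h' h⟩
      choose c hc1 hc2 using this
      refine ⟨fun v => 2 * c (root v) (d v) v + d v % 2, ?_, ?_⟩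
      · intro v
        have := hc1 (root v) (d v) v
        have := Nat.mod_lt (d v) (show 0 < 2 by norm_num)
        show 2 * c (root v) (d v) v + d v % 2 < _
        rw [pow_succ]; omega
      · intro u hu v hv hadj
        have hadj' : GS.Adj u v := ⟨hu, hv, hadj⟩
        have hr : root u = root v := hrootadj u v hadj'.reachable
        have h1 : d v ≤ d u + 1 := by
          have := dist_adj_cases (hroot u) hadj'
          rw [hr] at this
          show GS.dist (root v) v ≤ GS.dist (root u) u + 1
          rw [hr]; exact this
        have h2 : d u ≤ d v + 1 := by
          have := dist_adj_cases (hroot v) hadj'.symm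
          rw [← hr] at this
          show GS.dist (root u) u ≤ GS.dist (root v) v + 1
          rw [← hr]; exact this
        intro heq
        have heq' : 2 * c (root u) (d u) u + d u % 2 = 2 * c (root v) (d v) v + d v % 2 := heq
        have hd : d u = d v := by omega
        by_cases h0 : d u = 0
        · have e1 := ((hroot u).dist_eq_zero_iff).1 h0
          have e2 := ((hroot v).dist_eq_zero_iff).1 (hd.symm.trans h0)
          exact hadj.ne (by rw [← e1, ← e2, hr])
        · have := hc2 (root v) (d v) ⟨v, hv, rfl, rfl, by omega⟩ u ⟨hu, hr, hd⟩ v ⟨hv, rfl, rfl⟩ hadj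
          rw [hr, hd] at heq'
          omega

theorem palette {β : Type*} [Fintype β] (F0 : Finset ℕ) (M : ℕ)
    (h : Fintype.card β + F0.card ≤ M) :
    ∃ e : β → ℕ, Function.Injective e ∧ (∀ x, e x < M) ∧ ∀ x, e x ∉ F0 := by
  classical
  have hc : Fintype.card β ≤ Fintype.card ↥(Finset.range M \ F0) := by
    rw [Fintype.card_coe]
    have := Finset.le_card_sdiff F0 (Finset.range M)
    rw [Finset.card_range] at this
    omega
  obtain ⟨g⟩ := Function.Embedding.nonempty_of_card_le hc
  refine ⟨fun x => (g x : ℕ), fun x y hxy => g.injective (Subtype.ext hxy), ?_, ?_⟩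
  · intro x
    have := (Finset.mem_sdiff.1 (g x).2).1
    simpa using this
  · intro x
    exact (Finset.mem_sdiff.1 (g x).2).2

/-- the inductive notion of a partial precolored good coloring -/
def Good (G : SimpleGraph V) (M : ℕ) (D W : Set V) (ψ f φ : V → ℕ) : Prop :=
  (∀ v ∈ W, φ v = ψ v) ∧ (∀ v ∈ D, v ∉ W → φ v < M) ∧
  (∀ u ∈ D, ∀ v ∈ D, ¬ (u ∈ W ∧ v ∈ W) → G.Adj u v → φ u ≠ φ v) ∧
  (∀ v ∈ D, v ∉ W → (∃ u ∈ D, u ∉ W ∧ G.Adj v u) →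
    ∃ u ∈ D, G.Adj v u ∧ ∀ u' ∈ D, G.Adj v u' → φ u' = φ u → u' = u) ∧
  (∀ w ∈ W, ∀ u ∈ D, u ∉ W → G.Adj w u → φ u ≠ f w)

theorem forbid [Finite V] (W : Set V) (ψ f : V → ℕ) (N : ℕ) (hN : W.ncard ≤ N) :
    ∃ F0 : Finset ℕ, F0.card ≤ 2 * N ∧ (∀ w ∈ W, ψ w ∈ F0) ∧ (∀ w ∈ W, f w ∈ F0) := by
  classical
  have hf := W.toFinite
  refine ⟨hf.toFinset.image ψ ∪ hf.toFinset.image f, ?_, ?_, ?_⟩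
  · have h1 : (hf.toFinset.image ψ).card ≤ N :=
      Finset.card_image_le.trans (by rwa [← Set.ncard_eq_toFinset_card W hf])
    have h2 : (hf.toFinset.image f).card ≤ N :=
      Finset.card_image_le.trans (by rwa [← Set.ncard_eq_toFinset_card W hf])
    have := Finset.card_union_le (hf.toFinset.image ψ) (hf.toFinset.image f)
    omega
  · intro w hw
    exact Finset.mem_union_left _ (Finset.mem_image_of_mem _ (by simpa using hw))
  · intro w hw
    exact Finset.mem_union_right _ (Finset.mem_image_of_mem _ (by simpa using hw))

/-- auxiliary graph: two vertices joined through the private vertex of a color class -/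
def auxH (G : SimpleGraph V) (S : Set V) (c0 : V → ℕ) (m : V → V) (i : ℕ) : SimpleGraph V where
  Adj x y := x ≠ y ∧ ∃ v ∈ S, c0 v = i ∧ G.Adj v x ∧ G.Adj v y ∧ (m v = x ∨ m v = y)
  symm := ⟨fun _ _ h => ⟨h.1.symm, by
    obtain ⟨v, h1, h2, h3, h4, h5⟩ := h.2
    exact ⟨v, h1, h2, h4, h3, h5.symm⟩⟩⟩
  loopless := ⟨fun _ h => h.1 rfl⟩

theorem lift_aux {G : SimpleGraph V} {S : Set V} {c0 : V → ℕ} {m : V → V} {i T : ℕ}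
    (h : HasK (auxH G S c0 m i) T {x | x ∈ S ∧ c0 x ≠ i}) : HasK G T S := by
  obtain ⟨ρ, hsub, hconn, hdis, hadj⟩ := h
  let ρ' : Fin T → Set V := fun j => ρ j ∪ {v | v ∈ S ∧ c0 v = i ∧ G.Adj v (m v) ∧ m v ∈ ρ j}
  refine ⟨ρ', ?_, ?_, ?_, ?_⟩
  · rintro j x (hx | hx)
    · exact (hsub j hx).1
    · exact hx.1
  · intro j
    obtain ⟨r, hr⟩ := (hconn j).1
    have key : ∀ x ∈ ρ j, Relation.ReflTransGen (CLink G (ρ' j)) x r := by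
      intro x hx
      have := (hconn j).2 x hx r hr
      induction this using Relation.ReflTransGen.head_induction_on with
      | refl => exact .refl
      | @head a b hab _ ih =>
        obtain ⟨ha, hb, hne, v, hv, hvi, hva, hvb, hm⟩ := hab
        have hv' : v ∈ ρ' j := by
          rcases hm with hm | hm
          · exact Or.inr ⟨hv, hvi, hm ▸ hva, hm ▸ ha⟩
          · exact Or.inr ⟨hv, hvi, hm ▸ hvb, hm ▸ hb⟩
        exact .head ⟨Or.inl ha, hv', hva.symm⟩ (.head ⟨hv', Or.inl hb, hvb⟩ (ih hb))
    refine conn_of_root r (Or.inl hr) ?_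
    rintro x (hx | hx)
    · exact key x hx
    · exact .head ⟨Or.inr hx, Or.inl hx.2.2.2, hx.2.2.1⟩ (key _ hx.2.2.2)
  · intro j k hjk
    rw [Set.disjoint_left]
    rintro x (hx | hx) (hy | hy)
    · exact Set.disjoint_left.1 (hdis j k hjk) hx hy
    · exact (hsub j hx).2 hy.2.1
    · exact (hsub k hy).2 hx.2.1
    · exact Set.disjoint_left.1 (hdis j k hjk) hx.2.2.2 hy.2.2.2
  · intro j k hjk
    obtain ⟨x, hx, y, hy, hne, v, hv, hvi, hvx, hvy, hm⟩ := hadj j k hjk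
    rcases hm with hm | hm
    · exact ⟨v, Or.inr ⟨hv, hvi, hm ▸ hvx, hm ▸ hx⟩, y, Or.inl hy, hvy⟩
    · exact ⟨x, Or.inl hx, v, Or.inr ⟨hv, hvi, hm ▸ hvy, hm ▸ hy⟩, hvx.symm⟩

theorem noK_good [Finite V] (G : SimpleGraph V) (T N M : ℕ) (D W : Set V)
    (hN : W.ncard ≤ N) (hM : 2 ^ T * (2 ^ T) ^ (2 ^ T) + 2 * N ≤ M)
    (hK : ¬ HasK G T (D \ W)) (ψ f : V → ℕ) : ∃ φ, Good G M D W ψ f φ := by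
  classical
  set C := 2 ^ T with hC
  set S := D \ W with hS
  obtain ⟨c0, hc0, hc0p⟩ := (chromatic G T S).resolve_left hK
  let m : V → V := fun v => if h : ∃ u ∈ S, G.Adj v u then h.choose else v
  have hm : ∀ v, (∃ u ∈ S, G.Adj v u) → m v ∈ S ∧ G.Adj v (m v) := by
    intro v h
    simp only [m, dif_pos h]
    exact h.choose_spec
  have : ∀ i : Fin C, ∃ θ : V → ℕ, (∀ v, θ v < C) ∧
      ∀ u ∈ {x | x ∈ S ∧ c0 x ≠ i}, ∀ v ∈ {x | x ∈ S ∧ c0 x ≠ i},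
        (auxH G S c0 m i).Adj u v → θ u ≠ θ v := by
    intro i
    exact (chromatic (auxH G S c0 m i) T _).resolve_left (fun h => hK (lift_aux h))
  choose θ hθ hθp using this
  obtain ⟨F0, hF0, hF1, hF2⟩ := forbid W ψ f N hN
  obtain ⟨e, he, heM, heF⟩ := palette (β := Fin C × (Fin C → Fin C)) F0 M (by
    simp only [Fintype.card_prod, Fintype.card_fin, Fintype.card_fun]
    omega)
  let φ : V → ℕ := fun v => if v ∈ W then ψ v else e (⟨c0 v, hc0 v⟩, fun i => ⟨θ i v, hθ i v⟩)
  have hφW : ∀ v ∈ W, φ v = ψ v := fun v hv => if_pos hv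
  have hφn : ∀ v, v ∉ W → φ v = e (⟨c0 v, hc0 v⟩, fun i => ⟨θ i v, hθ i v⟩) :=
    fun v hv => if_neg hv
  have hφF : ∀ v, v ∉ W → φ v ∉ F0 := fun v hv => by rw [hφn v hv]; exact heF _
  refine ⟨φ, hφW, ?_, ?_, ?_, ?_⟩
  · intro v _ hv
    rw [hφn v hv]; exact heM _
  · intro u hu v hv huv hadj heq
    by_cases h1 : u ∈ W
    · have h2 : v ∉ W := fun h => huv ⟨h1, h⟩
      exact hφF v h2 (by rw [← heq, hφW u h1]; exact hF1 u h1)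
    · by_cases h2 : v ∈ W
      · exact hφF u h1 (by rw [heq, hφW v h2]; exact hF1 v h2)
      · rw [hφn u h1, hφn v h2] at heq
        have := congrArg Prod.fst (he heq)
        exact hc0p u ⟨hu, h1⟩ v ⟨hv, h2⟩ hadj (by simpa using this)
  · rintro v hv hvW ⟨u0, hu0, hu0W, hadj0⟩
    obtain ⟨h1, h2⟩ := hm v ⟨u0, ⟨hu0, hu0W⟩, hadj0⟩
    refine ⟨m v, h1.1, h2, ?_⟩
    intro u hu hadj heq
    by_contra hne
    have huW : u ∉ W := fun h => hφF (m v) h1.2 (by rw [← heq, hφW u h]; exact hF1 u h)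
    rw [hφn u huW, hφn _ h1.2] at heq
    have heq := he heq
    have h3 := congrFun (congrArg Prod.snd heq) ⟨c0 v, hc0 v⟩
    have h3' : θ ⟨c0 v, hc0 v⟩ u = θ ⟨c0 v, hc0 v⟩ (m v) := by simpa using h3
    refine hθp ⟨c0 v, hc0 v⟩ u ⟨⟨hu, huW⟩, ?_⟩ (m v) ⟨h1, ?_⟩ ?_ h3'
    · exact hc0p u ⟨hu, huW⟩ v ⟨hv, hvW⟩ hadj.symm
    · exact hc0p _ h1 v ⟨hv, hvW⟩ h2.symm
    · exact ⟨hne, v, ⟨hv, hvW⟩, rfl, hadj, h2, Or.inr rfl⟩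
  · intro w hw u _ huW _ heq
    exact hφF u huW (heq ▸ hF2 w hw)

theorem ramsey {α : Type*} [DecidableEq α] (R : α → α → Prop) (hR : ∀ x y, R x y → R y x) (n : ℕ) :
    ∀ a b, a + b = n → ∀ s : Finset α, 2 ^ n ≤ s.card →
      (∃ t ⊆ s, t.card = a ∧ ∀ x ∈ t, ∀ y ∈ t, x ≠ y → R x y) ∨
      (∃ t ⊆ s, t.card = b ∧ ∀ x ∈ t, ∀ y ∈ t, x ≠ y → ¬ R x y) := by
  classical
  induction n with
  | zero =>
    intro a b hab s _
    left
    exact ⟨∅, by simp, by simp; omega, by simp⟩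
  | succ n ih =>
    intro a b hab s hs
    rcases Nat.eq_zero_or_pos a with rfl | ha
    · left; exact ⟨∅, by simp, by simp, by simp⟩
    rcases Nat.eq_zero_or_pos b with rfl | hb
    · right; exact ⟨∅, by simp, by simp, by simp⟩
    have hpos : 0 < 2 ^ n := by positivity
    rw [pow_succ] at hs
    obtain ⟨x, hx⟩ : s.Nonempty := Finset.card_pos.1 (by omega)
    have hcard := Finset.card_filter_add_card_filter_not (s := s.erase x) (R x)
    rw [Finset.card_erase_of_mem hx] at hcard
    have hins : ∀ (t : Finset α) (P : α → Prop), (∀ y ∈ t, y ∈ s.erase x ∧ P y) →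
        insert x t ⊆ s ∧ (insert x t).card = t.card + 1 ∧ ∀ y ∈ t, P y := by
      intro t P ht
      refine ⟨?_, ?_, ?_⟩
      · intro y hy
        rcases Finset.mem_insert.1 hy with rfl | hy
        · exact hx
        · exact Finset.mem_of_mem_erase (ht y hy).1
      · apply Finset.card_insert_of_notMem
        intro h
        exact (Finset.mem_erase.1 (ht x h).1).1 rfl
      · intro y hy; exact (ht y hy).2
    by_cases h1 : 2 ^ n ≤ ((s.erase x).filter (R x)).card
    · rcases ih (a - 1) b (by omega) _ h1 with ⟨t, ht, htc, htR⟩ | ⟨t, ht, htc, htR⟩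
      · left
        obtain ⟨g1, g2, g3⟩ := hins t _ (fun y hy => Finset.mem_filter.1 (ht hy))
        refine ⟨_, g1, by omega, ?_⟩
        intro y hy z hz hyz
        rcases Finset.mem_insert.1 hy with rfl | hy' <;> rcases Finset.mem_insert.1 hz with rfl | hz'
        · exact absurd rfl hyz
        · exact g3 z hz'
        · exact hR _ _ (g3 y hy')
        · exact htR y hy' z hz' hyz
      · right
        obtain ⟨g1, g2, g3⟩ := hins t _ (fun y hy => Finset.mem_filter.1 (ht hy))
        exact ⟨t, (Finset.subset_insert _ _).trans g1, htc, htR⟩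
    · have h2 : 2 ^ n ≤ ((s.erase x).filter (fun y => ¬ R x y)).card := by omega
      rcases ih a (b - 1) (by omega) _ h2 with ⟨t, ht, htc, htR⟩ | ⟨t, ht, htc, htR⟩
      · left
        obtain ⟨g1, g2, g3⟩ := hins t _ (fun y hy => Finset.mem_filter.1 (ht hy))
        exact ⟨t, (Finset.subset_insert _ _).trans g1, htc, htR⟩
      · right
        obtain ⟨g1, g2, g3⟩ := hins t _ (fun y hy => Finset.mem_filter.1 (ht hy))
        refine ⟨_, g1, by omega, ?_⟩
        intro y hy z hz hyz
        rcases Finset.mem_insert.1 hy with rfl | hy' <;> rcases Finset.mem_insert.1 hz with rfl | hz'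
        · exact absurd rfl hyz
        · exact g3 z hz'
        · exact fun h => g3 y hy' (hR _ _ h)
        · exact htR y hy' z hz' hyz

/-- pairwise adjacent, bichromatically connected sets with no monochromatic edges between them -/
structure Trees (G : SimpleGraph V) {ι : Type*} (T : ι → Set V) (c : V → Bool) : Prop where
  cc : ∀ i, CC G c (T i)
  dis : ∀ i j, i ≠ j → Disjoint (T i) (T j)
  adj : ∀ i j, i ≠ j → ∃ x ∈ T i, ∃ y ∈ T j, G.Adj x y
  bich : ∀ i j, i ≠ j → ∀ x ∈ T i, ∀ y ∈ T j, G.Adj x y → c x ≠ c y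

theorem conn_to_cc {G : SimpleGraph V} {S : Set V} (h : Conn G S) :
    ∃ d : V → ℕ, ∀ c : V → Bool, (∀ v ∈ S, c v = decide (d v % 2 = 1)) → CC G c S := by
  obtain ⟨⟨r, hr⟩, hconn⟩ := h
  have hreach : ∀ x ∈ S, (restr G S).Reachable r x := by
    intro x hx
    have := hconn r hr x hx
    induction this with
    | refl => exact SimpleGraph.Reachable.refl _
    | tail _ hl ih => exact (ih hl.1).trans (SimpleGraph.Adj.reachable hl)
  refine ⟨fun v => (restr G S).dist r v, fun c hc => cc_of_root r hr ?_⟩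
  have key : ∀ n, ∀ x ∈ S, (restr G S).dist r x = n → Relation.ReflTransGen (Link G c S) x r := by
    intro n
    induction n with
    | zero =>
      intro x hx hd
      rw [((hreach x hx).dist_eq_zero_iff).1 hd]
    | succ n ih =>
      intro x hx hd
      obtain ⟨u, h1, h2, h3⟩ := exists_closer (hreach x hx) (by omega)
      refine .head ⟨hx, h1.2.1, h1.2.2, ?_⟩ (ih u h1.2.1 (by omega))
      rw [hc x hx, hc u h1.2.1]
      intro he
      have := decide_eq_decide.1 he
      simp only [] at this
      omega
  intro x hx
  exact key _ x hx rfl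

theorem trees_of_hasK {G : SimpleGraph V} {S : Set V} (h t T : ℕ) (hT : 2 ^ (h + t) ≤ T)
    (hno : ¬ OddModel G h) (hK : HasK G T S) :
    ∃ (Tr : Fin t → Set V) (c : V → Bool), Trees G Tr c ∧ ∀ i, Tr i ⊆ S := by
  classical
  obtain ⟨ρ, hsub, hconn, hdis, hadj⟩ := hK
  choose d hd using fun i => conn_to_cc (hconn i)
  let c : V → Bool := fun v => if h : ∃ i, v ∈ ρ i then decide (d h.choose v % 2 = 1) else false
  have hc : ∀ i, ∀ v ∈ ρ i, c v = decide (d i v % 2 = 1) := by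
    intro i v hv
    have hex : ∃ i, v ∈ ρ i := ⟨i, hv⟩
    have : hex.choose = i := by
      by_contra hne
      exact Set.disjoint_left.1 (hdis _ _ hne) hex.choose_spec hv
    simp only [c, dif_pos hex, this]
  have hcc : ∀ i, CC G c (ρ i) := fun i => hd i c (hc i)
  let R : Fin T → Fin T → Prop := fun i j => ∃ x ∈ ρ i, ∃ y ∈ ρ j, G.Adj x y ∧ c x = c y
  have hR : ∀ i j, R i j → R j i := by
    rintro i j ⟨x, hx, y, hy, h1, h2⟩
    exact ⟨y, hy, x, hx, h1.symm, h2.symm⟩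
  rcases ramsey R hR (h + t) h t rfl Finset.univ (by simpa using hT) with
    ⟨s, -, hs, hsR⟩ | ⟨s, -, hs, hsR⟩
  · exfalso
    apply hno
    let e := (s.equivFinOfCardEq hs).symm
    have hne : ∀ i j, i ≠ j → (e i : Fin T) ≠ e j := by
      intro i j hij he
      exact hij (e.injective (Subtype.ext he))
    exact ⟨fun i => ρ (e i), c, fun i => hcc _, fun i j hij => hdis _ _ (hne i j hij),
      fun i j hij => hsR _ (e i).2 _ (e j).2 (hne i j hij)⟩
  · let e := (s.equivFinOfCardEq hs).symm
    have hne : ∀ i j, i ≠ j → (e i : Fin T) ≠ e j := by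
      intro i j hij he
      exact hij (e.injective (Subtype.ext he))
    refine ⟨fun i => ρ (e i), c, ⟨fun i => hcc _, fun i j hij => hdis _ _ (hne i j hij),
      fun i j hij => hadj _ _ (hne i j hij), ?_⟩, fun i => hsub _⟩
    intro i j hij x hx y hy hxy he
    exact hsR _ (e i).2 _ (e j).2 (hne i j hij) ⟨x, hx, y, hy, hxy, he⟩

/-- adjacency in the lifted graph on `V × Bool` -/
def OA (G : SimpleGraph V) (a b : V × Bool) : Prop :=
  (a.1 = b.1 ∧ a.2 ≠ b.2) ∨ (G.Adj a.1 b.1 ∧ a.2 = b.2)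

theorem OA.symm {G : SimpleGraph V} {a b : V × Bool} (h : OA G a b) : OA G b a := by
  rcases h with ⟨h1, h2⟩ | ⟨h1, h2⟩
  · exact Or.inl ⟨h1.symm, h2.symm⟩
  · exact Or.inr ⟨h1.symm, h2.symm⟩

theorem OA.ne {G : SimpleGraph V} {a b : V × Bool} (h : OA G a b) : a ≠ b := by
  rintro rfl
  rcases h with ⟨_, h2⟩ | ⟨h1, _⟩
  · exact h2 rfl
  · exact h1.ne rfl

/-- the set `A` has a perfect matching in the lifted graph -/
def PM (G : SimpleGraph V) (A : Set (V × Bool)) : Prop :=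
  ∃ N : V × Bool → V × Bool, ∀ a ∈ A, N a ∈ A ∧ N (N a) = a ∧ OA G a (N a)

theorem pm_iUnion {G : SimpleGraph V} {J : Type*} (B : J → Set (V × Bool))
    (hdis : ∀ i j a, a ∈ B i → a ∈ B j → i = j) (h : ∀ j, PM G (B j)) :
    PM G {a | ∃ j, a ∈ B j} := by
  classical
  choose N hN using h
  refine ⟨fun a => if h : ∃ j, a ∈ B j then N h.choose a else a, ?_⟩
  have key : ∀ a j, a ∈ B j → (if h : ∃ j, a ∈ B j then N h.choose a else a) = N j a := by
    intro a j ha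
    have hex : ∃ j, a ∈ B j := ⟨j, ha⟩
    rw [dif_pos hex, hdis _ _ a hex.choose_spec ha]
  rintro a ⟨j, ha⟩
  obtain ⟨h1, h2, h3⟩ := hN j a ha
  simp only [key a j ha, key _ j h1]
  exact ⟨⟨j, h1⟩, h2, h3⟩

theorem pm_union {G : SimpleGraph V} {A B : Set (V × Bool)} (hd : Disjoint A B)
    (hA : PM G A) (hB : PM G B) : PM G (A ∪ B) := by
  have := pm_iUnion (G := G) (fun b : Bool => if b then A else B) (by
    intro i j a hi hj
    rw [Set.disjoint_left] at hd
    have hd' := @hd a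
    cases i <;> cases j <;> simp only [if_true, if_false, Bool.false_eq_true] at hi hj
    · rfl
    · exact absurd hi (hd' hj)
    · exact absurd hj (hd' hi)
    · rfl) (by intro j; cases j <;> simpa)
  convert this using 1
  ext a
  simp only [Set.mem_union, Bool.exists_bool, Set.mem_ofPred_eq]
  simp [or_comm]

theorem pm_pair {G : SimpleGraph V} {a b : V × Bool} (h : OA G a b) : PM G {a, b} := by
  classical
  refine ⟨fun z => if z = a then b else a, ?_⟩
  rintro z (rfl | hz)
  · have : b ≠ z := h.ne.symm
    simp [this, h]
  · have hz : z = b := hz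
    subst hz
    have : z ≠ a := h.ne.symm
    simp [this, h.symm]

theorem pm_flip (G : SimpleGraph V) (S : Set V) : PM G {a | a.1 ∈ S} := by
  refine ⟨fun a => (a.1, !a.2), ?_⟩
  intro a ha
  refine ⟨ha, ?_, Or.inl ⟨rfl, ?_⟩⟩
  · simp
  · simp

theorem pm_even {G : SimpleGraph V} [Finite V] {A : Set (V × Bool)} (h : PM G A) :
    Even A.ncard := by
  classical
  obtain ⟨N, hN⟩ := h
  have hf := A.toFinite
  have := Finset.sum_involution (s := hf.toFinset) (f := fun _ => (1 : ZMod 2))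
    (fun a _ => N a) (by intros; decide)
    (by intro a ha _; exact (hN a (by simpa using ha)).2.2.ne.symm)
    (by intro a ha; simpa using (hN a (by simpa using ha)).1)
    (by intro a ha; exact (hN a (by simpa using ha)).2.1)
  simp only [Finset.sum_const, nsmul_eq_mul, mul_one] at this
  rw [Set.ncard_eq_toFinset_card A hf]
  exact (ZMod.natCast_eq_zero_iff_even).1 this

theorem bool_eq_not {a b : Bool} (h : a ≠ b) : b = !a := by
  cases a <;> cases b <;> simp_all

theorem path_pm_aux {G L : SimpleGraph V} {c : V → Bool}
    (hL : ∀ a b, L.Adj a b → G.Adj a b ∧ c a ≠ c b) {t x y : V} (w : L.Walk t x)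
    (hw : w.IsPath) (hy : y ∉ w.support) (hadj : G.Adj x y) (hc : c x ≠ c y) :
    PM G ({a | a.1 ∈ w.support ∧ a ≠ (t, c t)} ∪ {(y, c y)}) := by
  induction w with
  | @nil t =>
    have h1 : OA G (t, !c t) (y, c y) := Or.inr ⟨hadj, (bool_eq_not hc).symm⟩
    convert pm_pair h1 using 1
    ext ⟨a, b⟩
    simp only [Walk.support_nil, List.mem_singleton, Set.mem_union, Set.mem_ofPred_eq,
      Set.mem_singleton_iff, Set.mem_insert_iff, Prod.mk.injEq, ne_eq]
    constructor
    · rintro (⟨rfl, h⟩ | h)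
      · left; refine ⟨rfl, ?_⟩
        exact bool_eq_not (fun e => h ⟨rfl, e.symm⟩)
      · exact Or.inr h
    · rintro (⟨rfl, rfl⟩ | h)
      · left; simp
      · exact Or.inr h
  | @cons t t' x hadj' w ih =>
    rw [Walk.cons_isPath_iff] at hw
    rw [Walk.support_cons, List.mem_cons, not_or] at hy
    have h2 := hL _ _ hadj'
    have h1 : OA G (t, !c t) (t', c t') := Or.inr ⟨h2.1, (bool_eq_not h2.2).symm⟩
    have h3 := ih hw.1 hy.2 hadj hc
    have ht' : t' ∈ w.support := Walk.start_mem_support w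
    have h4 := pm_union (G := G) (A := {(t, !c t), (t', c t')}) (by
      rw [Set.disjoint_left]
      rintro a (rfl | ha) hb
      · rcases hb with hb | hb
        · exact hw.2 hb.1
        · have := congrArg Prod.fst hb
          exact hy.1 this.symm
      · have ha : a = (t', c t') := ha
        subst ha
        rcases hb with hb | hb
        · exact hb.2 rfl
        · have : t' = y := congrArg Prod.fst hb
          exact hy.2 (this ▸ ht')) (pm_pair h1) h3
    convert h4 using 1
    ext ⟨a, b⟩
    simp only [Walk.support_cons, List.mem_cons, Set.mem_union, Set.mem_ofPred_eq,
      Set.mem_singleton_iff, Set.mem_insert_iff, Prod.mk.injEq, ne_eq]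
    constructor
    · rintro (⟨rfl | ha, h⟩ | h)
      · left; left; refine ⟨rfl, ?_⟩
        exact bool_eq_not (fun e => h ⟨rfl, e.symm⟩)
      · by_cases hh : a = t' ∧ b = c t'
        · left; right; exact hh
        · right; left; exact ⟨ha, hh⟩
      · exact Or.inr (Or.inr h)
    · rintro ((⟨rfl, rfl⟩ | ⟨rfl, rfl⟩) | (h | h))
      · left; simp
      · left; refine ⟨Or.inr ht', fun h => ?_⟩
        exact hw.2 (h.1 ▸ ht')
      · left; refine ⟨Or.inr h.1, fun h' => ?_⟩
        exact hw.2 (h'.1 ▸ h.1)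
      · exact Or.inr h

theorem path_pm {G : SimpleGraph V} {c : V → Bool} {S : Set V} (hS : CC G c S) {t x y : V}
    (ht : t ∈ S) (hx : x ∈ S) (hy : y ∉ S) (hadj : G.Adj x y) (hc : c x ≠ c y) :
    PM G ({a | a.1 ∈ S ∧ a ≠ (t, c t)} ∪ {(y, c y)}) := by
  classical
  let L : SimpleGraph V :=
    { Adj := Link G c S
      symm := ⟨fun _ _ h => h.symm⟩
      loopless := ⟨fun _ h => h.2.2.1.ne rfl⟩ }
  have hr : L.Reachable t x := by
    have := hS.2 t ht x hx
    clear hadj hc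
    induction this with
    | refl => exact SimpleGraph.Reachable.refl _
    | tail _ hl ih => exact (ih hl.1).trans (SimpleGraph.Adj.reachable (G := L) hl)
  obtain ⟨w, hw⟩ := hr.exists_isPath
  have hsupp : ∀ {t x : V} (w : L.Walk t x), t ∈ S → ∀ z ∈ w.support, z ∈ S := by
    intro t x w
    induction w with
    | nil => intro ht z hz; simp at hz; rwa [hz]
    | cons hadj w ih =>
      intro ht z hz
      rw [Walk.support_cons, List.mem_cons] at hz
      rcases hz with rfl | hz
      · exact ht
      · exact ih hadj.2.1 z hz
  have h1 := path_pm_aux (G := G) (L := L) (c := c) (fun a b h => h.2.2) w hw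
    (fun h => hy (hsupp w ht y h)) hadj hc
  have h2 := pm_flip G {z | z ∈ S ∧ z ∉ w.support}
  have h3 := pm_union (by
    rw [Set.disjoint_left]
    rintro ⟨a, b⟩ (ha | ha) hb
    · exact hb.2 ha.1
    · have : a = y := congrArg Prod.fst ha
      exact hy (this ▸ hb.1)) h1 h2
  convert h3 using 1
  ext ⟨a, b⟩
  simp only [Set.mem_union, Set.mem_ofPred_eq, Set.mem_singleton_iff]
  have htw : t ∈ w.support := Walk.start_mem_support w
  constructor
  · rintro (⟨h, h'⟩ | h)
    · by_cases hh : a ∈ w.support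
      · exact Or.inl (Or.inl ⟨hh, h'⟩)
      · exact Or.inr ⟨h, hh⟩
    · exact Or.inl (Or.inr h)
  · rintro ((⟨h, h'⟩ | h) | h)
    · exact Or.inl ⟨hsupp w ht a h, h'⟩
    · exact Or.inr h
    · refine Or.inl ⟨h.1, fun e => h.2 ?_⟩
      have e' : a = t := congrArg Prod.fst e
      rw [e']; exact htw

/-- the lifted vertices outside the trees of `K` together with one port for each tree in `E` -/
def PackSet {ι : Type*} (T : ι → Set V) (c : V → Bool) (K E : Finset ι) (τ : ι → V) :
    Set (V × Bool) :=
  {a | (∀ i ∈ K, a.1 ∉ T i) ∨ ∃ e ∈ E, a = (τ e, c (τ e))}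

/-- a packing -/
def Pack (G : SimpleGraph V) {ι : Type*} (T : ι → Set V) (c : V → Bool) (K E : Finset ι) : Prop :=
  ∃ τ : ι → V, (∀ e ∈ E, τ e ∈ T e) ∧ PM G (PackSet T c K E τ)

theorem pack_empty (G : SimpleGraph V) {ι : Type*} (T : ι → Set V) (c : V → Bool)
    (K : Finset ι) [Nonempty (ι → V)] : Pack G T c K ∅ := by
  refine ⟨Classical.arbitrary _, by simp, ?_⟩
  convert pm_flip G {v | ∀ i ∈ K, v ∉ T i} using 1
  ext a
  simp [PackSet]

theorem pack_move {G : SimpleGraph V} {ι : Type*} [DecidableEq ι] {T : ι → Set V} {c : V → Bool}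
    (hT : Trees G T c) {K0 E0 K E' : Finset ι} (hE0 : E0 ⊆ K0)
    (hp : Pack G T c K0 E0) (hK : K ⊆ K0 \ E0) (hE' : E' ⊆ K) (hcard : E'.card = E0.card) :
    Pack G T c K E' := by
  classical
  obtain ⟨τ, hτ, hPM⟩ := hp
  have βe : E0 ≃ E' := Finset.equivOfCardEq hcard.symm
  have hne : ∀ e : E0, (e : ι) ≠ βe e := by
    intro e he
    have h1 := hK (hE' (βe e).2)
    rw [← he] at h1
    exact (Finset.mem_sdiff.1 h1).2 e.2
  choose x hx q hq hxq using fun e : E0 => hT.adj e (βe e) (hne e)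
  have hcxq : ∀ e, c (x e) ≠ c (q e) := fun e => hT.bich _ _ (hne e) _ (hx e) _ (hq e) (hxq e)
  have huniq : ∀ i j v, v ∈ T i → v ∈ T j → i = j := by
    intro i j v h1 h2
    by_contra hne
    exact Set.disjoint_left.1 (hT.dis i j hne) h1 h2
  let τ' : ι → V := fun i => if h : i ∈ E' then q (βe.symm ⟨i, h⟩) else τ i
  have hτ' : ∀ e : E0, τ' (βe e) = q e := by
    intro e
    simp only [τ']
    rw [dif_pos (βe e).2]
    simp
  let B : Option ι → Set (V × Bool) := fun o => match o with
    | none => PackSet T c K0 E0 τ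
    | some i => if h : i ∈ E0 then {a | a.1 ∈ T i ∧ a ≠ (τ i, c (τ i))} ∪
        {(q ⟨i, h⟩, c (q ⟨i, h⟩))}
      else if i ∈ K0 ∧ i ∉ K then {a | a.1 ∈ T i} else ∅
  have hBE : ∀ i (h : i ∈ E0), B (some i) = {a | a.1 ∈ T i ∧ a ≠ (τ i, c (τ i))} ∪
        {(q ⟨i, h⟩, c (q ⟨i, h⟩))} := by
    intro i h
    simp only [B, dif_pos h]
  have hBn : ∀ i, i ∉ E0 → i ∈ K0 → i ∉ K → B (some i) = {a | a.1 ∈ T i} := by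
    intro i h h1 h2
    simp only [B, dif_neg h, h1, h2]
    simp
  have hBn' : ∀ i, i ∉ E0 → ¬ (i ∈ K0 ∧ i ∉ K) → B (some i) = ∅ := by
    intro i h h1
    simp only [B, dif_neg h, if_neg h1]
  have hKE : ∀ i ∈ K, i ∈ K0 ∧ i ∉ E0 := fun i hi => Finset.mem_sdiff.1 (hK hi)
  have hmem : ∀ i a, a ∈ B (some i) → (i ∈ K0 ∧ i ∉ K ∧ a.1 ∈ T i ∧ (i ∈ E0 → a ≠ (τ i, c (τ i)))) ∨
      ∃ h : i ∈ E0, a = (q ⟨i, h⟩, c (q ⟨i, h⟩)) := by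
    intro i a ha
    by_cases hi : i ∈ E0
    · rw [hBE i hi] at ha
      rcases ha with ha | ha
      · exact Or.inl ⟨hE0 hi, fun h => (hKE i h).2 hi, ha.1, fun _ => ha.2⟩
      · exact Or.inr ⟨hi, ha⟩
    · by_cases h2 : i ∈ K0 ∧ i ∉ K
      · rw [hBn i hi h2.1 h2.2] at ha
        exact Or.inl ⟨h2.1, h2.2, ha, fun h => absurd h hi⟩
      · rw [hBn' i hi h2] at ha; exact absurd ha (by simp)
  have hβK : ∀ e : E0, (βe e : ι) ∈ K := fun e => hE' (βe e).2
  have hnone : ∀ i a, a ∈ B none → a ∉ B (some i) := by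
    intro i a ha hb
    rcases hmem i a hb with ⟨h1, h2, h3, h4⟩ | ⟨h, rfl⟩
    · rcases ha with ha | ⟨e, he, rfl⟩
      · exact ha i h1 h3
      · have := huniq _ _ _ (hτ e he) h3
        subst this
        exact h4 he rfl
    · rcases ha with ha | ⟨e, he, heq⟩
      · exact ha _ (hKE _ (hβK ⟨i, h⟩)).1 (hq ⟨i, h⟩)
      · have h5 := hτ e he
        have e' : q ⟨i, h⟩ = τ e := congrArg Prod.fst heq
        rw [← e'] at h5
        have := huniq _ _ _ (hq ⟨i, h⟩) h5
        exact (hKE _ (hβK ⟨i, h⟩)).2 (this ▸ he)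
  refine ⟨τ', ?_, ?_⟩
  · intro e he
    obtain ⟨e0, he0⟩ := βe.surjective ⟨e, he⟩
    have : e = βe e0 := by rw [he0]
    rw [this, hτ']
    exact hq e0
  have := pm_iUnion (G := G) B ?_ ?_
  · convert this using 1
    ext a
    simp only [Set.mem_ofPred_eq, PackSet]
    constructor
    · rintro (ha | ⟨e, he, rfl⟩)
      · by_cases h0 : ∀ i ∈ K0, a.1 ∉ T i
        · exact ⟨none, Or.inl h0⟩
        · push Not at h0
          obtain ⟨i, hi, hai⟩ := h0
          have hiK : i ∉ K := fun h => ha i h hai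
          by_cases hiE : i ∈ E0
          · by_cases hport : a = (τ i, c (τ i))
            · exact ⟨none, Or.inr ⟨i, hiE, hport⟩⟩
            · refine ⟨some i, ?_⟩
              rw [hBE i hiE]; exact Or.inl ⟨hai, hport⟩
          · refine ⟨some i, ?_⟩
            rw [hBn i hiE hi hiK]; exact hai
      · obtain ⟨e0, he0⟩ := βe.surjective ⟨e, he⟩
        have : e = βe e0 := by rw [he0]
        rw [this, hτ']
        refine ⟨some e0, ?_⟩
        rw [hBE e0 e0.2]
        exact Or.inr rfl
    · rintro ⟨o, ho⟩
      cases o with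
      | none =>
        left
        rcases ho with ho | ⟨e, he, rfl⟩
        · exact fun i hi => ho i (hKE i hi).1
        · intro i hi h
          have := huniq _ _ _ (hτ e he) h
          exact (hKE i hi).2 (this ▸ he)
      | some i =>
        rcases hmem i a ho with ⟨h1, h2, h3, h4⟩ | ⟨h, rfl⟩
        · left
          intro j hj hja
          have := huniq _ _ _ h3 hja
          exact h2 (this ▸ hj)
        · right
          refine ⟨βe ⟨i, h⟩, (βe ⟨i, h⟩).2, ?_⟩
          rw [hτ']
  · intro i j a hi hj
    cases i with
    | none =>
      cases j with
      | none => rfl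
      | some j => exact absurd hj (hnone j a hi)
    | some i =>
      cases j with
      | none => exact absurd hi (hnone i a hj)
      | some j =>
        rcases hmem i a hi with ⟨h1, h2, h3, h4⟩ | ⟨h, rfl⟩ <;>
          rcases hmem j _ hj with ⟨k1, k2, k3, k4⟩ | ⟨k, hk⟩
        · rw [huniq _ _ _ h3 k3]
        · rw [hk] at h3
          have := huniq _ _ _ h3 (hq ⟨j, k⟩)
          exact absurd (this ▸ hβK ⟨j, k⟩) h2
        · have := huniq _ _ _ k3 (hq ⟨i, h⟩)
          exact absurd (this ▸ hβK ⟨i, h⟩) k2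
        · have h5 := hq ⟨i, h⟩
          have e' : q ⟨i, h⟩ = q ⟨j, k⟩ := congrArg Prod.fst hk
          rw [e'] at h5
          have h6 := huniq _ _ _ h5 (hq ⟨j, k⟩)
          have h7 := βe.injective (Subtype.ext h6)
          rw [Subtype.mk.injEq] at h7
          rw [h7]
  · intro o
    cases o with
    | none => exact hPM
    | some i =>
      by_cases hi : i ∈ E0
      · rw [hBE i hi]
        refine path_pm (hT.cc i) (hτ i hi) (hx ⟨i, hi⟩) ?_ (hxq _) (hcxq _)
        intro h
        exact hne ⟨i, hi⟩ (huniq _ _ _ h (hq _))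
      · by_cases h2 : i ∈ K0 ∧ i ∉ K
        · rw [hBn i hi h2.1 h2.2]
          exact pm_flip G (T i)
        · rw [hBn' i hi h2]
          exact ⟨id, by simp⟩

theorem rtg_mono {α : Type*} {r r' : α → α → Prop} (hr : ∀ a b, r a b → r' a b) {a b : α}
    (h : Relation.ReflTransGen r a b) : Relation.ReflTransGen r' a b := by
  induction h with
  | refl => exact .refl
  | tail _ hl ih => exact ih.tail (hr _ _ hl)

theorem Link.mono {G : SimpleGraph V} {c : V → Bool} {S S' : Set V} (hS : S ⊆ S') {a b : V}
    (h : Link G c S a b) : Link G c S' a b :=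
  ⟨hS h.1, hS h.2.1, h.2.2⟩

theorem rtg_link_mono {G : SimpleGraph V} {c : V → Bool} {S S' : Set V} (hS : S ⊆ S') {a b : V}
    (h : Relation.ReflTransGen (Link G c S) a b) : Relation.ReflTransGen (Link G c S') a b :=
  rtg_mono (fun _ _ h => h.mono hS) h

theorem cc_congr {G : SimpleGraph V} {c c' : V → Bool} {S : Set V} (h : CC G c S)
    (hc : ∀ v ∈ S, c' v = c v) : CC G c' S := by
  refine ⟨h.1, fun x hx y hy => rtg_mono ?_ (h.2 x hx y hy)⟩
  intro a b hab
  exact ⟨hab.1, hab.2.1, hab.2.2.1, by rw [hc a hab.1, hc b hab.2.1]; exact hab.2.2.2⟩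

theorem cc_iUnion {G : SimpleGraph V} {c : V → Bool} {ι : Type*} (T : ι → Set V) (I : Set ι)
    (hI : I.Nonempty) (hcc : ∀ i ∈ I, CC G c (T i))
    (hl : ∀ i ∈ I, ∀ j ∈ I, i ≠ j → ∃ x ∈ T i, ∃ y ∈ T j, G.Adj x y ∧ c x ≠ c y) :
    CC G c {v | ∃ i ∈ I, v ∈ T i} := by
  obtain ⟨i0, hi0⟩ := hI
  obtain ⟨r, hr⟩ := (hcc i0 hi0).1
  have hsub : ∀ i ∈ I, T i ⊆ {v | ∃ i ∈ I, v ∈ T i} := fun i hi v hv => ⟨i, hi, hv⟩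
  refine cc_of_root r ⟨i0, hi0, hr⟩ ?_
  rintro x ⟨j, hj, hx⟩
  by_cases hji : j = i0
  · subst hji
    exact rtg_link_mono (hsub j hj) ((hcc j hj).2 x hx r hr)
  · obtain ⟨a, ha, b, hb, hab, hc⟩ := hl j hj i0 hi0 hji
    refine (rtg_link_mono (hsub j hj) ((hcc j hj).2 x hx a ha)).trans ?_
    exact .head ⟨hsub j hj ha, hsub i0 hi0 hb, hab, hc⟩
      (rtg_link_mono (hsub i0 hi0) ((hcc i0 hi0).2 b hb r hr))

/-- base case: ports matched to each other -/
theorem oddModel_of_matched {G : SimpleGraph V} {ι : Type*} [LinearOrder ι] {h : ℕ}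
    (E : Finset ι) (T : ι → Set V) (c : V → Bool) (τ : ι → V) (η : ι → ι)
    (hcc : ∀ e ∈ E, CC G c (T e)) (hdis : ∀ e ∈ E, ∀ e' ∈ E, ∀ v, v ∈ T e → v ∈ T e' → e = e')
    (hl : ∀ e ∈ E, ∀ e' ∈ E, e ≠ e' → ∃ x ∈ T e, ∃ y ∈ T e', G.Adj x y ∧ c x ≠ c y)
    (hτ : ∀ e ∈ E, τ e ∈ T e)
    (hη : ∀ e ∈ E, η e ∈ E ∧ η (η e) = e ∧ η e ≠ e ∧ G.Adj (τ e) (τ (η e)) ∧ c (τ e) = c (τ (η e)))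
    (hcard : 2 * (h * h) ≤ E.card) : OddModel G h := by
  classical
  let A := E.filter (fun e => e < η e)
  have hA : h * h ≤ A.card := by
    have : E ⊆ A ∪ A.image η := by
      intro e he
      obtain ⟨h1, h2, h3, -⟩ := hη e he
      rcases lt_or_gt_of_ne h3 with hlt | hgt
      · refine Finset.mem_union_right _ (Finset.mem_image.2 ⟨η e, ?_, h2⟩)
        exact Finset.mem_filter.2 ⟨h1, by rwa [h2]⟩
      · exact Finset.mem_union_left _ (Finset.mem_filter.2 ⟨he, hgt⟩)
    have h1 := Finset.card_le_card this
    have h2 := Finset.card_union_le A (A.image η)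
    have h3 : (A.image η).card ≤ A.card := Finset.card_image_le
    omega
  have hcard' : Fintype.card (Fin h × Fin h) ≤ Fintype.card A := by
    simpa using hA
  obtain ⟨a⟩ := Function.Embedding.nonempty_of_card_le hcard'
  have haE : ∀ p, (a p : ι) ∈ E := fun p => (Finset.mem_filter.1 (a p).2).1
  have halt : ∀ p, (a p : ι) < η (a p) := fun p => (Finset.mem_filter.1 (a p).2).2
  have hainj : ∀ p q, (a p : ι) = a q → p = q := fun p q h => a.injective (Subtype.ext h)
  have hane : ∀ p q, (a p : ι) ≠ η (a q) := by
    intro p q he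
    have h1 := halt p
    rw [he, (hη _ (haE q)).2.1] at h1
    exact absurd (halt q) (not_lt.2 h1.le)
  have hηinj : ∀ p q, η (a p) = η (a q) → p = q := by
    intro p q he
    apply hainj
    rw [← (hη _ (haE p)).2.1, he, (hη _ (haE q)).2.1]
  let I : Fin h → Set ι := fun p => {i | ∃ q, i = a (p, q) ∨ i = η (a (q, p))}
  have hIE : ∀ p, ∀ i ∈ I p, i ∈ E := by
    rintro p i ⟨q, rfl | rfl⟩
    · exact haE _
    · exact (hη _ (haE _)).1
  have hI : ∀ p p' i, i ∈ I p → i ∈ I p' → p = p' := by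
    rintro p p' i ⟨q, h1 | h1⟩ ⟨q', h2 | h2⟩
    · have := hainj _ _ (h1.symm.trans h2)
      exact (Prod.mk.inj this).1
    · exact absurd (h1.symm.trans h2) (hane _ _)
    · exact absurd (h2.symm.trans h1) (hane _ _)
    · have := hηinj _ _ (h1.symm.trans h2)
      exact (Prod.mk.inj this).2
  refine ⟨fun p => {v | ∃ i ∈ I p, v ∈ T i}, c, ?_, ?_, ?_⟩
  · intro p
    exact cc_iUnion T (I p) ⟨_, p, Or.inl rfl⟩ (fun i hi => hcc i (hIE p i hi))
      (fun i hi j hj hij => hl i (hIE p i hi) j (hIE p j hj) hij)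
  · intro p p' hpp
    rw [Set.disjoint_left]
    rintro v ⟨i, hi, hv⟩ ⟨j, hj, hv'⟩
    have := hdis i (hIE p i hi) j (hIE p' j hj) v hv hv'
    subst this
    exact hpp (hI p p' i hi hj)
  · intro p p' _
    obtain ⟨h1, h2, h3, h4, h5⟩ := hη _ (haE (p, p'))
    exact ⟨_, ⟨_, ⟨p', Or.inl rfl⟩, hτ _ (haE (p, p'))⟩, _, ⟨_, ⟨p, Or.inr rfl⟩, hτ _ h1⟩, h4, h5⟩

theorem oddModel_of_ports [Finite V] {G : SimpleGraph V} {ι : Type*} [LinearOrder ι] {h : ℕ}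
    (E : Finset ι) (hcard : 2 * (h * h) ≤ E.card) (n : ℕ) :
    ∀ (T : ι → Set V) (c : V → Bool) (τ : ι → V) (R : Set V), R.ncard = n →
    (∀ e ∈ E, CC G c (T e)) → (∀ e ∈ E, ∀ e' ∈ E, ∀ v, v ∈ T e → v ∈ T e' → e = e') →
    (∀ e ∈ E, ∀ e' ∈ E, e ≠ e' → ∃ x ∈ T e, ∃ y ∈ T e', G.Adj x y ∧ c x ≠ c y) →
    (∀ e ∈ E, τ e ∈ T e) → (∀ v ∈ R, ∀ e ∈ E, v ∉ T e) →
    PM G {a | a.1 ∈ R ∨ ∃ e ∈ E, a = (τ e, c (τ e))} → OddModel G h := by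
  classical
  induction n with
  | zero =>
    intro T c τ R hR hcc hdis hl hτ hRT hPM
    have hR : R = ∅ := by
      rwa [Set.ncard_eq_zero] at hR
    subst hR
    obtain ⟨N, hN⟩ := hPM
    have : ∀ e, ∃ e', e ∈ E → e' ∈ E ∧ N (τ e, c (τ e)) = (τ e', c (τ e')) := by
      intro e
      by_cases he : e ∈ E
      · rcases (hN (τ e, c (τ e)) (Or.inr ⟨e, he, rfl⟩)).1 with h1 | ⟨e', he', h1⟩
        · exact absurd h1 (by simp)
        · exact ⟨e', fun _ => ⟨he', h1⟩⟩
      · exact ⟨e, fun h => absurd h he⟩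
    choose η hη using this
    refine oddModel_of_matched E T c τ η hcc hdis hl hτ ?_ hcard
    intro e he
    obtain ⟨h1, h2⟩ := hη e he
    obtain ⟨-, h3, h4⟩ := hN (τ e, c (τ e)) (Or.inr ⟨e, he, rfl⟩)
    rw [h2] at h3 h4
    obtain ⟨h5, h6⟩ := hη _ h1
    have hne : η e ≠ e := by
      intro h; rw [h] at h4; exact h4.ne rfl
    have hτne : τ e ≠ τ (η e) := by
      intro h
      have h7 := hτ e he
      rw [h] at h7
      exact hne (hdis _ h1 _ he _ (hτ _ h1) h7)
    refine ⟨h1, ?_, hne, ?_⟩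
    · rw [h6] at h3
      have h7 : τ (η (η e)) = τ e := congrArg Prod.fst h3
      have h8 := hτ _ h5
      rw [h7] at h8
      exact hdis _ h5 _ he _ h8 (hτ e he)
    · rcases h4 with h4 | h4
      · exact absurd h4.1 hτne
      · exact h4
  | succ n ih =>
    intro T c τ R hR hcc hdis hl hτ hRT hPM
    obtain ⟨N, hN⟩ := hPM
    by_cases hall : ∃ e ∈ E, (N (τ e, c (τ e))).1 ∈ R
    · obtain ⟨e, he, hv⟩ := hall
      obtain ⟨-, h3, h4⟩ := hN (τ e, c (τ e)) (Or.inr ⟨e, he, rfl⟩)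
      obtain ⟨v, b, hvb⟩ : ∃ v b, N (τ e, c (τ e)) = (v, b) := ⟨_, _, rfl⟩
      rw [hvb] at hv h3 h4
      have hv : v ∈ R := hv
      have hvτ : τ e ≠ v := fun h => hRT v hv e he (h ▸ hτ e he)
      obtain ⟨hadj, hb⟩ : G.Adj (τ e) v ∧ c (τ e) = b := by
        rcases h4 with h4 | h4
        · exact absurd h4.1 hvτ
        · exact h4
      let T' : ι → Set V := fun i => if i = e then insert v (T e) else T i
      let c' : V → Bool := fun x => if x = v then !b else c x
      let τ' : ι → V := fun i => if i = e then v else τ i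
      have hTe : T' e = insert v (T e) := if_pos rfl
      have hTn : ∀ i, i ≠ e → T' i = T i := fun i hi => if_neg hi
      have hcv : c' v = !b := if_pos rfl
      have hcn : ∀ x, x ≠ v → c' x = c x := fun x hx => if_neg hx
      have hτe : τ' e = v := if_pos rfl
      have hτn : ∀ i, i ≠ e → τ' i = τ i := fun i hi => if_neg hi
      have hvT : ∀ i ∈ E, ∀ x ∈ T i, x ≠ v := fun i hi x hx h => hRT v hv i hi (h ▸ hx)
      have hcT : ∀ i ∈ E, ∀ x ∈ T i, c' x = c x := fun i hi x hx => hcn x (hvT i hi x hx)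
      have hTT' : ∀ i, T i ⊆ T' i := by
        intro i
        by_cases hi : i = e
        · subst hi; rw [hTe]; exact Set.subset_insert _ _
        · rw [hTn i hi]
      have hT'T : ∀ i x, x ∈ T' i → x ∈ T i ∨ (i = e ∧ x = v) := by
        intro i x hx
        by_cases hi : i = e
        · subst hi; rw [hTe] at hx
          rcases hx with rfl | hx
          · exact Or.inr ⟨rfl, rfl⟩
          · exact Or.inl hx
        · rw [hTn i hi] at hx; exact Or.inl hx
      refine ih T' c' τ' (R \ {v}) ?_ ?_ ?_ ?_ ?_ ?_ ?_
      · rw [Set.ncard_sdiff_singleton_of_mem hv]; omega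
      · intro i hi
        by_cases hie : i = e
        · subst hie
          rw [hTe]
          refine cc_of_root (τ i) (Or.inr (hτ i hi)) ?_
          have h0 : CC G c' (T i) := cc_congr (hcc i hi) (hcT i hi)
          rintro x (rfl | hx)
          · refine .single ⟨Or.inl rfl, Or.inr (hτ i hi), hadj.symm, ?_⟩
            rw [hcv, hcT i hi _ (hτ i hi), hb]
            simp
          · exact rtg_link_mono (Set.subset_insert _ _) (h0.2 x hx _ (hτ i hi))
        · rw [hTn i hie]
          exact cc_congr (hcc i hi) (hcT i hi)
      · intro i hi j hj x hx hx'
        rcases hT'T i x hx with k1 | ⟨rfl, rfl⟩ <;> rcases hT'T j _ hx' with k2 | ⟨rfl, hxv⟩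
        · exact hdis i hi j hj x k1 k2
        · exact absurd hxv (hvT i hi x k1)
        · exact absurd rfl (hvT j hj _ k2)
        · rfl
      · intro i hi j hj hij
        obtain ⟨x, hx, y, hy, hxy, hcxy⟩ := hl i hi j hj hij
        exact ⟨x, hTT' i hx, y, hTT' j hy, hxy, by rw [hcT i hi x hx, hcT j hj y hy]; exact hcxy⟩
      · intro i hi
        by_cases hie : i = e
        · subst hie; rw [hτe, hTe]; exact Or.inl rfl
        · rw [hτn i hie, hTn i hie]; exact hτ i hi
      · intro x hx i hi hxi
        rcases hT'T i x hxi with h | ⟨_, h⟩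
        · exact hRT x hx.1 i hi h
        · exact hx.2 h
      · have hset : ∀ a, a ∈ {a : V × Bool | a.1 ∈ R \ {v} ∨ ∃ e ∈ E, a = (τ' e, c' (τ' e))} ↔
            a ∈ {a : V × Bool | a.1 ∈ R ∨ ∃ e ∈ E, a = (τ e, c (τ e))} ∧
              a ≠ (τ e, c (τ e)) ∧ a ≠ (v, b) := by
          rintro ⟨x, d⟩
          constructor
          · rintro (h1 | ⟨i, hi, h1⟩)
            · refine ⟨Or.inl h1.1, ?_, ?_⟩
              · intro h
                have h' : x = τ e := congrArg Prod.fst h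
                exact hRT x h1.1 e he (h' ▸ hτ e he)
              · intro h
                exact h1.2 (congrArg Prod.fst h)
            · by_cases hie : i = e
              · subst hie
                rw [hτe, hcv] at h1
                rw [h1]
                refine ⟨Or.inl hv, ?_, ?_⟩
                · intro h; exact hvτ (congrArg Prod.fst h).symm
                · intro h
                  have := congrArg Prod.snd h
                  simp at this
              · rw [hτn i hie, hcT i hi _ (hτ i hi)] at h1
                rw [h1]
                refine ⟨Or.inr ⟨i, hi, rfl⟩, ?_, ?_⟩
                · intro h
                  have h' : τ i = τ e := congrArg Prod.fst h
                  exact hie (hdis i hi e he _ (hτ i hi) (h' ▸ hτ e he))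
                · intro h
                  exact hvT i hi _ (hτ i hi) (congrArg Prod.fst h)
          · rintro ⟨h1 | ⟨i, hi, h1⟩, h2, h3⟩
            · by_cases hxv : x = v
              · right
                refine ⟨e, he, ?_⟩
                rw [hτe, hcv, hxv]
                rw [hxv] at h3
                have : d ≠ b := fun h => h3 (by rw [h])
                rw [bool_eq_not this.symm]
              · exact Or.inl ⟨h1, hxv⟩
            · right
              refine ⟨i, hi, ?_⟩
              have hie : i ≠ e := by
                rintro rfl; exact h2 h1
              rw [hτn i hie, hcT i hi _ (hτ i hi)]; exact h1
        refine ⟨N, ?_⟩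
        intro a ha
        rw [hset] at ha
        obtain ⟨ha1, ha2, ha3⟩ := ha
        obtain ⟨k1, k2, k3⟩ := hN a ha1
        refine ⟨?_, k2, k3⟩
        rw [hset]
        refine ⟨k1, ?_, ?_⟩
        · intro h; rw [h, hvb] at k2; exact ha3 k2.symm
        · intro h; rw [h, h3] at k2; exact ha2 k2.symm
    · -- no port is matched outside: restrict to the ports
      push Not at hall
      have hPM' : PM G {a | a.1 ∈ (∅ : Set V) ∨ ∃ e ∈ E, a = (τ e, c (τ e))} := by
        refine ⟨N, ?_⟩
        rintro a (ha | ⟨e, he, rfl⟩)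
        · exact absurd ha (by simp)
        · obtain ⟨h1, h2, h3⟩ := hN (τ e, c (τ e)) (Or.inr ⟨e, he, rfl⟩)
          refine ⟨?_, h2, h3⟩
          rcases h1 with h1 | h1
          · exact absurd h1 (hall e he)
          · exact Or.inr h1
      obtain ⟨N, hN⟩ := hPM'
      have : ∀ e, ∃ e', e ∈ E → e' ∈ E ∧ N (τ e, c (τ e)) = (τ e', c (τ e')) := by
        intro e
        by_cases he : e ∈ E
        · rcases (hN (τ e, c (τ e)) (Or.inr ⟨e, he, rfl⟩)).1 with h1 | ⟨e', he', h1⟩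
          · exact absurd h1 (by simp)
          · exact ⟨e', fun _ => ⟨he', h1⟩⟩
        · exact ⟨e, fun h => absurd h he⟩
      choose η hη using this
      refine oddModel_of_matched E T c τ η hcc hdis hl hτ ?_ hcard
      intro e he
      obtain ⟨h1, h2⟩ := hη e he
      obtain ⟨-, h3, h4⟩ := hN (τ e, c (τ e)) (Or.inr ⟨e, he, rfl⟩)
      rw [h2] at h3 h4
      obtain ⟨h5, h6⟩ := hη _ h1
      have hne : η e ≠ e := by
        intro h; rw [h] at h4; exact h4.ne rfl
      have hτne : τ e ≠ τ (η e) := by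
        intro h
        have h7 := hτ e he
        rw [h] at h7
        exact hne (hdis _ h1 _ he _ (hτ _ h1) h7)
      refine ⟨h1, ?_, hne, ?_⟩
      · rw [h6] at h3
        have h7 : τ (η (η e)) = τ e := congrArg Prod.fst h3
        have h8 := hτ _ h5
        rw [h7] at h8
        exact hdis _ h5 _ he _ h8 (hτ e he)
      · rcases h4 with h4 | h4
        · exact absurd h4.1 hτne
        · exact h4

theorem oddModel_of_pack [Finite V] {G : SimpleGraph V} {ι : Type*} [LinearOrder ι] {h : ℕ}
    {T : ι → Set V} {c : V → Bool} (hT : Trees G T c) {K E : Finset ι} (hE : E ⊆ K)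
    (hp : Pack G T c K E) (hcard : 2 * (h * h) ≤ E.card) : OddModel G h := by
  obtain ⟨τ, hτ, hPM⟩ := hp
  refine oddModel_of_ports E hcard _ T c τ {v | ∀ i ∈ K, v ∉ T i} rfl (fun e _ => hT.cc e) ?_ ?_ hτ
    (fun v hv e he => hv e (hE he)) hPM
  · intro i _ j _ v h1 h2
    by_contra hne
    exact Set.disjoint_left.1 (hT.dis i j hne) h1 h2
  · intro i _ j _ hij
    obtain ⟨x, hx, y, hy, hxy⟩ := hT.adj i j hij
    exact ⟨x, hx, y, hy, hxy, hT.bich i j hij x hx y hy hxy⟩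

theorem inv_even {X : Type*} [Finite X] {A : Set X} (N : X → X)
    (hN : ∀ a ∈ A, N a ∈ A ∧ N (N a) = a ∧ N a ≠ a) : Even A.ncard := by
  classical
  have hf := A.toFinite
  have := Finset.sum_involution (s := hf.toFinset) (f := fun _ => (1 : ZMod 2))
    (fun a _ => N a) (by intros; decide)
    (by intro a ha _; exact (hN a (by simpa using ha)).2.2)
    (by intro a ha; simpa using (hN a (by simpa using ha)).1)
    (by intro a ha; exact (hN a (by simpa using ha)).2.1)
  simp only [Finset.sum_const, nsmul_eq_mul, mul_one] at this
  rw [Set.ncard_eq_toFinset_card A hf]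
  exact (ZMod.natCast_eq_zero_iff_even).1 this

theorem tutte_clean {X : Type u} [Fintype X] (H : SimpleGraph X) (hev : Even (Nat.card X)) :
    (∃ N : X → X, ∀ x, N (N x) = x ∧ H.Adj x (N x)) ∨
    ∃ (U : Set X) (L : Type u) (comp : X → L) (O : Set L),
      (∀ x y, x ∉ U → y ∉ U → H.Adj x y → comp x = comp y) ∧
      (∀ C ∈ O, Odd {x | x ∉ U ∧ comp x = C}.ncard) ∧ U.ncard + 2 ≤ O.ncard := by
  classical
  by_cases hpm : ∃ M : Subgraph H, M.IsPerfectMatching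
  · left
    obtain ⟨M, hM⟩ := hpm
    rw [Subgraph.isPerfectMatching_iff] at hM
    choose N hN hN' using hM
    refine ⟨N, fun x => ⟨?_, (hN x).adj_sub⟩⟩
    exact (hN' (N x) x (hN x).symm).symm
  · right
    rw [SimpleGraph.tutte] at hpm
    push Not at hpm
    obtain ⟨U, hU⟩ := hpm
    unfold IsTutteViolator at hU
    set H' := ((⊤ : H.Subgraph).deleteVerts U) with hH'
    have hv : ∀ x, x ∈ H'.verts ↔ x ∉ U := by
      intro x; simp [hH']
    let comp : X → Option H'.coe.ConnectedComponent := fun x =>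
      if h : x ∈ H'.verts then some (H'.coe.connectedComponentMk ⟨x, h⟩) else none
    have hcard : ∀ C : H'.coe.ConnectedComponent,
        {x | x ∉ U ∧ comp x = some C}.ncard = C.supp.ncard := by
      intro C
      rw [← Set.ncard_image_of_injective C.supp Subtype.val_injective]
      congr 1
      ext x
      simp only [Set.mem_image, Subtype.exists, exists_and_right, exists_eq_right,
        Set.mem_ofPred_eq, ConnectedComponent.mem_supp_iff, comp]
      constructor
      · rintro ⟨h1, h2⟩
        have h1' := (hv x).2 h1
        rw [dif_pos h1'] at h2
        exact ⟨h1', Option.some_injective _ h2⟩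
      · rintro ⟨h1, h2⟩
        refine ⟨(hv x).1 h1, ?_⟩
        rw [dif_pos h1, h2]
    refine ⟨U, Option H'.coe.ConnectedComponent, comp, some '' H'.coe.oddComponents, ?_, ?_, ?_⟩
    · intro x y hx hy hxy
      simp only [comp]
      rw [dif_pos ((hv x).2 hx), dif_pos ((hv y).2 hy)]
      congr 1
      rw [ConnectedComponent.eq]
      apply SimpleGraph.Adj.reachable
      rw [Subgraph.coe_adj]
      have : H'.Adj x y := by
        rw [hH', Subgraph.deleteVerts_adj]
        exact ⟨trivial, hx, trivial, hy, hxy⟩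
      exact this
    · rintro _ ⟨C, hC, rfl⟩
      rw [hcard]
      exact hC
    · rw [Set.ncard_image_of_injective _ (Option.some_injective _)]
      have h1 := SimpleGraph.odd_ncard_oddComponents H'.coe
      have h2 : Nat.card H'.verts + U.ncard = Nat.card X := by
        have : H'.verts = Uᶜ := by ext x; rw [hv]; rfl
        rw [this]
        have := Set.ncard_add_ncard_compl U
        rw [← this, add_comm]
        rfl
      rw [← h2] at hev
      rcases Nat.even_or_odd U.ncard with h | h
      · have h3 : ¬ Odd (Nat.card H'.verts) := by
          intro h'
          exact (Nat.not_even_iff_odd.2 (h'.add_even h)) hev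
        rw [← h1, Nat.not_odd_iff_even] at h3
        obtain ⟨a, ha⟩ := h; obtain ⟨b, hb⟩ := h3
        omega
      · have h3 : Odd (Nat.card H'.verts) := by
          by_contra h'
          rw [Nat.not_odd_iff_even] at h'
          exact (Nat.not_even_iff_odd.2 (h'.add_odd h)) hev
        rw [← h1] at h3
        obtain ⟨a, ha⟩ := h; obtain ⟨b, hb⟩ := h3
        omega

theorem near_even {X : Type*} [Finite X] {A : Set X} {u v : X} (huv : u ≠ v) (hu : u ∈ A) (hv : v ∈ A)
    (N : X → X)
    (hN : ∀ a ∈ A, a ≠ u → a ≠ v → N a ∈ A ∧ N a ≠ u ∧ N a ≠ v ∧ N (N a) = a ∧ N a ≠ a) :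
    Even A.ncard := by
  have h1 : Even (A \ {u, v}).ncard := by
    apply inv_even N
    rintro a ⟨ha, ha'⟩
    simp only [Set.mem_insert_iff, Set.mem_singleton_iff, not_or] at ha'
    obtain ⟨h1, h2, h3, h4, h5⟩ := hN a ha ha'.1 ha'.2
    exact ⟨⟨h1, by simp [h2, h3]⟩, h4, h5⟩
  have h2 : ({u, v} : Set X) ⊆ A := by
    rintro x (rfl | hx)
    · exact hu
    · have hx : x = v := hx
      rwa [hx]
  have h3 := Set.ncard_sdiff_add_ncard_of_subset h2
  rw [Set.ncard_pair huv] at h3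
  rw [← h3]
  exact h1.add (by decide)

theorem near_matching {X : Type*} [Finite X] {H : SimpleGraph X} {u v : X} (huv : u ≠ v) (N : X → X)
    (hN : ∀ a, a ≠ u → a ≠ v → N a ≠ u ∧ N a ≠ v ∧ N (N a) = a ∧ H.Adj a (N a))
    {U : Set X} {L : Type*} {comp : X → L} {O : Set L}
    (hcomp : ∀ x y, x ∉ U → y ∉ U → H.Adj x y → comp x = comp y)
    (hodd : ∀ C ∈ O, Odd {x | x ∉ U ∧ comp x = C}.ncard) (hcard : U.ncard + 2 ≤ O.ncard) :
    u ∉ U ∧ v ∉ U ∧ comp u ≠ comp v := by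
  classical
  let Ob : Set L := {C ∈ O | ¬ ∃ x, x ∉ U ∧ comp x = C ∧ x ≠ u ∧ x ≠ v ∧ N x ∈ U}
  have hOfin : O.Finite := by
    by_contra h
    rw [Set.Infinite.ncard h] at hcard
    omega
  have hgood : (O \ Ob).ncard ≤ U.ncard := by
    have hx : ∀ C ∈ O \ Ob, ∃ x, x ∉ U ∧ comp x = C ∧ x ≠ u ∧ x ≠ v ∧ N x ∈ U := by
      rintro C ⟨hC, hC'⟩
      by_contra h
      exact hC' ⟨hC, h⟩
    have : Nonempty X := ⟨u⟩
    choose! x hx using hx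
    apply Set.ncard_le_ncard_of_injOn (fun C => N (x C)) (fun C hC => (hx C hC).2.2.2.2) ?_ U.toFinite
    intro C hC C' hC' he
    obtain ⟨-, a2, a3, a4, -⟩ := hx C hC
    obtain ⟨-, b2, b3, b4, -⟩ := hx C' hC'
    have h1 := (hN _ a3 a4).2.2.1
    have h2 := (hN _ b3 b4).2.2.1
    have he : N (x C) = N (x C') := he
    rw [he, h2] at h1
    rw [← a2, ← b2, h1]
  have hb : 2 ≤ Ob.ncard := by
    have := Set.ncard_sdiff_add_ncard_of_subset (show Ob ⊆ O from fun C hC => hC.1) hOfin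
    omega
  have hOb : ∀ C ∈ Ob, (u ∉ U ∧ comp u = C) ∨ (v ∉ U ∧ comp v = C) := by
    rintro C ⟨hC, hC'⟩
    by_contra hcon
    push Not at hcon
    have := hodd C hC
    rw [← Nat.not_even_iff_odd] at this
    apply this
    apply inv_even N
    rintro a ⟨ha, hac⟩
    have hau : a ≠ u := by rintro rfl; exact hcon.1 ha hac
    have hav : a ≠ v := by rintro rfl; exact hcon.2 ha hac
    obtain ⟨-, -, h3, h4⟩ := hN a hau hav
    have hNU : N a ∉ U := fun h => hC' ⟨a, ha, hac, hau, hav, h⟩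
    exact ⟨⟨hNU, by rw [← hcomp a (N a) ha hNU h4, hac]⟩, h3, h4.ne.symm⟩
  obtain ⟨C, C', hC, hC', hne⟩ := (Set.one_lt_ncard_iff (hOfin.subset fun C hC => hC.1)).1 hb
  rcases hOb C hC with ⟨h1, h2⟩ | ⟨h1, h2⟩ <;> rcases hOb C' hC' with ⟨h3, h4⟩ | ⟨h3, h4⟩
  · exact absurd (h2.symm.trans h4) hne
  · exact ⟨h1, h3, by rw [h2, h4]; exact hne⟩
  · exact ⟨h3, h1, by rw [h2, h4]; exact hne.symm⟩
  · exact absurd (h2.symm.trans h4) hne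

theorem pm_of_inj {G : SimpleGraph V} {X : Type*} (P : X → Prop) (F : X → V × Bool) (N : X → X)
    (hN : ∀ x, P x → P (N x) ∧ N (N x) = x ∧ OA G (F x) (F (N x)))
    (hinj : ∀ x y, P x → P y → F x = F y → x = y) : PM G {b | ∃ x, P x ∧ F x = b} := by
  classical
  refine ⟨fun b => if h : ∃ x, P x ∧ F x = b then F (N h.choose) else b, ?_⟩
  have key : ∀ x, P x → (if h : ∃ y, P y ∧ F y = F x then F (N h.choose) else F x) = F (N x) := by
    intro x hx
    have hex : ∃ y, P y ∧ F y = F x := ⟨x, hx, rfl⟩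
    rw [dif_pos hex]
    rw [hinj _ _ hex.choose_spec.1 hx hex.choose_spec.2]
  rintro _ ⟨x, hx, rfl⟩
  obtain ⟨h1, h2, h3⟩ := hN x hx
  simp only [key x hx, key _ h1, h2]
  exact ⟨⟨_, h1, rfl⟩, trivial, h3⟩

/-- port relation -/
def Port (G : SimpleGraph V) {ι : Type} (T : ι → Set V) (c : V → Bool) (i : ι) (a : V × Bool) : Prop :=
  ∃ t ∈ T i, c t = a.2 ∧ G.Adj t a.1

/-- vertices of the auxiliary graph -/
abbrev HX {ι : Type} (T : ι → Set V) (K : Finset ι) (q : ℕ) : Type u :=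
  {a : V × Bool // ∀ i ∈ K, a.1 ∉ T i} ⊕ ({i // i ∈ K} ⊕ Fin q)

/-- adjacency of the auxiliary graph -/
def HAdj (G : SimpleGraph V) {ι : Type} (T : ι → Set V) (c : V → Bool) (K : Finset ι) (q : ℕ) :
    HX T K q → HX T K q → Prop
  | .inl a, .inl b => OA G a.1 b.1
  | .inl a, .inr (.inl i) => Port G T c i.1 a.1
  | .inr (.inl i), .inl a => Port G T c i.1 a.1
  | .inr (.inl _), .inr (.inr _) => True
  | .inr (.inr _), .inr (.inl _) => True
  | .inr (.inr x), .inr (.inr y) => x ≠ y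
  | _, _ => False

/-- the auxiliary graph -/
def HG (G : SimpleGraph V) {ι : Type} (T : ι → Set V) (c : V → Bool) (K : Finset ι) (q : ℕ) :
    SimpleGraph (HX T K q) where
  Adj := HAdj G T c K q
  symm := ⟨by
    rintro (a | i | x) (b | j | y) h
    · exact OA.symm h
    · exact h
    · exact h
    · exact h
    · exact h
    · exact h
    · exact h
    · exact h
    · exact Ne.symm h⟩
  loopless := ⟨by
    rintro (a | i | x) h
    · exact OA.ne h rfl
    · exact h
    · exact h rfl⟩

theorem pack_of_hg [Nonempty V] {G : SimpleGraph V} {ι : Type} {T : ι → Set V} {c : V → Bool}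
    (hT : Trees G T c) (K : Finset ι) (q : ℕ) (N : HX T K q → HX T K q)
    (hN : ∀ x, N (N x) = x ∧ (HG G T c K q).Adj x (N x)) :
    ∃ E ⊆ K, K.card ≤ E.card + q ∧ Pack G T c K E := by
  classical
  have huniq : ∀ i j v, v ∈ T i → v ∈ T j → i = j := by
    intro i j v h1 h2
    by_contra hne
    exact Set.disjoint_left.1 (hT.dis i j hne) h1 h2
  let E := K.filter (fun i => ∃ h : i ∈ K, ∃ a, N (.inr (.inl ⟨i, h⟩)) = .inl a)
  have hE : ∀ i, i ∈ E → ∃ h : i ∈ K, ∃ a, N (.inr (.inl ⟨i, h⟩)) = .inl a :=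
    fun i hi => (Finset.mem_filter.1 hi).2
  have hE' : ∀ i (h : i ∈ K) a, N (.inr (.inl ⟨i, h⟩)) = .inl a → i ∈ E :=
    fun i h a ha => Finset.mem_filter.2 ⟨h, h, a, ha⟩
  refine ⟨E, Finset.filter_subset _ _, ?_, ?_⟩
  · have h1 : ∀ i : {i // i ∈ K \ E}, ∃ x : Fin q,
        N (.inr (.inl ⟨i, (Finset.mem_sdiff.1 i.2).1⟩)) = .inr (.inr x) := by
      rintro ⟨i, hi⟩
      rw [Finset.mem_sdiff] at hi
      have := (hN (.inr (.inl ⟨i, hi.1⟩))).2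
      rcases h : N (.inr (.inl ⟨i, hi.1⟩)) with a | j | x
      · exact absurd (hE' i hi.1 a h) hi.2
      · rw [h] at this; exact this.elim
      · exact ⟨x, rfl⟩
    choose f hf using h1
    have hinj : Function.Injective f := by
      intro i j hij
      have h1 := hf i
      rw [hij, ← hf j] at h1
      have h2 := congrArg N h1
      rw [(hN _).1, (hN _).1] at h2
      have h3 := Sum.inl.inj (Sum.inr.inj h2)
      exact Subtype.ext (congrArg (fun z : {i // i ∈ K} => z.1) h3)
    have h2 := Fintype.card_le_of_injective f hinj
    rw [Fintype.card_coe, Fintype.card_fin] at h2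
    have h3 := Finset.card_sdiff_add_card_eq_card (show E ⊆ K from Finset.filter_subset _ _)
    omega
  · have hne : ∀ i, (T i).Nonempty := fun i => (hT.cc i).1
    have hτ : ∀ i : ι, ∃ t ∈ T i, ∀ (h : i ∈ K) a, N (.inr (.inl ⟨i, h⟩)) = .inl a →
        c t = a.1.2 ∧ G.Adj t a.1.1 := by
      intro i
      by_cases hi : i ∈ E
      · obtain ⟨h, a, ha⟩ := hE i hi
        have := (hN (.inr (.inl ⟨i, h⟩))).2
        rw [ha] at this
        obtain ⟨t, ht, h1⟩ := this
        refine ⟨t, ht, fun h' a' ha' => ?_⟩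
        rw [ha] at ha'
        cases ha'
        exact h1
      · obtain ⟨t, ht⟩ := hne i
        exact ⟨t, ht, fun h a ha => absurd (hE' i h a ha) hi⟩
    choose τ hτ hτ' using hτ
    refine ⟨τ, fun e _ => hτ e, ?_⟩
    let P : HX T K q → Prop := fun x => match x with
      | .inl _ => True
      | .inr (.inl i) => i.1 ∈ E
      | .inr (.inr _) => False
    let F : HX T K q → V × Bool := fun x => match x with
      | .inl a => a.1
      | .inr (.inl i) => (τ i.1, c (τ i.1))
      | .inr (.inr _) => (Classical.arbitrary V, true)
    have hPM := pm_of_inj (G := G) P F N ?_ ?_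
    · convert hPM using 1
      ext b
      simp only [PackSet, Set.mem_ofPred_eq]
      constructor
      · rintro (hb | ⟨e, he, rfl⟩)
        · exact ⟨.inl ⟨b, hb⟩, trivial, rfl⟩
        · obtain ⟨h, -⟩ := hE e he
          exact ⟨.inr (.inl ⟨e, h⟩), he, rfl⟩
      · rintro ⟨a | i | x, hP, rfl⟩
        · exact Or.inl a.2
        · exact Or.inr ⟨i.1, hP, rfl⟩
        · exact hP.elim
    · intro x hx
      obtain ⟨h1, h2⟩ := hN x
      rcases x with a | i | x
      · rcases h : N (.inl a) with b | j | y
        · rw [h] at h1 h2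
          exact ⟨trivial, h1, h2⟩
        · rw [h] at h1
          obtain ⟨h3, h4⟩ := hτ' j.1 j.2 a h1
          exact ⟨hE' j.1 j.2 a h1, h1, Or.inr ⟨h4.symm, h3.symm⟩⟩
        · rw [h] at h2
          exact h2.elim
      · obtain ⟨h, a, ha⟩ := hE i.1 hx
        have ha : N (.inr (.inl i)) = .inl a := ha
        obtain ⟨h3, h4⟩ := hτ' i.1 h a ha
        rw [ha] at h1 ⊢
        exact ⟨trivial, h1, Or.inr ⟨h4, h3⟩⟩
      · exact hx.elim
    · rintro (a | i | x) (b | j | y) hx hy hxy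
      · exact congrArg Sum.inl (Subtype.ext hxy)
      · have h1 : a.1.1 = τ j.1 := congrArg Prod.fst hxy
        exact absurd (h1 ▸ hτ j.1) (a.2 j.1 j.2)
      · exact hy.elim
      · have h1 : τ i.1 = b.1.1 := congrArg Prod.fst hxy
        exact absurd (h1 ▸ hτ i.1) (b.2 i.1 i.2)
      · have h1 : τ i.1 = τ j.1 := congrArg Prod.fst hxy
        have h2 := hτ i.1
        rw [h1] at h2
        exact congrArg (fun z => Sum.inr (Sum.inl z)) (Subtype.ext (huniq _ _ _ h2 (hτ j.1)))
      · exact hy.elim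
      · exact hx.elim
      · exact hx.elim
      · exact hx.elim

theorem near_of_pack {G : SimpleGraph V} {ι : Type} [DecidableEq ι] {T : ι → Set V} {c : V → Bool}
    (hT : Trees G T c) {K E : Finset ι} {q : ℕ} (hE : E ⊆ K) (hp : Pack G T c K E)
    (u v : {i // i ∈ K}) (huv : u ≠ v) (hu : u.1 ∉ E) (hv : v.1 ∉ E) (hq : K.card = E.card + 2 + q) :
    ∃ N : HX T K q → HX T K q, ∀ a, a ≠ .inr (.inl u) → a ≠ .inr (.inl v) →
      N a ≠ .inr (.inl u) ∧ N a ≠ .inr (.inl v) ∧ N (N a) = a ∧ (HG G T c K q).Adj a (N a) := by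
  classical
  have huniq : ∀ i j v, v ∈ T i → v ∈ T j → i = j := by
    intro i j v h1 h2
    by_contra hne
    exact Set.disjoint_left.1 (hT.dis i j hne) h1 h2
  obtain ⟨τ, hτ, N0, hN0⟩ := hp
  let Kr := (K \ E) \ {u.1, v.1}
  have huv' : u.1 ≠ v.1 := fun h => huv (Subtype.ext h)
  have hKr : Kr.card = q := by
    have h1 := Finset.card_sdiff_add_card_eq_card hE
    have h2 : ({u.1, v.1} : Finset ι) ⊆ K \ E := by
      intro x hx
      simp only [Finset.mem_insert, Finset.mem_singleton] at hx
      rcases hx with rfl | rfl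
      · exact Finset.mem_sdiff.2 ⟨u.2, hu⟩
      · exact Finset.mem_sdiff.2 ⟨v.2, hv⟩
    have h3 := Finset.card_sdiff_add_card_eq_card h2
    rw [Finset.card_pair huv'] at h3
    simp only [Kr]
    omega
  let γ : Fin q ≃ Kr := (Fintype.equivFinOfCardEq (by rw [Fintype.card_coe, hKr])).symm
  have hKrm : ∀ i, i ∈ Kr ↔ i ∈ K ∧ i ∉ E ∧ i ≠ u.1 ∧ i ≠ v.1 := by
    intro i
    simp only [Kr, Finset.mem_sdiff, Finset.mem_insert, Finset.mem_singleton, not_or, and_assoc]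
  let pt : ι → V × Bool := fun i => (τ i, c (τ i))
  have hptT : ∀ i ∈ E, (pt i).1 ∈ T i := hτ
  have hptmem : ∀ i ∈ E, pt i ∈ PackSet T c K E τ := fun i hi => Or.inr ⟨i, hi, rfl⟩
  have hptinj : ∀ i ∈ E, ∀ j ∈ E, pt i = pt j → i = j := by
    intro i hi j hj h
    have h1 : (pt i).1 = (pt j).1 := by rw [h]
    have h2 := hptT i hi
    rw [h1] at h2
    exact huniq _ _ _ h2 (hptT j hj)
  let M : HX T K q → HX T K q → Prop := fun x y => match x, y with
    | .inl a, .inl b => N0 a.1 = b.1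
    | .inl a, .inr (.inl i) => i.1 ∈ E ∧ N0 a.1 = pt i.1
    | .inr (.inl i), .inl a => i.1 ∈ E ∧ N0 a.1 = pt i.1
    | .inr (.inl i), .inr (.inr x) => (γ x : ι) = i.1
    | .inr (.inr x), .inr (.inl i) => (γ x : ι) = i.1
    | _, _ => False
  have hR : ∀ a : {a : V × Bool // ∀ i ∈ K, a.1 ∉ T i}, a.1 ∈ PackSet T c K E τ :=
    fun a => Or.inl a.2
  have hMsymm : ∀ x y, M x y → M y x := by
    rintro (a | i | x) (b | j | y) h
    · have h : N0 a.1 = b.1 := h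
      show N0 b.1 = a.1
      rw [← h, (hN0 _ (hR a)).2.1]
    all_goals exact h
  have hMadj : ∀ x y, M x y → (HG G T c K q).Adj x y := by
    have hport : ∀ (a : {a : V × Bool // ∀ i ∈ K, a.1 ∉ T i}) (i : {i // i ∈ K}), i.1 ∈ E →
        N0 a.1 = pt i.1 → Port G T c i.1 a.1 := by
      intro a i hi h
      have h1 := (hN0 _ (hR a)).2.2
      rw [h] at h1
      rcases h1 with ⟨h1, -⟩ | ⟨h1, h2⟩
      · exact absurd (h1 ▸ hptT i.1 hi) (a.2 i.1 i.2)
      · exact ⟨τ i.1, hτ i.1 hi, h2.symm, h1.symm⟩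
    rintro (a | i | x) (b | j | y) h
    · have h : N0 a.1 = b.1 := h
      have h1 := (hN0 _ (hR a)).2.2
      rw [h] at h1
      exact h1
    · exact hport a j h.1 h.2
    · exact h.elim
    · exact hport b i h.1 h.2
    · exact h.elim
    · trivial
    · exact h.elim
    · trivial
    · exact h.elim
  have hMu : ∀ x y, M x y → y ≠ .inr (.inl u) ∧ y ≠ .inr (.inl v) := by
    rintro (a | i | x) (b | j | y) h
    · simp
    · constructor
      · intro h'; simp only [Sum.inr.injEq, Sum.inl.injEq] at h'; exact hu (h' ▸ h.1)
      · intro h'; simp only [Sum.inr.injEq, Sum.inl.injEq] at h'; exact hv (h' ▸ h.1)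
    · simp
    · simp
    · exact h.elim
    · simp
    · exact h.elim
    · have h : (γ x : ι) = j.1 := h
      have h1 := (hKrm _).1 (γ x).2
      rw [h] at h1
      constructor
      · intro h'; simp only [Sum.inr.injEq, Sum.inl.injEq] at h'; exact h1.2.2.1 (by rw [h'])
      · intro h'; simp only [Sum.inr.injEq, Sum.inl.injEq] at h'; exact h1.2.2.2 (by rw [h'])
    · simp
  have hMfun : ∀ x y z, M x y → M x z → y = z := by
    have key : ∀ (a b : {a : V × Bool // ∀ i ∈ K, a.1 ∉ T i}) (i : ι), i ∈ K → i ∈ E →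
        N0 a.1 = b.1 → N0 a.1 = pt i → False := by
      intro a b i hi hiE h1 h2
      rw [h2] at h1
      exact b.2 i hi (h1 ▸ hptT i hiE)
    rintro (a | i | x) (b | j | y) (b' | j' | y') h h' <;> try exact h.elim
    all_goals try exact h'.elim
    · have h : N0 a.1 = b.1 := h
      have h' : N0 a.1 = b'.1 := h'
      exact congrArg Sum.inl (Subtype.ext (h.symm.trans h'))
    · exact (key a b j'.1 j'.2 h'.1 h h'.2).elim
    · exact (key a b' j.1 j.2 h.1 h' h.2).elim
    · exact congrArg (fun z => Sum.inr (Sum.inl z))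
        (Subtype.ext (hptinj _ h.1 _ h'.1 (h.2.symm.trans h'.2)))
    · have h1 := congrArg N0 (h.2.trans h'.2.symm)
      rw [(hN0 _ (hR b)).2.1, (hN0 _ (hR b')).2.1] at h1
      exact congrArg Sum.inl (Subtype.ext h1)
    · have h2 : (γ y' : ι) = i.1 := h'
      have h3 := (hKrm _).1 (γ y').2
      rw [h2] at h3
      exact absurd h.1 h3.2.1
    · have h2 : (γ y : ι) = i.1 := h
      have h3 := (hKrm _).1 (γ y).2
      rw [h2] at h3
      exact absurd h'.1 h3.2.1
    · have h2 : (γ y : ι) = i.1 := h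
      have h3 : (γ y' : ι) = i.1 := h'
      exact congrArg (fun z => Sum.inr (Sum.inr z))
        (γ.injective (Subtype.ext (h2.trans h3.symm)))
    · have h2 : (γ x : ι) = j.1 := h
      have h3 : (γ x : ι) = j'.1 := h'
      exact congrArg (fun z => Sum.inr (Sum.inl z)) (Subtype.ext (h2.symm.trans h3))
  have hMtot : ∀ x, x ≠ .inr (.inl u) → x ≠ .inr (.inl v) → ∃ y, M x y := by
    rintro (a | i | x) h1 h2
    · rcases (hN0 _ (hR a)).1 with h | ⟨e, he, h⟩
      · exact ⟨.inl ⟨_, h⟩, rfl⟩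
      · exact ⟨.inr (.inl ⟨e, hE he⟩), he, h⟩
    · by_cases hi : i.1 ∈ E
      · have h3 := hN0 _ (hptmem _ hi)
        rcases h3.1 with h | ⟨e, he, h⟩
        · exact ⟨.inl ⟨_, h⟩, hi, h3.2.1⟩
        · exfalso
          have h4 := h3.2.2
          rw [h] at h4
          rcases h4 with ⟨h5, h6⟩ | ⟨h5, h6⟩
          · have h5 : τ i.1 = τ e := h5
            apply h6
            show c (τ i.1) = c (τ e)
            rw [h5]
          · have h5 : G.Adj (τ i.1) (τ e) := h5
            have h6 : c (τ i.1) = c (τ e) := h6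
            by_cases hie : i.1 = e
            · rw [hie] at h5; exact h5.ne rfl
            · exact hT.bich _ _ hie _ (hτ _ hi) _ (hτ _ he) h5 h6
      · have h3 : i.1 ∈ Kr := (hKrm _).2 ⟨i.2, hi, fun h => h1 (by rw [Subtype.ext h]),
          fun h => h2 (by rw [Subtype.ext h])⟩
        refine ⟨.inr (.inr (γ.symm ⟨i.1, h3⟩)), ?_⟩
        show (γ (γ.symm ⟨i.1, h3⟩) : ι) = i.1
        simp
    · exact ⟨.inr (.inl ⟨γ x, ((hKrm _).1 (γ x).2).1⟩), rfl⟩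
  have : Nonempty (HX T K q) := ⟨.inr (.inl u)⟩
  choose! N hN using hMtot
  refine ⟨N, fun a h1 h2 => ?_⟩
  have h3 := hN a h1 h2
  have h4 := hMu _ _ h3
  exact ⟨h4.1, h4.2, hMfun _ _ _ (hN _ h4.1 h4.2) (hMsymm _ _ h3), hMadj _ _ h3⟩

/-- the flat Tutte type structure -/
structure Flat (G : SimpleGraph V) {ι : Type} (T : ι → Set V) (c : V → Bool) (K : Finset ι) (e : ℕ)
    {L : Type u} (U : Set (V × Bool)) (cmp : V × Bool → L) (kc : ι → L) (O : Set L) : Prop where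
  sub : ∀ a ∈ U, ∀ i ∈ K, a.1 ∉ T i
  inj : ∀ i ∈ K, ∀ j ∈ K, kc i = kc j → i = j
  oa : ∀ a b, (∀ i ∈ K, a.1 ∉ T i) → (∀ i ∈ K, b.1 ∉ T i) → a ∉ U → b ∉ U → OA G a b → cmp a = cmp b
  port : ∀ i ∈ K, ∀ a, (∀ i ∈ K, a.1 ∉ T i) → a ∉ U → Port G T c i a → cmp a = kc i
  ne : ∀ C ∈ O, ∀ i ∈ K, C ≠ kc i
  odd : ∀ C ∈ O, Odd {a : V × Bool | (∀ i ∈ K, a.1 ∉ T i) ∧ a ∉ U ∧ cmp a = C}.ncard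
  card : U.ncard ≤ O.ncard + e

theorem flat_exists [Finite V] [Nonempty V] {G : SimpleGraph V} {ι : Type} [DecidableEq ι] {T : ι → Set V}
    {c : V → Bool} (hT : Trees G T c) {K0 E0 K : Finset ι} (hE0 : E0 ⊆ K0)
    (hp : Pack G T c K0 E0) (hK : K ⊆ K0 \ E0) (hKc : E0.card + 2 ≤ K.card)
    (hmax : ∀ E ⊆ K, Pack G T c K E → E.card ≤ E0.card) :
    ∃ (L : Type u) (U : Set (V × Bool)) (cmp : V × Bool → L) (kc : ι → L) (O : Set L),
      Flat G T c K E0.card U cmp kc O := by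
  classical
  obtain ⟨q, hq⟩ := Nat.exists_eq_add_of_le hKc
  have hnear : ∀ u v : {i // i ∈ K}, u ≠ v → ∃ N : HX T K q → HX T K q,
      ∀ a, a ≠ .inr (.inl u) → a ≠ .inr (.inl v) →
      N a ≠ .inr (.inl u) ∧ N a ≠ .inr (.inl v) ∧ N (N a) = a ∧ (HG G T c K q).Adj a (N a) := by
    intro u v huv
    have huv' : u.1 ≠ v.1 := fun h => huv (Subtype.ext h)
    have h1 : E0.card ≤ (K \ {u.1, v.1}).card := by
      have h2 : ({u.1, v.1} : Finset ι) ⊆ K := by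
        intro x hx
        simp only [Finset.mem_insert, Finset.mem_singleton] at hx
        rcases hx with rfl | rfl
        · exact u.2
        · exact v.2
      have h3 := Finset.card_sdiff_add_card_eq_card h2
      rw [Finset.card_pair huv'] at h3
      omega
    obtain ⟨E', hE', hc'⟩ := Finset.exists_subset_card_eq h1
    have hE'K : E' ⊆ K := hE'.trans Finset.sdiff_subset
    apply near_of_pack hT hE'K (pack_move hT hE0 hp hK hE'K hc') u v huv
    · intro h; have := hE' h; simp at this
    · intro h; have := hE' h; simp at this
    · omega
  have : Fintype (HX T K q) := Fintype.ofFinite _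
  have h2 : 1 < K.card := by omega
  obtain ⟨k1, hk1, k2, hk2, hk12⟩ := Finset.one_lt_card.1 h2
  have hk12' : (⟨k1, hk1⟩ : {i // i ∈ K}) ≠ ⟨k2, hk2⟩ := fun h => hk12 (congrArg Subtype.val h)
  have hev : Even (Nat.card (HX T K q)) := by
    obtain ⟨N, hN⟩ := hnear ⟨k1, hk1⟩ ⟨k2, hk2⟩ hk12'
    rw [← Set.ncard_univ]
    apply near_even (u := (.inr (.inl ⟨k1, hk1⟩) : HX T K q)) (v := .inr (.inl ⟨k2, hk2⟩)) ?_
      (Set.mem_univ _) (Set.mem_univ _) N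
    · intro a _ h1 h2
      obtain ⟨h3, h4, h5, h6⟩ := hN a h1 h2
      exact ⟨Set.mem_univ _, h3, h4, h5, h6.ne.symm⟩
    · intro h
      exact hk12' (Sum.inl.inj (Sum.inr.inj h))
  rcases tutte_clean (HG G T c K q) hev with ⟨N, hN⟩ | ⟨U, L, comp, O, hcomp, hodd, hcard⟩
  · exfalso
    obtain ⟨E, hE, hEc, hpE⟩ := pack_of_hg hT K q N hN
    have := hmax E hE hpE
    omega
  have hdist : ∀ u v : {i // i ∈ K}, u ≠ v →
      (.inr (.inl u) : HX T K q) ∉ U ∧ (.inr (.inl v) : HX T K q) ∉ U ∧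
      comp (.inr (.inl u)) ≠ comp (.inr (.inl v)) := by
    intro u v huv
    obtain ⟨N, hN⟩ := hnear u v huv
    exact near_matching (fun h => huv (Sum.inl.inj (Sum.inr.inj h))) N hN hcomp hodd hcard
  have hKU : ∀ u : {i // i ∈ K}, (.inr (.inl u) : HX T K q) ∉ U := by
    intro u
    by_cases hu : u = ⟨k1, hk1⟩
    · rw [hu]; exact (hdist _ _ hk12').1
    · exact (hdist _ _ hu).1
  have hQU : ∀ x : Fin q, (.inr (.inr x) : HX T K q) ∈ U := by
    intro x
    by_contra hx
    have h1 := hcomp (.inr (.inr x)) (.inr (.inl ⟨k1, hk1⟩)) hx (hKU _) trivial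
    have h2 := hcomp (.inr (.inr x)) (.inr (.inl ⟨k2, hk2⟩)) hx (hKU _) trivial
    exact (hdist _ _ hk12').2.2 (h1.symm.trans h2)
  let l0 : L := comp (.inr (.inl ⟨k1, hk1⟩))
  let cmp : V × Bool → L := fun a => if h : ∀ i ∈ K, a.1 ∉ T i then comp (.inl ⟨a, h⟩) else l0
  let kc : ι → L := fun i => if h : i ∈ K then comp (.inr (.inl ⟨i, h⟩)) else l0
  have hcmp : ∀ a (h : ∀ i ∈ K, a.1 ∉ T i), cmp a = comp (.inl ⟨a, h⟩) := fun a h => dif_pos h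
  have hkc : ∀ i (h : i ∈ K), kc i = comp (.inr (.inl ⟨i, h⟩)) := fun i h => dif_pos h
  let U' : Set (V × Bool) := {a | ∃ h : ∀ i ∈ K, a.1 ∉ T i, (.inl ⟨a, h⟩ : HX T K q) ∈ U}
  have hU' : ∀ a (h : ∀ i ∈ K, a.1 ∉ T i), a ∉ U' → (.inl ⟨a, h⟩ : HX T K q) ∉ U :=
    fun a h ha h' => ha ⟨h, h'⟩
  have hOfin : O.Finite := by
    by_contra h
    rw [Set.Infinite.ncard h] at hcard
    omega
  refine ⟨L, U', cmp, kc, O \ (kc '' (K : Set ι)), ?_, ?_, ?_, ?_, ?_, ?_, ?_⟩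
  · rintro a ⟨h, -⟩
    exact h
  · intro i hi j hj hij
    by_contra hne
    rw [hkc i hi, hkc j hj] at hij
    exact (hdist ⟨i, hi⟩ ⟨j, hj⟩ (fun h => hne (congrArg Subtype.val h))).2.2 hij
  · intro a b ha hb ha' hb' hab
    rw [hcmp a ha, hcmp b hb]
    exact hcomp _ _ (hU' a ha ha') (hU' b hb hb') hab
  · intro i hi a ha ha' hpo
    rw [hcmp a ha, hkc i hi]
    exact hcomp _ _ (hU' a ha ha') (hKU _) hpo
  · rintro C ⟨-, hC⟩ i hi rfl
    exact hC ⟨i, hi, rfl⟩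
  · rintro C ⟨hC, hC'⟩
    have := hodd C hC
    convert this using 1
    have hinj : Function.Injective
      (fun z : {a : V × Bool // ∀ i ∈ K, a.1 ∉ T i} => (.inl z : HX T K q)) := Sum.inl_injective
    have e1 : {x : HX T K q | x ∉ U ∧ comp x = C} =
        (fun z : {a : V × Bool // ∀ i ∈ K, a.1 ∉ T i} => (.inl z : HX T K q)) ''
          {z | (.inl z : HX T K q) ∉ U ∧ comp (.inl z) = C} := by
      ext x
      constructor
      · rintro ⟨h1, h2⟩
        rcases x with a | i | y
        · exact ⟨a, ⟨h1, h2⟩, rfl⟩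
        · exact absurd ⟨i.1, i.2, by rw [hkc i.1 i.2, ← h2]⟩ hC'
        · exact absurd (hQU y) h1
      · rintro ⟨a, ⟨h1, h2⟩, rfl⟩
        exact ⟨h1, h2⟩
    have e2 : {a : V × Bool | (∀ i ∈ K, a.1 ∉ T i) ∧ a ∉ U' ∧ cmp a = C} =
        Subtype.val '' {z : {a : V × Bool // ∀ i ∈ K, a.1 ∉ T i} |
          (.inl z : HX T K q) ∉ U ∧ comp (.inl z) = C} := by
      ext a
      constructor
      · rintro ⟨h1, h2, h3⟩
        refine ⟨⟨a, h1⟩, ⟨hU' a h1 h2, ?_⟩, rfl⟩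
        rw [← hcmp a h1, h3]
      · rintro ⟨z, ⟨h1, h2⟩, rfl⟩
        refine ⟨z.2, ?_, ?_⟩
        · rintro ⟨h, h'⟩
          exact h1 h'
        · rw [hcmp z.1 z.2, ← h2]
    rw [e1, e2, Set.ncard_image_of_injective _ hinj,
      Set.ncard_image_of_injective _ Subtype.val_injective]
  · have h1 : U'.ncard + q ≤ U.ncard := by
      have hd : Disjoint ((fun z : {a : V × Bool // ∀ i ∈ K, a.1 ∉ T i} => (.inl z : HX T K q)) ''
          {z | z.1 ∈ U'}) (Set.range (fun x : Fin q => (.inr (.inr x) : HX T K q))) := by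
        rw [Set.disjoint_left]
        rintro _ ⟨z, hz, rfl⟩ ⟨x, hx⟩
        exact absurd hx (by simp)
      have e2 : U' = Subtype.val '' {z : {a : V × Bool // ∀ i ∈ K, a.1 ∉ T i} | z.1 ∈ U'} := by
        ext a
        constructor
        · intro ha
          exact ⟨⟨a, ha.1⟩, ha, rfl⟩
        · rintro ⟨z, hz, rfl⟩
          exact hz
      have e3 : (Set.range (fun x : Fin q => (.inr (.inr x) : HX T K q))).ncard = q := by
        rw [← Set.image_univ, Set.ncard_image_of_injective, Set.ncard_univ, Nat.card_fin]
        intro x y hxy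
        exact Sum.inr.inj (Sum.inr.inj hxy)
      rw [e2, Set.ncard_image_of_injective _ Subtype.val_injective]
      have e4 := Set.ncard_image_of_injective {z : {a : V × Bool // ∀ i ∈ K, a.1 ∉ T i} | z.1 ∈ U'}
        (Sum.inl_injective (β := {i // i ∈ K} ⊕ Fin q))
      rw [← e4]
      have e5 := Set.ncard_union_eq hd
      rw [e3] at e5
      refine e5.symm.le.trans ?_
      apply Set.ncard_le_ncard _ U.toFinite
      rintro x (⟨z, ⟨h, hz⟩, rfl⟩ | ⟨y, rfl⟩)
      · exact hz
      · exact hQU y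
    have h2 : O.ncard ≤ (O \ (kc '' (K : Set ι))).ncard + K.card := by
      have h3 : (kc '' (K : Set ι)).ncard ≤ K.card := by
        rw [← Set.ncard_coe_finset K]
        exact Set.ncard_image_le K.finite_toSet
      have h4 := Set.ncard_le_ncard_sdiff_add_ncard O (kc '' (K : Set ι)) (K.finite_toSet.image kc)
      omega
    omega

/-- structural decomposition of the part of the graph outside the trees in `K` -/
structure SD (G : SimpleGraph V) {ι : Type} (T : ι → Set V) (c : V → Bool) (K : Finset ι) (e : ℕ)
    (Y X P : Set V) (C : ι → Set V) (col : V → Bool) (att : V → Option V) : Prop where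
  card : Y.ncard ≤ 2 * e
  cover : ∀ v, (∀ i ∈ K, v ∉ T i) → v ∈ Y ∨ v ∈ X ∨ v ∈ P ∨ ∃ i ∈ K, v ∈ C i
  Yr : ∀ v ∈ Y, ∀ i ∈ K, v ∉ T i
  Xr : ∀ v ∈ X, ∀ i ∈ K, v ∉ T i
  Pr : ∀ v ∈ P, ∀ i ∈ K, v ∉ T i
  Cr : ∀ j ∈ K, ∀ v ∈ C j, ∀ i ∈ K, v ∉ T i
  XY : ∀ v ∈ X, v ∉ Y
  PY : ∀ v ∈ P, v ∉ Y
  CY : ∀ j ∈ K, ∀ v ∈ C j, v ∉ Y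
  XP : ∀ v ∈ X, v ∉ P
  XC : ∀ j ∈ K, ∀ v ∈ X, v ∉ C j
  PC : ∀ j ∈ K, ∀ v ∈ P, v ∉ C j
  CCd : ∀ i ∈ K, ∀ j ∈ K, ∀ v ∈ C i, v ∈ C j → i = j
  F1 : ∀ x ∈ X, ∀ y ∈ X, G.Adj x y → col x ≠ col y
  F2 : ∀ x ∈ X, ∀ i ∈ K, ∀ t ∈ T i, G.Adj x t → col x ≠ c t
  F3 : ∀ i ∈ K, ∀ v ∈ C i, ∀ w, G.Adj v w → w ∉ Y → w ∈ C i ∨ w ∈ T i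
  F4 : ∀ v ∈ P, ∀ w, G.Adj v w → w ∉ Y → (w ∈ P ∧ att w = att v) ∨ (w ∈ X ∧ att v = some w)

theorem sd_of_flat [Finite V] {G : SimpleGraph V} {ι : Type} {T : ι → Set V}
    {c : V → Bool} {K : Finset ι} {e : ℕ} {L : Type u} {U : Set (V × Bool)} {cmp : V × Bool → L}
    {kc : ι → L} {O : Set L} (hF : Flat G T c K e U cmp kc O) :
    ∃ Y X P C col att, SD G T c K e Y X P C col att := by
  classical
  let R : Set V := {v | ∀ i ∈ K, v ∉ T i}
  let col : V → Bool := fun v => if (v, true) ∈ U then false else true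
  let Sing : Set V := {v | v ∈ R ∧ (v, col v) ∉ U ∧ (v, !col v) ∈ U}
  let Full : Set V := {v | v ∈ R ∧ (v, true) ∉ U ∧ (v, false) ∉ U}
  let Pairs : Set V := {v | v ∈ R ∧ (v, true) ∈ U ∧ (v, false) ∈ U}
  let Gd : Set V := {v | v ∈ Sing ∧ (∀ i ∈ K, cmp (v, col v) ≠ kc i) ∧
    ∀ w ∈ Sing, cmp (w, col w) = cmp (v, col v) → w = v}
  let Bad : Set V := {v | v ∈ Sing ∧ v ∉ Gd}
  let C : ι → Set V := fun i => {v | v ∈ Full ∧ cmp (v, true) = kc i}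
  let P : Set V := {v | v ∈ Full ∧ ∀ i ∈ K, cmp (v, true) ≠ kc i}
  let att : V → Option V := fun v =>
    if h : ∃ x, x ∈ Gd ∧ cmp (x, col x) = cmp (v, true) then some h.choose else none
  have tri : ∀ v ∈ R, v ∈ Pairs ∨ v ∈ Sing ∨ v ∈ Full := by
    intro v hv
    by_cases h1 : (v, true) ∈ U <;> by_cases h2 : (v, false) ∈ U
    · exact Or.inl ⟨hv, h1, h2⟩
    · exact Or.inr (Or.inl ⟨hv, by simpa [col, h1] using h2, by simpa [col, h1] using h1⟩)
    · exact Or.inr (Or.inl ⟨hv, by simpa [col, h1] using h1, by simpa [col, h1] using h2⟩)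
    · exact Or.inr (Or.inr ⟨hv, h1, h2⟩)
  have hfull : ∀ v ∈ Full, ∀ b, (v, b) ∉ U := by
    rintro v ⟨-, h1, h2⟩ (_ | _)
    · exact h2
    · exact h1
  have hpairs : ∀ v ∈ Pairs, ∀ b, (v, b) ∈ U := by
    rintro v ⟨-, h1, h2⟩ (_ | _)
    · exact h2
    · exact h1
  have hFS : ∀ v ∈ Full, v ∉ Sing := fun v hv h => hfull v hv _ h.2.2
  have hFP : ∀ v ∈ Full, v ∉ Pairs := fun v hv h => hfull v hv _ h.2.1
  have hSP : ∀ v ∈ Sing, v ∉ Pairs := fun v hv h => hv.2.1 (hpairs v h _)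
  have hfc : ∀ v ∈ Full, ∀ b, cmp (v, b) = cmp (v, true) := by
    rintro v hv (_ | _)
    · exact hF.oa _ _ hv.1 hv.1 (hfull v hv _) (hfull v hv _) (Or.inl ⟨rfl, by simp⟩)
    · rfl
  -- counting
  have hU : 2 * Pairs.ncard + Sing.ncard ≤ U.ncard := by
    have i1 : ((fun v => ((v, true) : V × Bool)) '' Pairs).ncard = Pairs.ncard :=
      Set.ncard_image_of_injective _ (fun a b h => congrArg Prod.fst h)
    have i2 : ((fun v => ((v, false) : V × Bool)) '' Pairs).ncard = Pairs.ncard :=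
      Set.ncard_image_of_injective _ (fun a b h => congrArg Prod.fst h)
    have i3 : ((fun v => ((v, !col v) : V × Bool)) '' Sing).ncard = Sing.ncard :=
      Set.ncard_image_of_injective _ (fun a b h => congrArg Prod.fst h)
    have d1 : Disjoint ((fun v => ((v, true) : V × Bool)) '' Pairs)
        ((fun v => ((v, false) : V × Bool)) '' Pairs) := by
      rw [Set.disjoint_left]
      rintro _ ⟨a, ha, rfl⟩ ⟨b, hb, h⟩
      simp at h
    have d2 : Disjoint ((fun v => ((v, true) : V × Bool)) '' Pairs ∪
        (fun v => ((v, false) : V × Bool)) '' Pairs) ((fun v => ((v, !col v) : V × Bool)) '' Sing) := by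
      rw [Set.disjoint_left]
      rintro _ (⟨a, ha, rfl⟩ | ⟨a, ha, rfl⟩) ⟨b, hb, h⟩
      · have h' : b = a := congrArg Prod.fst h
        exact hSP b hb (h' ▸ ha)
      · have h' : b = a := congrArg Prod.fst h
        exact hSP b hb (h' ▸ ha)
    have h3 := Set.ncard_union_eq d2
    rw [Set.ncard_union_eq d1, i1, i2, i3] at h3
    have h4 : (((fun v => ((v, true) : V × Bool)) '' Pairs ∪
        (fun v => ((v, false) : V × Bool)) '' Pairs) ∪ ((fun v => ((v, !col v) : V × Bool)) '' Sing))
        ⊆ U := by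
      rintro _ ((⟨a, ha, rfl⟩ | ⟨a, ha, rfl⟩) | ⟨a, ha, rfl⟩)
      · exact hpairs a ha _
      · exact hpairs a ha _
      · exact ha.2.2
    have h5 := Set.ncard_le_ncard h4 U.toFinite
    omega
  have hsing : ∀ D ∈ O, ∃ v ∈ Sing, cmp (v, col v) = D := by
    intro D hD
    by_contra hcon
    push Not at hcon
    have h1 := hF.odd D hD
    rw [← Nat.not_even_iff_odd] at h1
    apply h1
    apply inv_even (fun a => (a.1, !a.2))
    rintro ⟨v, b⟩ ⟨hv, hb, hc⟩
    have hS : v ∉ Sing := by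
      intro hS
      by_cases hbc : b = col v
      · subst hbc; exact hcon v hS hc
      · have : b = !col v := by cases b <;> cases h : col v <;> simp_all
        subst this
        exact hb hS.2.2
    have hFv : v ∈ Full := by
      rcases tri v hv with h | h | h
      · exact absurd (hpairs v h b) hb
      · exact absurd h hS
      · exact h
    refine ⟨⟨hv, hfull v hFv _, ?_⟩, by simp, by simp⟩
    rw [hfc v hFv, ← hfc v hFv b, hc]
  let Og : Set L := {D ∈ O | ∃ v ∈ Gd, cmp (v, col v) = D}
  let Ob : Set L := {D ∈ O | ¬ ∃ v ∈ Gd, cmp (v, col v) = D}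
  have hOfin : O.Finite := by
    have : O ⊆ Set.range cmp := by
      intro D hD
      obtain ⟨v, -, h⟩ := hsing D hD
      exact ⟨_, h⟩
    exact (Set.finite_range cmp).subset this
  have hOsplit : O.ncard = Og.ncard + Ob.ncard := by
    rw [← Set.ncard_union_eq _ (hOfin.subset fun D h => h.1) (hOfin.subset fun D h => h.1)]
    · congr 1
      ext D
      constructor
      · intro h
        by_cases h' : ∃ v ∈ Gd, cmp (v, col v) = D
        · exact Or.inl ⟨h, h'⟩
        · exact Or.inr ⟨h, h'⟩
      · rintro (h | h)
        · exact h.1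
        · exact h.1
    · rw [Set.disjoint_left]
      intro D h1 h2
      exact h2.2 h1.2
  have hOg : Og.ncard ≤ Gd.ncard := by
    have : Og ⊆ (fun v => cmp (v, col v)) '' Gd := by
      rintro D ⟨-, v, hv, h⟩
      exact ⟨v, hv, h⟩
    exact (Set.ncard_le_ncard this (Gd.toFinite.image _)).trans (Set.ncard_image_le Gd.toFinite)
  have hbad2 : ∀ D : Ob, ∃ v w, v ∈ Bad ∧ w ∈ Bad ∧ v ≠ w ∧ cmp (v, col v) = D.1 ∧
      cmp (w, col w) = D.1 := by
    rintro ⟨D, hD, hD'⟩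
    obtain ⟨v, hv, hvD⟩ := hsing D hD
    have hvG : v ∉ Gd := fun h => hD' ⟨v, h, hvD⟩
    have : ∃ w ∈ Sing, cmp (w, col w) = D ∧ w ≠ v := by
      by_contra hcon
      push Not at hcon
      exact hvG ⟨hv, fun i hi => by rw [hvD]; exact hF.ne D hD i hi,
        fun w hw h => hcon w hw (h.trans hvD)⟩
    obtain ⟨w, hw, hwD, hwv⟩ := this
    exact ⟨v, w, ⟨hv, hvG⟩, ⟨hw, fun h => hD' ⟨w, h, hwD⟩⟩, hwv.symm, hvD, hwD⟩
  choose s1 s2 hs1 hs2 hs12 hs1c hs2c using hbad2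
  have hOb : 2 * Ob.ncard ≤ Bad.ncard := by
    have hfin : Finite Ob := (hOfin.subset fun D h => h.1 : Ob.Finite)
    have j1 : Function.Injective s1 := by
      intro a b h
      apply Subtype.ext
      rw [← hs1c a, ← hs1c b, h]
    have j2 : Function.Injective s2 := by
      intro a b h
      apply Subtype.ext
      rw [← hs2c a, ← hs2c b, h]
    have c1 : (Set.range s1).ncard = Ob.ncard := by
      rw [← Set.image_univ, Set.ncard_image_of_injective _ j1, Set.ncard_univ]; rfl
    have c2 : (Set.range s2).ncard = Ob.ncard := by
      rw [← Set.image_univ, Set.ncard_image_of_injective _ j2, Set.ncard_univ]; rfl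
    have hd : Disjoint (Set.range s1) (Set.range s2) := by
      rw [Set.disjoint_left]
      rintro _ ⟨a, rfl⟩ ⟨b, hb⟩
      have : a = b := by
        apply Subtype.ext
        rw [← hs1c a, ← hs2c b, hb]
      subst this
      exact hs12 a hb.symm
    have h3 := Set.ncard_union_eq hd
    have h4 : Set.range s1 ∪ Set.range s2 ⊆ Bad := by
      rintro _ (⟨a, rfl⟩ | ⟨a, rfl⟩)
      · exact hs1 a
      · exact hs2 a
    have h5 := Set.ncard_le_ncard h4 Bad.toFinite
    omega
  have hSsplit : Sing.ncard = Gd.ncard + Bad.ncard := by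
    rw [← Set.ncard_union_eq]
    · congr 1
      ext v
      constructor
      · intro h
        by_cases h' : v ∈ Gd
        · exact Or.inl h'
        · exact Or.inr ⟨h, h'⟩
      · rintro (h | h)
        · exact h.1
        · exact h.1
    · rw [Set.disjoint_left]
      intro v h1 h2
      exact h2.2 h1
  have hcard := hF.card
  have hGF : ∀ v ∈ Gd, v ∉ Full := fun v h h' => hFS v h' h.1
  have hFY : ∀ v ∈ Full, v ∉ Pairs ∪ Bad := by
    rintro v hv (h | h)
    · exact hFP v hv h
    · exact hFS v hv h.1
  refine ⟨Pairs ∪ Bad, Gd, P, C, col, att, ?_, ?_, ?_, ?_, ?_, ?_, ?_, ?_, ?_, ?_, ?_, ?_, ?_, ?_, ?_, ?_, ?_⟩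
  · have := Set.ncard_union_le Pairs Bad
    omega
  · intro v hv
    rcases tri v hv with h | h | h
    · exact Or.inl (Or.inl h)
    · by_cases h' : v ∈ Gd
      · exact Or.inr (Or.inl h')
      · exact Or.inl (Or.inr ⟨h, h'⟩)
    · by_cases h' : ∃ i ∈ K, cmp (v, true) = kc i
      · obtain ⟨i, hi, h'⟩ := h'
        exact Or.inr (Or.inr (Or.inr ⟨i, hi, h, h'⟩))
      · push Not at h'
        exact Or.inr (Or.inr (Or.inl ⟨h, h'⟩))
  · rintro v (h | h)
    · exact h.1
    · exact h.1.1
  · exact fun v h => h.1.1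
  · exact fun v h => h.1.1
  · exact fun j _ v h => h.1.1
  · rintro v h (h' | h')
    · exact hSP v h.1 h'
    · exact h'.2 h
  · exact fun v h => hFY v h.1
  · exact fun j _ v h => hFY v h.1
  · exact fun v h h' => hGF v h h'.1
  · exact fun j _ v h h' => hGF v h h'.1
  · exact fun j hj v h h' => h.2 j hj h'.2
  · exact fun i hi j hj v h h' => hF.inj i hi j hj (h.2.symm.trans h'.2)
  · intro x hx y hy hxy hc
    have h1 := hF.oa (x, col x) (y, col y) hx.1.1 hy.1.1 hx.1.2.1 hy.1.2.1 (Or.inr ⟨hxy, hc⟩)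
    exact hxy.ne (hy.2.2 x hx.1 h1)
  · intro x hx i hi t ht hxt hc
    exact hx.2.1 i hi (hF.port i hi (x, col x) hx.1.1 hx.1.2.1 ⟨t, ht, hc.symm, hxt.symm⟩)
  · intro i hi v hv w hvw hwY
    by_cases hw : ∀ j ∈ K, w ∉ T j
    · left
      rcases tri w hw with h | h | h
      · exact absurd (Or.inl h) hwY
      · exfalso
        apply hwY
        refine Or.inr ⟨h, fun hg => hg.2.1 i hi ?_⟩
        rw [← hv.2, ← hfc v hv.1 (col w)]
        exact (hF.oa (v, col w) (w, col w) hv.1.1 hw (hfull v hv.1 _) h.2.1 (Or.inr ⟨hvw, rfl⟩)).symm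
      · refine ⟨h, ?_⟩
        rw [← hv.2]
        exact (hF.oa (v, true) (w, true) hv.1.1 hw (hfull v hv.1 _) (hfull w h _)
          (Or.inr ⟨hvw, rfl⟩)).symm
    · right
      push Not at hw
      obtain ⟨j, hj, hwj⟩ := hw
      have h1 := hF.port j hj (v, c w) hv.1.1 (hfull v hv.1 _) ⟨w, hwj, rfl, hvw.symm⟩
      rw [hfc v hv.1, hv.2] at h1
      rw [hF.inj i hi j hj h1]
      exact hwj
  · intro v hv w hvw hwY
    by_cases hw : ∀ j ∈ K, w ∉ T j
    · rcases tri w hw with h | h | h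
      · exact absurd (Or.inl h) hwY
      · right
        have hwG : w ∈ Gd := by
          by_contra hg
          exact hwY (Or.inr ⟨h, hg⟩)
        refine ⟨hwG, ?_⟩
        have h1 := hF.oa (v, col w) (w, col w) hv.1.1 hw (hfull v hv.1 _) h.2.1 (Or.inr ⟨hvw, rfl⟩)
        rw [hfc v hv.1] at h1
        have hex : ∃ x, x ∈ Gd ∧ cmp (x, col x) = cmp (v, true) := ⟨w, hwG, h1.symm⟩
        simp only [att]
        rw [dif_pos hex]
        congr 1
        exact hwG.2.2 _ hex.choose_spec.1.1 (hex.choose_spec.2.trans h1)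
      · left
        have h1 := hF.oa (v, true) (w, true) hv.1.1 hw (hfull v hv.1 _) (hfull w h _)
          (Or.inr ⟨hvw, rfl⟩)
        refine ⟨⟨h, fun i hi => ?_⟩, ?_⟩
        · rw [← h1]; exact hv.2 i hi
        · simp only [att]
          simp only [h1]
    · exfalso
      push Not at hw
      obtain ⟨j, hj, hwj⟩ := hw
      have h1 := hF.port j hj (v, c w) hv.1.1 (hfull v hv.1 _) ⟨w, hwj, rfl, hvw.symm⟩
      rw [hfc v hv.1] at h1
      exact hv.2 j hj h1

theorem extremal [Finite V] {G : SimpleGraph V} {ι : Type} [LinearOrder ι] {h : ℕ}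
    {T : ι → Set V} {c : V → Bool} (hT : Trees G T c) (hno : ¬ OddModel G h) (nn : ℕ → ℕ) :
    ∀ (j : ℕ) (K E : Finset ι), E ⊆ K → nn j ≤ K.card → 2 * (h * h) ≤ E.card + j → Pack G T c K E →
    ∃ (j' : ℕ) (K0 E0 : Finset ι), E0 ⊆ K0 ∧ Pack G T c K0 E0 ∧ E0.card < 2 * (h * h) ∧
      nn (j' + 1) ≤ K0.card ∧ ∀ K E : Finset ι, E ⊆ K → nn j' ≤ K.card → Pack G T c K E →
        E.card ≤ E0.card := by
  intro j
  induction j with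
  | zero =>
    intro K E hE _ hc hp
    exact absurd (oddModel_of_pack hT hE hp (by omega)) hno
  | succ j ih =>
    intro K E hE hn hc hp
    by_cases hex : ∃ K' E' : Finset ι, E' ⊆ K' ∧ nn j ≤ K'.card ∧ Pack G T c K' E' ∧ E.card < E'.card
    · obtain ⟨K', E', h1, h2, h3, h4⟩ := hex
      exact ih K' E' h1 h2 (by omega) h3
    · push Not at hex
      refine ⟨j, K, E, hE, hp, ?_, hn, hex⟩
      by_contra hcon
      exact hno (oddModel_of_pack hT hE hp (by omega))

theorem pick_two {ι : Type} [DecidableEq ι] (K1 : Finset ι) (n d : ℕ) (Ef : Finset ι → Finset ι)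
    (hE : ∀ K ⊆ K1, K.card = n → (Ef K).card ≤ d)
    (hc : (d + 1) * n + (d + 1) * d + n ≤ K1.card) :
    ∃ B B' : Finset ι, B ⊆ K1 ∧ B' ⊆ K1 ∧ B.card = n ∧ B'.card = n ∧ Disjoint B B' ∧
      Disjoint B (Ef B') ∧ Disjoint B' (Ef B) := by
  classical
  have h1 : Fintype.card (Fin (d + 1) × Fin n) ≤ Fintype.card K1 := by
    rw [Fintype.card_prod, Fintype.card_fin, Fintype.card_fin, Fintype.card_coe]
    omega
  obtain ⟨f⟩ := Function.Embedding.nonempty_of_card_le h1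
  let A : Fin (d + 1) → Finset ι := fun l => Finset.univ.image (fun x : Fin n => (f (l, x) : ι))
  have hA : ∀ l, A l ⊆ K1 := by
    intro l i hi
    obtain ⟨x, -, rfl⟩ := Finset.mem_image.1 hi
    exact (f (l, x)).2
  have hAc : ∀ l, (A l).card = n := by
    intro l
    rw [Finset.card_image_of_injective, Finset.card_univ, Fintype.card_fin]
    intro x y hxy
    have := f.injective (Subtype.ext hxy)
    simpa using this
  have hAd : ∀ l l' i, i ∈ A l → i ∈ A l' → l = l' := by
    intro l l' i h1 h2
    obtain ⟨x, -, rfl⟩ := Finset.mem_image.1 h1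
    obtain ⟨y, -, hy⟩ := Finset.mem_image.1 h2
    have := f.injective (Subtype.ext hy)
    simp only [Prod.mk.injEq] at this
    exact this.1.symm
  let Un : Finset ι := Finset.univ.biUnion (fun l : Fin (d + 1) => A l ∪ Ef (A l))
  have hUn : Un.card ≤ (d + 1) * (n + d) := by
    have h2 : Un.card ≤ (Finset.univ : Finset (Fin (d + 1))).card * (n + d) := by
      apply Finset.card_biUnion_le_card_mul
      intro l _
      have h3 := Finset.card_union_le (A l) (Ef (A l))
      have h4 := hE (A l) (hA l) (hAc l)
      have h5 := hAc l
      omega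
    simpa using h2
  have h6 : n ≤ (K1 \ Un).card := by
    have := Finset.le_card_sdiff Un K1
    have e : (d + 1) * (n + d) = (d + 1) * n + (d + 1) * d := by ring
    omega
  obtain ⟨B', hB', hB'c⟩ := Finset.exists_subset_card_eq h6
  have hB'K : B' ⊆ K1 := hB'.trans Finset.sdiff_subset
  have hB'U : ∀ i ∈ B', i ∉ Un := fun i hi => (Finset.mem_sdiff.1 (hB' hi)).2
  have hex : ∃ l, Disjoint (A l) (Ef B') := by
    by_contra hcon
    push Not at hcon
    have : ∀ l, ∃ i, i ∈ A l ∧ i ∈ Ef B' := by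
      intro l
      have := hcon l
      rw [Finset.not_disjoint_iff] at this
      exact this
    choose g hg hg' using this
    have hinj : Function.Injective (fun l => (⟨g l, hg' l⟩ : Ef B')) := by
      intro l l' hl
      have hl : g l = g l' := congrArg Subtype.val hl
      exact hAd l l' (g l) (hg l) (hl ▸ hg l')
    have h7 := Fintype.card_le_of_injective _ hinj
    rw [Fintype.card_fin, Fintype.card_coe] at h7
    have h8 := hE B' hB'K hB'c
    omega
  obtain ⟨l, hl⟩ := hex
  refine ⟨A l, B', hA l, hB'K, hAc l, hB'c, ?_, hl, ?_⟩
  · rw [Finset.disjoint_left]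
    intro i hi hi'
    exact hB'U i hi' (Finset.mem_biUnion.2 ⟨l, Finset.mem_univ _, Finset.mem_union_left _ hi⟩)
  · rw [Finset.disjoint_left]
    intro i hi hi'
    exact hB'U i hi (Finset.mem_biUnion.2 ⟨l, Finset.mem_univ _, Finset.mem_union_right _ hi'⟩)

theorem sd_claim0 {G : SimpleGraph V} {ι : Type} {T : ι → Set V} {c : V → Bool} (hT : Trees G T c)
    {K : Finset ι} {e : ℕ} {Y X P : Set V} {C : ι → Set V} {col : V → Bool} {att : V → Option V}
    (hS : SD G T c K e Y X P C col att) (hK : 1 < K.card) {i : ι} (hi : i ∉ K)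
    (hiY : ∀ v ∈ T i, v ∉ Y) (v : V) (hv : v ∈ T i) :
    (v ∈ X ∧ col v = c v) ∨ (v ∈ P ∧ ∃ x ∈ X, att v = some x ∧ col x = c x) := by
  classical
  obtain ⟨j, hj, j', hj', hjj⟩ := Finset.one_lt_card.1 hK
  have huniq : ∀ i j v, v ∈ T i → v ∈ T j → i = j := by
    intro i j v h1 h2
    by_contra hne
    exact Set.disjoint_left.1 (hT.dis i j hne) h1 h2
  have hR : ∀ v ∈ T i, ∀ k ∈ K, v ∉ T k := by
    intro v hv k hk h
    exact hi (huniq _ _ _ hv h ▸ hk)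
  have hnC : ∀ k ∈ K, ∀ v ∈ T i, v ∉ C k := by
    intro k hk v hv hvC
    have hall : ∀ w ∈ T i, w ∈ C k := by
      intro w hw
      have hr := (hT.cc i).2 v hv w hw
      clear hw
      induction hr with
      | refl => exact hvC
      | tail _ hl ih =>
        rcases hS.F3 k hk _ ih _ hl.2.2.1 (hiY _ hl.2.1) with h | h
        · exact h
        · exact absurd h (hR _ hl.2.1 k hk)
    obtain ⟨k', hk', hkk⟩ : ∃ k' ∈ K, k' ≠ k := by
      by_cases h : j = k
      · exact ⟨j', hj', fun h' => hjj (h.trans h'.symm)⟩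
      · exact ⟨j, hj, h⟩
    have hik' : i ≠ k' := fun h => hi (h ▸ hk')
    obtain ⟨x, hx, y, hy, hxy⟩ := hT.adj i k' hik'
    have hyY : y ∉ Y := fun h => hS.Yr y h k' hk' hy
    rcases hS.F3 k hk x (hall x hx) y hxy hyY with h | h
    · exact hS.Cr k hk y h k' hk' hy
    · exact hkk (huniq _ _ _ hy h)
  have hXP : ∀ v ∈ T i, v ∈ X ∨ v ∈ P := by
    intro v hv
    rcases hS.cover v (hR v hv) with h | h | h | ⟨k, hk, h⟩
    · exact absurd h (hiY v hv)
    · exact Or.inl h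
    · exact Or.inr h
    · exact absurd h (hnC k hk v hv)
  have hij : i ≠ j := fun h => hi (h ▸ hj)
  obtain ⟨v0, hv0, t, ht, hvt⟩ := hT.adj i j hij
  have htY : t ∉ Y := fun h => hS.Yr t h j hj ht
  have hv0X : v0 ∈ X := by
    rcases hXP v0 hv0 with h | h
    · exact h
    · rcases hS.F4 v0 h t hvt htY with h' | h'
      · exact absurd ht (hS.Pr t h'.1 j hj)
      · exact absurd ht (hS.Xr t h'.1 j hj)
  have hc0 : col v0 = c v0 := by
    have h1 := hS.F2 v0 hv0X j hj t ht hvt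
    have h2 := hT.bich i j hij v0 hv0 t ht hvt
    rw [bool_eq_not h1.symm, bool_eq_not h2.symm]
  have hr := (hT.cc i).2 v0 hv0 v hv
  clear hv
  induction hr with
  | refl => exact Or.inl ⟨hv0X, hc0⟩
  | @tail a b _ hl ih =>
    have hbY := hiY _ hl.2.1
    rcases ih with ⟨h1, h2⟩ | ⟨h1, x, hx, h2, h3⟩
    · rcases hXP _ hl.2.1 with h | h
      · left
        refine ⟨h, ?_⟩
        have h3 := hS.F1 _ h1 _ h hl.2.2.1
        rw [bool_eq_not h3, bool_eq_not hl.2.2.2, h2]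
      · right
        refine ⟨h, a, h1, ?_, h2⟩
        rcases hS.F4 b h a hl.2.2.1.symm (hiY _ hl.1) with h' | h'
        · exact absurd h'.1 (hS.XP a h1)
        · exact h'.2
    · rcases hS.F4 a h1 b hl.2.2.1 hbY with h' | h'
      · exact Or.inr ⟨h'.1, x, hx, h'.2.trans h2, h3⟩
      · left
        rw [h2] at h'
        have := Option.some_injective _ h'.2
        subst this
        exact ⟨hx, h3⟩

/-- vertices outside `Y ∪ Z` that reach a tree of `K` avoiding `Z` -/
def Kz (G : SimpleGraph V) {ι : Type} (T : ι → Set V) (K : Finset ι) (Y Z : Set V) : Set V :=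
  {v | ∃ i ∈ K, Disjoint (T i) Z ∧ ∃ t ∈ T i, Relation.ReflTransGen (CLink G (Y ∪ Z)ᶜ) v t}

/-- the highly connected part -/
def Bz (G : SimpleGraph V) {ι : Type} (T : ι → Set V) (K : Finset ι) (Y : Set V) : Set V :=
  {v | v ∈ Kz G T K Y ∅ ∧ ∀ z, z ≠ v → v ∈ Kz G T K Y {z}}

section kz
variable {G : SimpleGraph V} {ι : Type} {T : ι → Set V} {K : Finset ι} {Y : Set V}

theorem kz_not (hKY : ∀ i ∈ K, ∀ v ∈ T i, v ∉ Y) {Z : Set V} {v : V} (hv : v ∈ Kz G T K Y Z) :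
    v ∉ Y ∪ Z := by
  obtain ⟨i, hi, hd, t, ht, hr⟩ := hv
  rcases Relation.ReflTransGen.cases_head hr with rfl | ⟨w, hl, -⟩
  · rintro (h | h)
    · exact hKY i hi _ ht h
    · exact Set.disjoint_left.1 hd ht h
  · exact hl.1

theorem kz_adj (hKY : ∀ i ∈ K, ∀ v ∈ T i, v ∉ Y) {Z : Set V} {v w : V} (hv : v ∈ Kz G T K Y Z)
    (hvw : G.Adj w v) (hw : w ∉ Y ∪ Z) : w ∈ Kz G T K Y Z := by
  have h1 := kz_not hKY hv
  obtain ⟨i, hi, hd, t, ht, hr⟩ := hv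
  exact ⟨i, hi, hd, t, ht, Relation.ReflTransGen.head ⟨hw, h1, hvw⟩ hr⟩

theorem kz_tree {Z : Set V} {i : ι} (hi : i ∈ K) (hd : Disjoint (T i) Z) {v : V} (hv : v ∈ T i) :
    v ∈ Kz G T K Y Z := ⟨i, hi, hd, v, hv, Relation.ReflTransGen.refl⟩

theorem kz_closed {Z S : Set V} {v : V} (hv : v ∈ Kz G T K Y Z) (hvS : v ∈ S)
    (hS : ∀ a ∈ S, ∀ b, G.Adj a b → a ∉ Y ∪ Z → b ∉ Y ∪ Z → b ∈ S) :
    ∃ i ∈ K, Disjoint (T i) Z ∧ ∃ t ∈ T i, t ∈ S := by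
  obtain ⟨i, hi, hd, t, ht, hr⟩ := hv
  refine ⟨i, hi, hd, t, ht, ?_⟩
  clear ht
  induction hr with
  | refl => exact hvS
  | tail _ hl ih => exact hS _ ih _ hl.2.2 hl.1 hl.2.1

theorem kz_mono (hKY : ∀ i ∈ K, ∀ v ∈ T i, v ∉ Y) {Z : Set V} {z : V} (hz : z ∉ Kz G T K Y Z) :
    Kz G T K Y Z ⊆ Kz G T K Y {z} := by
  intro v hv
  obtain ⟨i, hi, hd, t, ht, hr⟩ := hv
  refine ⟨i, hi, ?_, t, ht, ?_⟩
  · rw [Set.disjoint_left]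
    rintro w hw rfl
    exact hz (kz_tree hi hd hw)
  · have htK : t ∈ Kz G T K Y Z := kz_tree hi hd ht
    clear ht
    induction hr using Relation.ReflTransGen.head_induction_on with
    | refl => exact Relation.ReflTransGen.refl
    | @head a b hl hbt ih =>
      refine Relation.ReflTransGen.head ?_ ih
      have hbK : b ∈ Kz G T K Y Z := by
        clear ih hl
        have hnt := kz_not hKY htK
        induction hbt using Relation.ReflTransGen.head_induction_on with
        | refl => exact htK
        | head hl' _ ih' => exact kz_adj hKY ih' hl'.2.2 hl'.1
      have haK : a ∈ Kz G T K Y Z := kz_adj hKY hbK hl.2.2 hl.1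
      refine ⟨?_, ?_, hl.2.2⟩
      · rintro (h | h)
        · exact hl.1 (Or.inl h)
        · exact hz (h ▸ haK)
      · rintro (h | h)
        · exact hl.2.1 (Or.inl h)
        · exact hz (h ▸ hbK)

theorem bz_piece [Finite V] (hKY : ∀ i ∈ K, ∀ v ∈ T i, v ∉ Y)
    {c : V → Bool} (hT : Trees G T c) (hK : 1 < K.card) {v : V} (hvB : v ∉ Bz G T K Y) :
    ∃ Z : Set V, (Z = ∅ ∨ ∃ z, Z = {z}) ∧ Z ⊆ Bz G T K Y ∧ v ∉ Z ∪ Kz G T K Y Z := by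
  classical
  by_cases h0 : v ∈ Kz G T K Y ∅
  swap
  · exact ⟨∅, Or.inl rfl, by simp, by simpa using h0⟩
  have hex : ∃ z, z ≠ v ∧ v ∉ Kz G T K Y {z} := by
    by_contra hcon
    push Not at hcon
    exact hvB ⟨h0, hcon⟩
  have hex' : ∃ n, ∃ z, z ≠ v ∧ v ∉ Kz G T K Y {z} ∧ (Kz G T K Y {z}).ncard = n := by
    obtain ⟨z, h1, h2⟩ := hex
    exact ⟨_, z, h1, h2, rfl⟩
  obtain ⟨z, hzv, hvz, hzn⟩ := Nat.find_spec hex'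
  have hmin : ∀ z', z' ≠ v → v ∉ Kz G T K Y {z'} → (Kz G T K Y {z}).ncard ≤ (Kz G T K Y {z'}).ncard := by
    intro z' h1 h2
    rw [hzn]
    exact Nat.find_min' hex' ⟨z', h1, h2, rfl⟩
  by_cases hzB : z ∈ Bz G T K Y
  · refine ⟨{z}, Or.inr ⟨z, rfl⟩, by simpa using hzB, ?_⟩
    rintro (h | h)
    · exact hzv h.symm
    · exact hvz h
  exfalso
  by_cases hz0 : z ∈ Kz G T K Y ∅
  swap
  · exact hvz (kz_mono hKY hz0 h0)
  have : ∃ z', z' ≠ z ∧ z ∉ Kz G T K Y {z'} := by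
    by_contra hcon
    push Not at hcon
    exact hzB ⟨hz0, hcon⟩
  obtain ⟨z', hz', hzz'⟩ := this
  have hsub : Kz G T K Y {z'} ⊆ Kz G T K Y {z} := kz_mono hKY hzz'
  have heq : Kz G T K Y {z'} = Kz G T K Y {z} := by
    by_cases hz'v : z' = v
    · subst hz'v
      exact hsub.antisymm (kz_mono hKY hvz)
    · exact Set.eq_of_subset_of_ncard_le hsub (hmin z' hz'v (fun h => hvz (hsub h))) (Set.toFinite _)
  have hclosed : ∀ a ∈ (Kz G T K Y {z})ᶜ, ∀ b, G.Adj a b → a ∉ Y ∪ ∅ → b ∉ Y ∪ ∅ →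
      b ∈ (Kz G T K Y {z})ᶜ := by
    intro a ha b hab haY hbY hb
    apply ha
    by_cases haz : a = z
    · rw [← heq] at hb ⊢
      refine kz_adj hKY hb hab ?_
      rintro (h | h)
      · exact haY (Or.inl h)
      · exact hz' (h.symm.trans haz)
    · refine kz_adj hKY hb hab ?_
      rintro (h | h)
      · exact haY (Or.inl h)
      · exact haz h
  obtain ⟨i, hi, -, t, ht, htS⟩ := kz_closed (S := (Kz G T K Y {z})ᶜ) h0 hvz hclosed
  by_cases hzi : z ∈ T i
  · have hall : ∀ w ∈ T i, w ∈ (Kz G T K Y {z})ᶜ := by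
      intro w hw
      have hr := (hT.cc i).2 t ht w hw
      clear hw
      induction hr with
      | refl => exact htS
      | tail _ hl ih =>
        exact hclosed _ ih _ hl.2.2.1 (by simpa using hKY i hi _ hl.1) (by simpa using hKY i hi _ hl.2.1)
    obtain ⟨j, hj, hji⟩ : ∃ j ∈ K, i ≠ j := by
      obtain ⟨j, hj, j', hj', hjj⟩ := Finset.one_lt_card.1 hK
      by_cases h : i = j
      · exact ⟨j', hj', fun h' => hjj (h.symm.trans h')⟩
      · exact ⟨j, hj, h⟩
    obtain ⟨x, hx, y, hy, hxy⟩ := hT.adj i j hji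
    have hyS := hclosed x (hall x hx) y hxy (by simpa using hKY i hi _ hx) (by simpa using hKY j hj _ hy)
    refine hyS (kz_tree hj ?_ hy)
    have := Set.disjoint_left.1 (hT.dis i j hji) hzi
    simpa using this
  · exact htS (kz_tree hi (by simpa using hzi) ht)

theorem bz_not_P {c : V → Bool} (hT : Trees G T c) (hKY : ∀ i ∈ K, ∀ v ∈ T i, v ∉ Y)
    {K' : Finset ι} {e : ℕ} {Y' X P : Set V} {C : ι → Set V} {col : V → Bool} {att : V → Option V}
    (hS : SD G T c K' e Y' X P C col att) (hY' : Y' ⊆ Y) (hK' : K'.Nonempty)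
    {v : V} (hv : v ∈ Bz G T K Y) : v ∉ P := by
  classical
  intro hvP
  have huniq : ∀ i j v, v ∈ T i → v ∈ T j → i = j := by
    intro i j v h1 h2
    by_contra hne
    exact Set.disjoint_left.1 (hT.dis i j hne) h1 h2
  obtain ⟨Z, hvZ, hZ⟩ : ∃ Z : Set V, v ∈ Kz G T K Y Z ∧ ∀ x ∈ X, att v = some x → x ∈ Z := by
    by_cases hx : ∃ x ∈ X, att v = some x
    · obtain ⟨x, hxX, hx⟩ := hx
      refine ⟨{x}, hv.2 x ?_, ?_⟩
      · rintro rfl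
        exact hS.XP x hxX hvP
      · intro y _ hy
        rw [hx] at hy
        exact (Option.some_injective _ hy).symm
    · refine ⟨∅, hv.1, ?_⟩
      intro x hxX h
      exact absurd ⟨x, hxX, h⟩ hx
  have hclosed : ∀ a ∈ {w | w ∈ P ∧ att w = att v}, ∀ b, G.Adj a b → b ∉ Y ∪ Z →
      b ∈ {w | w ∈ P ∧ att w = att v} := by
    rintro a ⟨ha, hav⟩ b hab hb
    rcases hS.F4 a ha b hab (fun h => hb (Or.inl (hY' h))) with h | h
    · exact ⟨h.1, h.2.trans hav⟩
    · exact absurd (Or.inr (hZ b h.1 (hav ▸ h.2))) hb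
  obtain ⟨i, hi, hd, t, ht, htS⟩ := kz_closed (S := {w | w ∈ P ∧ att w = att v}) hvZ ⟨hvP, rfl⟩
    (fun a ha b hab _ hb => hclosed a ha b hab hb)
  have hall : ∀ w ∈ T i, w ∈ P := by
    intro w hw
    have hr := (hT.cc i).2 t ht w hw
    have : w ∈ {w | w ∈ P ∧ att w = att v} := by
      clear hw
      induction hr with
      | refl => exact htS
      | tail _ hl ih =>
        refine hclosed _ ih _ hl.2.2.1 ?_
        rintro (h | h)
        · exact hKY i hi _ hl.2.1 h
        · exact Set.disjoint_left.1 hd hl.2.1 h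
    exact this.1
  obtain ⟨j, hj⟩ := hK'
  by_cases hij : i = j
  · subst hij
    exact hS.Pr t (hall t ht) i hj ht
  · obtain ⟨x, hx, y, hy, hxy⟩ := hT.adj i j hij
    have hyY : y ∉ Y' := fun h => hS.Yr y h j hj hy
    rcases hS.F4 x (hall x hx) y hxy hyY with h | h
    · exact hS.Pr y h.1 j hj hy
    · exact hS.Xr y h.1 j hj hy

theorem bz_claim1 {c : V → Bool} (hT : Trees G T c) (hKY : ∀ i ∈ K, ∀ v ∈ T i, v ∉ Y)
    {K' : Finset ι} {e e' : ℕ} {Y' X P : Set V} {C : ι → Set V} {col : V → Bool} {att : V → Option V}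
    (hS : SD G T c K' e Y' X P C col att) (hY' : Y' ⊆ Y) (hK' : 1 < K'.card) (hKK : K' ⊆ K)
    {YA XA PA : Set V} {CA : ι → Set V} {colA : V → Bool} {attA : V → Option V}
    (hA : SD G T c K e' YA XA PA CA colA attA) (hYA : YA ⊆ Y)
    {i : ι} (hiK : i ∈ K) (hi : i ∉ K') {v : V} (hv : v ∈ Bz G T K Y) :
    (v ∈ T i → v ∈ X ∧ col v = c v) ∧ (v ∈ CA i → v ∈ X) := by
  have huniq : ∀ i j v, v ∈ T i → v ∈ T j → i = j := by
    intro i j v h1 h2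
    by_contra hne
    exact Set.disjoint_left.1 (hT.dis i j hne) h1 h2
  have hvP : v ∉ P := bz_not_P hT hKY hS hY' (Finset.card_pos.1 (by omega)) hv
  have h0 := sd_claim0 hT hS hK' hi (fun v hv h => hKY i hiK v hv (hY' h))
  constructor
  · intro hvT
    rcases h0 v hvT with h | h
    · exact h
    · exact absurd h.1 hvP
  · intro hvC
    have hvY : v ∉ Y := fun h => kz_not hKY hv.1 (Or.inl h)
    rcases hS.cover v (fun k hk => hA.Cr i hiK v hvC k (hKK hk)) with h | h | h | ⟨j, hj, h⟩
    · exact absurd (hY' h) hvY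
    · exact h
    · exact absurd h hvP
    · exfalso
      obtain ⟨k, hk, -, t, ht, htS⟩ := kz_closed (S := CA i ∩ C j) hv.1 ⟨hvC, h⟩ (by
        rintro a ⟨ha, ha'⟩ b hab _ hb
        have hbY : b ∉ Y := fun h => hb (Or.inl h)
        have h2 := hS.F3 j hj a ha' b hab (fun h => hbY (hY' h))
        have h1 := hA.F3 i hiK a ha b hab (fun h => hbY (hYA h))
        rcases h1 with h1 | h1 <;> rcases h2 with h2 | h2
        · exact ⟨h1, h2⟩
        · exact absurd h2 (hA.Cr i hiK b h1 j (hKK hj))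
        · rcases h0 b h1 with h3 | h3
          · exact absurd h2 (hS.XC j hj b h3.1)
          · exact absurd h2 (hS.PC j hj b h3.1)
        · exact absurd (huniq _ _ _ h1 h2 ▸ hj) hi)
      exact hA.Cr i hiK t htS.1 k hk ht
end kz

theorem bz_bip {G : SimpleGraph V} {ι : Type} {T : ι → Set V} {c : V → Bool} (hT : Trees G T c)
    {KA KB KB' : Finset ι} {Y : Set V} (hKY : ∀ i ∈ KA, ∀ v ∈ T i, v ∉ Y) {e : ℕ}
    {YA XA PA : Set V} {CA : ι → Set V} {colA : V → Bool} {attA : V → Option V}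
    (hA : SD G T c KA e YA XA PA CA colA attA) (hYA : YA ⊆ Y)
    {YB XB PB : Set V} {CB : ι → Set V} {colB : V → Bool} {attB : V → Option V}
    (hB : SD G T c KB e YB XB PB CB colB attB) (hYB : YB ⊆ Y)
    {YB' XB' PB' : Set V} {CB' : ι → Set V} {colB' : V → Bool} {attB' : V → Option V}
    (hB' : SD G T c KB' e YB' XB' PB' CB' colB' attB') (hYB' : YB' ⊆ Y)
    (h1B : 1 < KB.card) (h1B' : 1 < KB'.card) (hBA : KB ⊆ KA) (hBA' : KB' ⊆ KA)
    (hBB : Disjoint KB KB') :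
    ∃ κ : V → Bool, ∀ v ∈ Bz G T KA Y, ∀ w ∈ Bz G T KA Y, G.Adj v w → κ v ≠ κ w := by
  classical
  have huniq : ∀ i j v, v ∈ T i → v ∈ T j → i = j := by
    intro i j v h1 h2
    by_contra hne
    exact Set.disjoint_left.1 (hT.dis i j hne) h1 h2
  -- for every index a two-sided choice
  have hch : ∀ i ∈ KA, ∃ (X : Set V) (col : V → Bool),
      (∀ x ∈ X, ∀ y ∈ X, G.Adj x y → col x ≠ col y) ∧
      ∀ v ∈ Bz G T KA Y, (v ∈ T i → v ∈ X ∧ col v = c v) ∧ (v ∈ CA i → v ∈ X) := by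
    intro i hi
    by_cases hiB : i ∈ KB
    · exact ⟨XB', colB', hB'.F1, fun v hv =>
        bz_claim1 hT hKY hB' hYB' h1B' hBA' hA hYA hi (Finset.disjoint_left.1 hBB hiB) hv⟩
    · exact ⟨XB, colB, hB.F1, fun v hv => bz_claim1 hT hKY hB hYB h1B hBA hA hYA hi hiB hv⟩
  have : Nonempty (Set V) := ⟨∅⟩
  choose! X col hX hXc using hch
  have huniq2 : ∀ i ∈ KA, ∀ j ∈ KA, ∀ v, (v ∈ T i ∨ v ∈ CA i) → (v ∈ T j ∨ v ∈ CA j) → i = j := by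
    rintro i hi j hj v (h1 | h1) (h2 | h2)
    · exact huniq _ _ _ h1 h2
    · exact absurd h1 (hA.Cr j hj v h2 i hi)
    · exact absurd h2 (hA.Cr i hi v h1 j hj)
    · exact hA.CCd i hi j hj v h1 h2
  let κ : V → Bool := fun v => if h : ∃ i, i ∈ KA ∧ (v ∈ T i ∨ v ∈ CA i) then col h.choose v else colA v
  have hκ1 : ∀ v i, i ∈ KA → (v ∈ T i ∨ v ∈ CA i) → κ v = col i v := by
    intro v i hi hv
    have hex : ∃ i, i ∈ KA ∧ (v ∈ T i ∨ v ∈ CA i) := ⟨i, hi, hv⟩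
    simp only [κ]
    rw [dif_pos hex, huniq2 _ hex.choose_spec.1 i hi v hex.choose_spec.2 hv]
  have hκ2 : ∀ v, (¬ ∃ i, i ∈ KA ∧ (v ∈ T i ∨ v ∈ CA i)) → κ v = colA v := fun v h => dif_neg h
  have hXA : ∀ v ∈ Bz G T KA Y, (¬ ∃ i, i ∈ KA ∧ (v ∈ T i ∨ v ∈ CA i)) → v ∈ XA := by
    intro v hv hcon
    push Not at hcon
    rcases hA.cover v (fun i hi => (hcon i hi).1) with h | h | h | ⟨i, hi, h⟩
    · exact absurd (Or.inl (hYA h)) (kz_not hKY hv.1)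
    · exact h
    · refine absurd h (bz_not_P hT hKY hA hYA ?_ hv)
      exact (Finset.card_pos.1 (by omega : 0 < KB.card)).mono hBA
    · exact absurd h (hcon i hi).2
  have hnY : ∀ v ∈ Bz G T KA Y, v ∉ YA := fun v hv h => kz_not hKY hv.1 (Or.inl (hYA h))
  have hmix : ∀ v ∈ Bz G T KA Y, ∀ w ∈ Bz G T KA Y, G.Adj v w →
      (∃ i, i ∈ KA ∧ (v ∈ T i ∨ v ∈ CA i)) → (¬ ∃ i, i ∈ KA ∧ (w ∈ T i ∨ w ∈ CA i)) → κ v ≠ κ w := by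
    rintro v hv w hw hvw ⟨i, hi, hvi⟩ hwn
    rw [hκ1 v i hi hvi, hκ2 w hwn]
    rcases hvi with hvi | hvi
    · rw [((hXc i hi v hv).1 hvi).2]
      exact (hA.F2 w (hXA w hw hwn) i hi v hvi hvw.symm).symm
    · rcases hA.F3 i hi v hvi w hvw (hnY w hw) with h | h
      · exact absurd ⟨i, hi, Or.inr h⟩ hwn
      · exact absurd ⟨i, hi, Or.inl h⟩ hwn
  refine ⟨κ, ?_⟩
  intro v hv w hw hvw
  by_cases hvn : ∃ i, i ∈ KA ∧ (v ∈ T i ∨ v ∈ CA i) <;>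
    by_cases hwn : ∃ i, i ∈ KA ∧ (w ∈ T i ∨ w ∈ CA i)
  · obtain ⟨i, hi, hvi⟩ := hvn
    obtain ⟨j, hj, hwj⟩ := hwn
    by_cases hij : i = j
    · subst hij
      rw [hκ1 v i hi hvi, hκ1 w i hi hwj]
      have hvX : v ∈ X i := by
        rcases hvi with h | h
        · exact ((hXc i hi v hv).1 h).1
        · exact (hXc i hi v hv).2 h
      have hwX : w ∈ X i := by
        rcases hwj with h | h
        · exact ((hXc i hi w hw).1 h).1
        · exact (hXc i hi w hw).2 h
      exact hX i hi v hvX w hwX hvw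
    · rcases hvi with hvi' | hvi'
      · rcases hwj with hwj' | hwj'
        · rw [hκ1 v i hi (Or.inl hvi'), hκ1 w j hj (Or.inl hwj'), ((hXc i hi v hv).1 hvi').2,
            ((hXc j hj w hw).1 hwj').2]
          exact hT.bich i j hij v hvi' w hwj' hvw
        · exact absurd (huniq2 i hi j hj v (Or.inl hvi')
            (hA.F3 j hj w hwj' v hvw.symm (hnY v hv)).symm) hij
      · exact absurd (huniq2 i hi j hj w (hA.F3 i hi v hvi' w hvw (hnY w hw)).symm hwj) hij
  · exact hmix v hv w hw hvw hvn hwn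
  · exact (hmix w hw v hv hvw.symm hwn hvn).symm
  · rw [hκ2 v hvn, hκ2 w hwn]
    exact hA.F1 v (hXA v hv hvn) w (hXA w hw hwn) hvw

/-- sizes -/
def nnf (h s : ℕ) : ℕ → ℕ
  | 0 => 2 * (h * h) + 10 + s
  | j + 1 => 2 * (h * h) + ((4 * (h * h) + 1) * nnf h s j + (4 * (h * h) + 1) * (4 * (h * h)) + nnf h s j)

theorem nnf_ge (h s j : ℕ) : 2 * (h * h) + 10 + s ≤ nnf h s j := by
  induction j with
  | zero => exact le_refl _
  | succ j ih =>
    simp only [nnf]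
    omega

theorem sd_exists [Finite V] {G : SimpleGraph V} {ι : Type} [DecidableEq ι] {T : ι → Set V}
    {c : V → Bool} (hT : Trees G T c) {K0 E0 K : Finset ι} (hE0 : E0 ⊆ K0)
    (hp : Pack G T c K0 E0) (hK : K ⊆ K0 \ E0) (hKc : E0.card + 2 ≤ K.card)
    (hmax : ∀ E ⊆ K, Pack G T c K E → E.card ≤ E0.card) :
    ∃ Y X P C col att, SD G T c K E0.card Y X P C col att := by
  have hne : K.Nonempty := Finset.card_pos.1 (by omega)
  have : Nonempty V := ⟨(hT.cc hne.choose).1.choose⟩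
  obtain ⟨L, U, cmp, kc, O, hF⟩ := flat_exists hT hE0 hp hK hKc hmax
  exact sd_of_flat hF

theorem struct_thm (h s : ℕ) : ∃ t : ℕ, ∀ (V : Type u) [Finite V] (G : SimpleGraph V)
    (T : Fin t → Set V) (c : V → Bool), Trees G T c → ¬ OddModel G h →
    ∃ (Y B0 : Set V) (κ : V → Bool), Y.ncard ≤ 12 * (h * h) ∧ (∀ b ∈ B0, b ∉ Y) ∧
      (∀ v ∈ B0, ∀ w ∈ B0, G.Adj v w → κ v ≠ κ w) ∧
      ∀ v, v ∉ Y → v ∉ B0 → ∃ Z A Big : Set V, (Z = ∅ ∨ ∃ z, Z = {z}) ∧ Z ⊆ B0 ∧ v ∈ A ∧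
        (∀ a ∈ A, a ∉ Y ∧ a ∉ B0) ∧ (∀ a ∈ A, ∀ w, G.Adj a w → w ∈ A ∨ w ∈ Y ∨ w ∈ Z) ∧
        (∀ b ∈ Big, ∃ i, b ∈ T i) ∧ s < Big.ncard ∧ ∀ b ∈ Big, b ∉ A ∧ b ∉ Y ∧ b ∉ Z := by
  classical
  refine ⟨nnf h s (2 * (h * h)), ?_⟩
  intro V _ G T c hT hno
  have htpos : 0 < nnf h s (2 * (h * h)) := by
    have := nnf_ge h s (2 * (h * h)); omega
  have hV : Nonempty V := ⟨(hT.cc ⟨0, htpos⟩).1.choose⟩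
  have huniq : ∀ i j v, v ∈ T i → v ∈ T j → i = j := by
    intro i j v h1 h2
    by_contra hne
    exact Set.disjoint_left.1 (hT.dis i j hne) h1 h2
  obtain ⟨j, K0, E0, hE0, hp, hE0c, hK0c, hmax⟩ := extremal hT hno (nnf h s) (2 * (h * h))
    Finset.univ ∅ (by simp) (by simp) (by simp) (pack_empty G T c _)
  have hnj := nnf_ge h s j
  let K1 := K0 \ E0
  have hK1 : (4 * (h * h) + 1) * nnf h s j + (4 * (h * h) + 1) * (4 * (h * h)) + nnf h s j ≤ K1.card := by
    have h1 := Finset.card_sdiff_add_card_eq_card hE0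
    simp only [nnf] at hK0c
    simp only [K1]
    omega
  have hsd : ∀ K, K ⊆ K1 → nnf h s j ≤ K.card → ∃ Y X P C col att, SD G T c K E0.card Y X P C col att := by
    intro K hK hKc
    exact sd_exists hT hE0 hp hK (by omega) (fun E hE hpE => hmax K E hE hKc hpE)
  have hsd' : ∀ K, ∃ Y : Set V, K ⊆ K1 → nnf h s j ≤ K.card →
      ∃ X P C col att, SD G T c K E0.card Y X P C col att := by
    intro K
    by_cases hK : K ⊆ K1 ∧ nnf h s j ≤ K.card
    · obtain ⟨Y, hY⟩ := hsd K hK.1 hK.2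
      exact ⟨Y, fun _ _ => hY⟩
    · exact ⟨∅, fun h1 h2 => absurd ⟨h1, h2⟩ hK⟩
  choose YY hYY using hsd'
  let Ef : Finset (Fin (nnf h s (2 * (h * h)))) → Finset (Fin (nnf h s (2 * (h * h)))) := fun K =>
    Finset.univ.filter (fun i => ∃ v ∈ T i, v ∈ YY K)
  have hEf : ∀ K i, i ∈ Ef K ↔ ∃ v ∈ T i, v ∈ YY K := by
    intro K i
    simp [Ef]
  have hEfc : ∀ K ⊆ K1, K.card = nnf h s j → (Ef K).card ≤ 4 * (h * h) := by
    intro K hK hKc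
    obtain ⟨X, P, C, col, att, hS⟩ := hYY K hK hKc.ge
    have h1 : (Ef K).card ≤ (YY K).ncard := by
      rw [← Set.ncard_coe_finset]
      have : ∀ i, ∃ v, i ∈ Ef K → v ∈ T i ∧ v ∈ YY K := by
        intro i
        by_cases hi : i ∈ Ef K
        · obtain ⟨v, h1, h2⟩ := (hEf K i).1 hi
          exact ⟨v, fun _ => ⟨h1, h2⟩⟩
        · exact ⟨Classical.arbitrary V, fun h => absurd h hi⟩
      choose g hg using this
      apply Set.ncard_le_ncard_of_injOn g (fun i hi => (hg i hi).2) ?_ (Set.toFinite _)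
      intro i hi i' hi' hii
      exact huniq _ _ _ (hg i hi).1 (hii ▸ (hg i' hi').1)
    have h2 := hS.card
    omega
  obtain ⟨KB, KB', hBK, hBK', hBc, hBc', hBB, hd1, hd2⟩ := pick_two K1 (nnf h s j) (4 * (h * h)) Ef hEfc hK1
  obtain ⟨XB, PB, CB, colB, attB, hB⟩ := hYY KB hBK hBc.ge
  obtain ⟨XB', PB', CB', colB', attB', hB'⟩ := hYY KB' hBK' hBc'.ge
  let KA := K1 \ (Ef KB ∪ Ef KB')
  have hBA : KB ⊆ KA := by
    intro i hi
    refine Finset.mem_sdiff.2 ⟨hBK hi, fun h => ?_⟩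
    rcases Finset.mem_union.1 h with h | h
    · obtain ⟨v, h1, h2⟩ := (hEf _ _).1 h
      exact hB.Yr v h2 i hi h1
    · exact Finset.disjoint_left.1 hd1 hi h
  have hBA' : KB' ⊆ KA := by
    intro i hi
    refine Finset.mem_sdiff.2 ⟨hBK' hi, fun h => ?_⟩
    rcases Finset.mem_union.1 h with h | h
    · exact Finset.disjoint_left.1 hd2 hi h
    · obtain ⟨v, h1, h2⟩ := (hEf _ _).1 h
      exact hB'.Yr v h2 i hi h1
  have hKAc : nnf h s j ≤ KA.card := hBc ▸ Finset.card_le_card hBA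
  obtain ⟨XA, PA, CA, colA, attA, hA⟩ := hYY KA Finset.sdiff_subset hKAc
  let Y : Set V := YY KA ∪ YY KB ∪ YY KB'
  have hYA : YY KA ⊆ Y := fun v h => Or.inl (Or.inl h)
  have hYB : YY KB ⊆ Y := fun v h => Or.inl (Or.inr h)
  have hYB' : YY KB' ⊆ Y := fun v h => Or.inr h
  have hKY : ∀ i ∈ KA, ∀ v ∈ T i, v ∉ Y := by
    intro i hi v hv hvY
    have hi' := (Finset.mem_sdiff.1 hi).2
    rcases hvY with (h | h) | h
    · exact hA.Yr v h i hi hv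
    · exact hi' (Finset.mem_union_left _ ((hEf _ _).2 ⟨v, hv, h⟩))
    · exact hi' (Finset.mem_union_right _ ((hEf _ _).2 ⟨v, hv, h⟩))
  obtain ⟨κ, hκ⟩ := bz_bip hT hKY hA hYA hB hYB hB' hYB' (by omega) (by omega) hBA hBA' hBB
  have hbY : ∀ b ∈ Bz G T KA Y, b ∉ Y := fun b hb h => kz_not hKY hb.1 (Or.inl h)
  refine ⟨Y, Bz G T KA Y, κ, ?_, hbY, hκ, ?_⟩
  · have h1 := Set.ncard_union_le (YY KA ∪ YY KB) (YY KB')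
    have h2 := Set.ncard_union_le (YY KA) (YY KB)
    have h3 := hA.card
    have h4 := hB.card
    have h5 := hB'.card
    simp only [Y]
    omega
  · intro v hvY hvB
    obtain ⟨Z, hZ, hZB, hvZ⟩ := bz_piece hKY hT (by omega) hvB
    refine ⟨Z, {w | w ∉ Y ∧ w ∉ Z ∧ w ∉ Kz G T KA Y Z},
      {b | ∃ i ∈ KA, Disjoint (T i) Z ∧ b ∈ T i}, hZ, hZB, ?_, ?_, ?_, ?_, ?_, ?_⟩
    · exact ⟨hvY, fun h => hvZ (Or.inl h), fun h => hvZ (Or.inr h)⟩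
    · rintro a ⟨h1, h2, h3⟩
      refine ⟨h1, fun hb => h3 ?_⟩
      rcases hZ with rfl | ⟨z, rfl⟩
      · exact hb.1
      · exact hb.2 z (fun h => h2 h.symm)
    · rintro a ⟨h1, h2, h3⟩ w haw
      by_contra hcon
      push Not at hcon
      obtain ⟨c1, c2, c3⟩ := hcon
      have hw : w ∈ Kz G T KA Y Z := by
        by_contra h
        exact c1 ⟨c2, c3, h⟩
      refine h3 (kz_adj hKY hw haw ?_)
      rintro (h | h)
      · exact h1 h
      · exact h2 h
    · rintro b ⟨i, -, -, hb⟩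
      exact ⟨i, hb⟩
    · have hfin : ∃ i0, ∀ i ∈ KA, i ≠ i0 → Disjoint (T i) Z := by
        rcases hZ with rfl | ⟨z, rfl⟩
        · exact ⟨⟨0, htpos⟩, by simp⟩
        · by_cases hz : ∃ i0, z ∈ T i0
          · obtain ⟨i0, hi0⟩ := hz
            refine ⟨i0, fun i _ hii => ?_⟩
            rw [Set.disjoint_singleton_right]
            exact fun h => hii (huniq _ _ _ h hi0)
          · refine ⟨⟨0, htpos⟩, fun i _ _ => ?_⟩
            rw [Set.disjoint_singleton_right]
            exact fun h => hz ⟨i, h⟩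
      obtain ⟨i0, hi0⟩ := hfin
      have hne : ∀ i, (T i).Nonempty := fun i => (hT.cc i).1
      choose g hg using hne
      have h1 : ((KA.erase i0 : Finset _) : Set (Fin (nnf h s (2 * (h * h))))).ncard ≤
          {b | ∃ i ∈ KA, Disjoint (T i) Z ∧ b ∈ T i}.ncard := by
        apply Set.ncard_le_ncard_of_injOn g ?_ ?_ (Set.toFinite _)
        · intro i hi
          have hi := Finset.mem_erase.1 (Finset.mem_coe.1 hi)
          exact ⟨i, hi.2, hi0 i hi.2 hi.1, hg i⟩
        · intro i _ i' _ hii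
          exact huniq _ _ _ (hg i) (hii ▸ hg i')
      rw [Set.ncard_coe_finset] at h1
      have h2 := Finset.pred_card_le_card_erase (s := KA) (a := i0)
      omega
    · rintro b ⟨i, hi, hd, hb⟩
      exact ⟨fun h => h.2.2 (kz_tree hi hd hb), hKY i hi b hb, Set.disjoint_left.1 hd hb⟩

theorem enum_set [Finite V] (S : Set V) (m : ℕ) (hm : S.ncard ≤ m) (h0 : 0 < m) :
    ∃ p : V → Fin m, Set.InjOn p S := by
  classical
  have : Fintype V := Fintype.ofFinite V
  let F : Finset V := S.toFinset
  have hS : F.card ≤ m := by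
    rw [← Set.ncard_eq_toFinset_card']; exact hm
  let e := F.equivFin
  refine ⟨fun x => if hx : x ∈ F then ⟨(e ⟨x, hx⟩).1, lt_of_lt_of_le (e ⟨x, hx⟩).2 hS⟩
    else ⟨0, h0⟩, ?_⟩
  intro x hx y hy hxy
  have hx' : x ∈ F := by simpa [F] using hx
  have hy' : y ∈ F := by simpa [F] using hy
  simp only [hx', hy', dif_pos, Fin.mk.injEq] at hxy
  exact congrArg Subtype.val (e.injective (Fin.ext hxy))

theorem comp_inj [Finite V] (G : SimpleGraph V) (s : ℕ) (hs : 0 < s)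
    (h : ∀ v, {u | G.Reachable v u}.ncard ≤ s) :
    ∃ p : V → Fin s, ∀ u v, G.Reachable u v → p u = p v → u = v := by
  classical
  have key : ∀ C : G.ConnectedComponent, ∃ p : V → Fin s, Set.InjOn p C.supp := by
    intro C
    refine enum_set _ _ ?_ hs
    obtain ⟨v, rfl⟩ := C.exists_rep
    refine le_trans (le_of_eq ?_) (h v)
    congr 1
    ext u
    change G.connectedComponentMk u = G.connectedComponentMk v ↔ _
    simp only [ConnectedComponent.eq, Set.mem_ofPred_eq]
    exact ⟨fun h => h.symm, fun h => h.symm⟩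
  choose p hp using key
  refine ⟨fun v => p (G.connectedComponentMk v) v, ?_⟩
  intro u v huv h
  have hc : G.connectedComponentMk u = G.connectedComponentMk v :=
    ConnectedComponent.eq.2 huv
  simp only [hc] at h
  exact hp _ (by simpa using huv) (by simp) h

/-- bipartite hypothesis -/
def HBip (G : SimpleGraph V) (k : ℕ) : Prop :=
  ∀ B : Set V, (∃ κ : V → Bool, ∀ u ∈ B, ∀ v ∈ B, G.Adj u v → κ u ≠ κ v) →
    ∃ θ : V → Fin k, (∀ u ∈ B, ∀ v ∈ B, G.Adj u v → θ u ≠ θ v) ∧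
      ∀ v ∈ B, (∃ u ∈ B, G.Adj v u) → ∃ u ∈ B, G.Adj v u ∧
        ∀ u' ∈ B, G.Adj v u' → θ u' = θ u → u' = u

theorem final_coloring [Finite V] (G : SimpleGraph V) (k s y M N : ℕ) (D W Y B0 : Set V)
    (hN : W.ncard ≤ N) (hs : 0 < s) (hy0 : 0 < y) (hY : 2 * Y.ncard ≤ y)
    (hM : y + k + s + 1 + 2 * N ≤ M) (HB : HBip G k)
    (hYB : ∀ b ∈ B0, b ∉ Y)
    (hB : ∃ κ : V → Bool, ∀ u ∈ B0 ∩ D, ∀ v ∈ B0 ∩ D, G.Adj u v → κ u ≠ κ v)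
    (hP : ∀ v ∈ D, v ∉ Y → v ∉ B0 → ∃ Z A : Set V, Z.Subsingleton ∧ Z ⊆ B0 ∧ v ∈ A ∧
      (∀ a ∈ A, a ∉ Y ∧ a ∉ B0) ∧
      (∀ a ∈ A, a ∈ D → ∀ w ∈ D, G.Adj a w → w ∈ A ∨ w ∈ Y ∨ w ∈ Z) ∧ (A ∩ D).ncard ≤ s)
    (ψ f : V → ℕ) : ∃ φ, Good G M D W ψ f φ := by
  classical
  -- selection for Y
  have hg : ∃ g : V → V, ∀ v, (∃ u ∈ D, u ∉ W ∧ G.Adj v u) →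
      g v ∈ D ∧ g v ∉ W ∧ G.Adj v (g v) := by
    refine ⟨fun v => if h : ∃ u ∈ D, u ∉ W ∧ G.Adj v u then h.choose else v, ?_⟩
    intro v h
    simp only [h, dif_pos]
    exact h.choose_spec
  obtain ⟨g, hg⟩ := hg
  set Y' : Set V := Y ∪ g '' Y with hY'
  have hY'c : Y'.ncard ≤ y := by
    refine le_trans (Set.ncard_union_le _ _) ?_
    have := Set.ncard_image_le (f := g) (Set.toFinite Y)
    omega
  obtain ⟨py, hpy⟩ := enum_set Y' y hY'c hy0
  obtain ⟨θ, hθ1, hθ2⟩ := HB ((B0 ∩ D) \ W) (by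
    obtain ⟨κ, hκ⟩ := hB
    exact ⟨κ, fun u hu v hv => hκ u hu.1 v hv.1⟩)
  set Q : Set V := {v | v ∈ D ∧ v ∉ Y ∧ v ∉ B0} with hQ
  -- replace the data by Z ⊆ B0
  have hP2 : ∀ v ∈ Q, ∃ A : Set V, v ∈ A ∧ (∀ a ∈ A, a ∉ Y ∧ a ∉ B0) ∧
      (∀ a ∈ A, a ∈ D → ∀ w ∈ Q, G.Adj a w → w ∈ A) ∧ (A ∩ D).ncard ≤ s ∧
      (∀ a ∈ A, a ∈ D → ∀ a' ∈ A, a' ∈ D → ∀ z ∈ B0, z ∈ D → ∀ z' ∈ B0, z' ∈ D →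
        G.Adj a z → G.Adj a' z' → z = z') := by
    rintro v ⟨hvD, hvY, hvB⟩
    obtain ⟨Z, A, hZ, hZB, hvA, hA, hcl, hsz⟩ := hP v hvD hvY hvB
    refine ⟨A, hvA, hA, ?_, hsz, ?_⟩
    · intro a ha haD w hw haw
      rcases hcl a ha haD w hw.1 haw with h | h | h
      · exact h
      · exact absurd h hw.2.1
      · exact absurd (hZB h) hw.2.2
    · intro a ha haD a' ha' ha'D z hz hzD z' hz' hz'D h1 h2
      have e1 : z ∈ Z := by
        rcases hcl a ha haD z hzD h1 with h | h | h
        · exact absurd hz (hA _ h).2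
        · exact absurd h (hYB _ hz)
        · exact h
      have e2 : z' ∈ Z := by
        rcases hcl a' ha' ha'D z' hz'D h2 with h | h | h
        · exact absurd hz' (hA _ h).2
        · exact absurd h (hYB _ hz')
        · exact h
      exact hZ e1 e2
  have hreach : ∀ v u, (restr G Q).Reachable v u → u = v ∨ (v ∈ Q ∧ u ∈ Q ∧
      ∀ A : Set V, v ∈ A → (∀ a ∈ A, a ∈ D → ∀ w ∈ Q, G.Adj a w → w ∈ A) → u ∈ A) := by
    intro v u hr
    rw [reachable_iff_reflTransGen] at hr
    induction hr with
    | refl => exact Or.inl rfl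
    | @tail b c h1 h2 ih =>
      obtain ⟨hb, hc, hbc⟩ : b ∈ Q ∧ c ∈ Q ∧ G.Adj b c := h2
      right
      rcases ih with rfl | ⟨i1, i2, i3⟩
      · exact ⟨hb, hc, fun A hA hcl => hcl _ hA hb.1 _ hc hbc⟩
      · exact ⟨i1, hc, fun A hA hcl => hcl _ (i3 A hA hcl) hb.1 _ hc hbc⟩
  obtain ⟨p, hp⟩ := comp_inj (restr G Q) s hs (by
    intro v
    by_cases hv : v ∈ Q
    · obtain ⟨A, a1, a2, a3, a4, a5⟩ := hP2 v hv
      refine le_trans (Set.ncard_le_ncard ?_ (Set.toFinite _)) a4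
      intro u hu
      rcases hreach v u hu with rfl | ⟨h1, h2, h3⟩
      · exact ⟨a1, hv.1⟩
      · exact ⟨h3 A a1 a3, h2.1⟩
    · refine le_trans (Set.ncard_le_ncard (t := {v}) ?_ (Set.toFinite _)) (by rw [Set.ncard_singleton]; omega)
      intro u hu
      rcases hreach v u hu with rfl | ⟨h1, h2, h3⟩
      · rfl
      · exact absurd h1 hv)
  have hgs : ∃ gs : V → V, ∀ z, (∃ u ∈ Q, u ∉ W ∧ u ∉ Y' ∧ G.Adj z u) →
      gs z ∈ Q ∧ gs z ∉ W ∧ gs z ∉ Y' ∧ G.Adj z (gs z) := by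
    refine ⟨fun v => if h : ∃ u ∈ Q, u ∉ W ∧ u ∉ Y' ∧ G.Adj v u then h.choose else v, ?_⟩
    intro v h
    simp only [h, dif_pos]
    exact h.choose_spec
  obtain ⟨gs, hgs⟩ := hgs
  -- uniqueness of the attachment
  have huniq : ∀ v ∈ Q, ∀ z ∈ B0, z ∈ D → ∀ z' ∈ B0, z' ∈ D → G.Adj v z → G.Adj v z' →
      z = z' := by
    intro v hv z hz hzD z' hz' hz'D h1 h2
    obtain ⟨A, a1, a2, a3, a4, a5⟩ := hP2 v hv
    exact a5 v a1 hv.1 v a1 hv.1 z hz hzD z' hz' hz'D h1 h2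
  let star : V → Prop := fun v => ∃ z ∈ B0, z ∈ D ∧ G.Adj z v ∧ gs z = v
  let κ : V → (Fin y ⊕ Fin k ⊕ Fin s ⊕ Unit) := fun v => if v ∈ Y' then Sum.inl (py v) else if v ∈ B0 then
    Sum.inr (Sum.inl (θ v)) else if star v then Sum.inr (Sum.inr (Sum.inr ())) else
    Sum.inr (Sum.inr (Sum.inl (p v)))
  have F1 : ∀ v u, v ∈ Y' → κ u = κ v → u = v := by
    intro v u hv h
    simp only [κ, hv, if_true] at h
    split_ifs at h with h1 h2 h3
    · exact hpy h1 hv (Sum.inl.inj h)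
  have F2 : ∀ v u, v ∉ Y' → v ∈ B0 → κ u = κ v → u ∉ Y' ∧ u ∈ B0 ∧ θ u = θ v := by
    intro v u hv hvB h
    by_cases h1 : u ∈ Y'
    · exact absurd (F1 u v h1 h.symm ▸ h1) hv
    by_cases h2 : u ∈ B0
    · simp only [κ, hv, hvB, h1, h2, if_true, if_false] at h
      exact ⟨h1, h2, Sum.inl.inj (Sum.inr.inj h)⟩
    · exfalso
      by_cases h3 : star u <;> simp [κ, hv, hvB, h1, h2, h3] at h
  have F3 : ∀ v u, v ∉ Y' → v ∉ B0 → κ u = κ v →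
      u ∉ Y' ∧ u ∉ B0 ∧ ((star u ∧ star v) ∨ p u = p v) := by
    intro v u hv hvB h
    by_cases h1 : u ∈ Y'
    · exact absurd (F1 u v h1 h.symm ▸ h1) hv
    by_cases h2 : u ∈ B0
    · exact absurd (F2 u v h1 h2 h.symm).2.1 hvB
    refine ⟨h1, h2, ?_⟩
    by_cases h3 : star u <;> by_cases h4 : star v
    · exact Or.inl ⟨h3, h4⟩
    · simp [κ, hv, hvB, h1, h2, h3, h4] at h
    · simp [κ, hv, hvB, h1, h2, h3, h4] at h
    · simp only [κ, hv, hvB, h1, h2, h3, h4, if_false] at h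
      exact Or.inr (Sum.inl.inj (Sum.inr.inj (Sum.inr.inj h)))
  obtain ⟨F0, hF0, hF0ψ, hF0f⟩ := forbid W ψ f N hN
  obtain ⟨e, he, heM, heF⟩ := palette (β := Fin y ⊕ Fin k ⊕ Fin s ⊕ Unit) F0 M (by
    simp only [Fintype.card_sum, Fintype.card_fin, Fintype.card_unit]
    omega)
  let φ : V → ℕ := fun v => if v ∈ W then ψ v else e (κ v)
  have φW : ∀ v ∈ W, φ v = ψ v := fun v hv => by simp [φ, hv]
  have φn : ∀ v, v ∉ W → φ v = e (κ v) := fun v hv => by simp [φ, hv]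
  have φeq : ∀ u v, v ∉ W → φ u = φ v → u ∉ W ∧ κ u = κ v := by
    intro u v hv h
    by_cases hu : u ∈ W
    · rw [φW u hu, φn v hv] at h
      exact absurd (h ▸ hF0ψ u hu) (heF _)
    · rw [φn u hu, φn v hv] at h
      exact ⟨hu, he h⟩
  -- members of one neighbourhood or adjacent
  have Qcol : ∀ u v, u ∈ Q → v ∈ Q → u ∉ Y' → v ∉ Y' → (restr G Q).Reachable u v →
      κ u = κ v → u = v := by
    intro u v hu hv huY hvY hr h
    obtain ⟨-, -, h3⟩ := F3 v u hvY hv.2.2 h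
    rcases h3 with ⟨⟨z, hz, hzD, hzu, e1⟩, ⟨z', hz', hz'D, hzv, e2⟩⟩ | h3
    · obtain ⟨A, a1, a2, a3, a4, a5⟩ := hP2 u hu
      have hvA : v ∈ A := by
        rcases hreach u v hr with rfl | ⟨_, _, i3⟩
        · exact a1
        · exact i3 A a1 a3
      have := a5 u a1 hu.1 v hvA hv.1 z hz hzD z' hz' hz'D hzu.symm hzv.symm
      rw [← e1, ← e2, this]
    · exact hp u v hr h3
  have Qadj : ∀ u v, u ∈ Q → v ∈ Q → G.Adj u v → (restr G Q).Reachable u v := by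
    intro u v hu hv h
    exact Adj.reachable (G := restr G Q) (show u ∈ Q ∧ v ∈ Q ∧ G.Adj u v from ⟨hu, hv, h⟩)
  refine ⟨φ, φW, ?_, ?_, ?_, ?_⟩
  · intro v _ hv
    rw [φn v hv]; exact heM _
  · -- proper
    have main : ∀ u ∈ D, ∀ v ∈ D, v ∉ W → G.Adj u v → φ u ≠ φ v := by
      intro u hu v hv hvW hadj h
      obtain ⟨huW, hk⟩ := φeq u v hvW h
      by_cases hvY : v ∈ Y'
      · exact hadj.ne (F1 v u hvY hk)
      by_cases hvB : v ∈ B0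
      · obtain ⟨h1, h2, h3⟩ := F2 v u hvY hvB hk
        exact hθ1 u ⟨⟨h2, hu⟩, huW⟩ v ⟨⟨hvB, hv⟩, hvW⟩ hadj h3
      · obtain ⟨h1, h2, -⟩ := F3 v u hvY hvB hk
        have hvQ : v ∈ Q := ⟨hv, fun h => hvY (Or.inl h), hvB⟩
        have huQ : u ∈ Q := ⟨hu, fun h => h1 (Or.inl h), h2⟩
        exact hadj.ne (Qcol u v huQ hvQ h1 hvY (Qadj u v huQ hvQ hadj) hk)
    intro u hu v hv hn hadj
    by_cases hvW : v ∈ W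
    · have huW : u ∉ W := fun h => hn ⟨h, hvW⟩
      exact (main v hv u hu huW hadj.symm).symm
    · exact main u hu v hv hvW hadj
  · -- conflict free
    intro v hv hvW hex
    by_cases hY1 : ∃ u ∈ D, u ∉ W ∧ u ∈ Y' ∧ G.Adj v u
    · obtain ⟨u, hu, huW, huY, hadj⟩ := hY1
      exact ⟨u, hu, hadj, fun u' _ _ h => F1 u u' huY (φeq u' u huW h).2⟩
    have hY2 : ∀ u ∈ D, u ∉ W → G.Adj v u → u ∉ Y' := fun u h1 h2 h3 h4 =>
      hY1 ⟨u, h1, h2, h4, h3⟩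
    have hvY : v ∉ Y := by
      intro h
      obtain ⟨g1, g2, g3⟩ := hg v hex
      exact hY2 _ g1 g2 g3 (Or.inr ⟨v, h, rfl⟩)
    by_cases hvB : v ∈ B0
    · by_cases hq : ∃ u ∈ Q, u ∉ W ∧ u ∉ Y' ∧ G.Adj v u
      · obtain ⟨g1, g2, g3, g4⟩ := hgs v hq
        refine ⟨gs v, g1.1, g4, ?_⟩
        intro u' hu' hadj h
        obtain ⟨huW, hk⟩ := φeq _ _ g2 h
        have hst : star (gs v) := ⟨v, hvB, hv, g4, rfl⟩
        have hst' : star u' := by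
          by_contra hns
          have hu2 := F3 _ _ g3 g1.2.2 hk
          simp only [κ, hu2.1, hu2.2.1, hns, g3, g1.2.2, hst, if_true, if_false] at hk
          simp at hk
        obtain ⟨z, hz, hzD, hzu, ez⟩ := hst'
        have hu2 := F3 _ _ g3 g1.2.2 hk
        have huQ : u' ∈ Q := ⟨hu', fun h => hu2.1 (Or.inl h), hu2.2.1⟩
        have := huniq u' huQ z hz hzD v hvB hv hzu.symm hadj.symm
        rw [← ez, this]
      · obtain ⟨u, hu, huW, hadj⟩ := hex
        have huB : ∀ u ∈ D, u ∉ W → G.Adj v u → u ∈ B0 := by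
          intro u hu huW hadj
          by_contra hB'
          have := hY2 u hu huW hadj
          exact hq ⟨u, ⟨hu, fun h => this (Or.inl h), hB'⟩, huW, this, hadj⟩
        obtain ⟨x, hx, hvx, hxu⟩ := hθ2 v ⟨⟨hvB, hv⟩, hvW⟩
          ⟨u, ⟨⟨huB u hu huW hadj, hu⟩, huW⟩, hadj⟩
        refine ⟨x, hx.1.2, hvx, ?_⟩
        intro u' hu' ha' h
        obtain ⟨huW', hk⟩ := φeq _ _ hx.2 h
        obtain ⟨h1, h2, h3⟩ := F2 x u' (hY2 x hx.1.2 hx.2 hvx) hx.1.1 hk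
        exact hxu u' ⟨⟨h2, hu'⟩, huW'⟩ ha' h3
    · have hvQ : v ∈ Q := ⟨hv, hvY, hvB⟩
      obtain ⟨u, hu, huW, hadj⟩ := hex
      refine ⟨u, hu, hadj, ?_⟩
      intro u' hu' ha' h
      obtain ⟨huW', hk⟩ := φeq _ _ huW h
      have huY := hY2 u hu huW hadj
      by_cases huB : u ∈ B0
      · obtain ⟨h1, h2, h3⟩ := F2 u u' huY huB hk
        exact huniq v hvQ u' h2 hu' u huB hu ha' hadj
      · obtain ⟨h1, h2, h3⟩ := F3 u u' huY huB hk
        have q1 : u ∈ Q := ⟨hu, fun h => huY (Or.inl h), huB⟩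
        have q2 : u' ∈ Q := ⟨hu', fun h => h1 (Or.inl h), h2⟩
        exact Qcol u' u q2 q1 h1 huY
          ((Qadj u' v q2 hvQ ha'.symm).trans (Qadj v u hvQ q1 hadj)) hk
  · intro w hw u hu huW _ h
    rw [φn u huW] at h
    exact heF _ (h ▸ hF0f w hw)

theorem balanced [Finite V] (G : SimpleGraph V) (a N s M : ℕ) (D W A S B : Set V)
    (hD : ∀ v, v ∈ D ↔ v ∈ A ∨ v ∈ S ∨ v ∈ B)
    (hdA : ∀ v ∈ A, v ∉ S ∧ v ∉ B) (hdS : ∀ v ∈ S, v ∉ B)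
    (hAB : ∀ x ∈ A, ∀ y ∈ B, ¬ G.Adj x y) (hS : S.ncard ≤ a) (hA : A.Nonempty)
    (hB : s < B.ncard) (hs : 2 ^ (2 * a + N) + a + N ≤ s) (h8 : 8 * a ≤ N)
    (hWD : W ⊆ D) (hWN : W.ncard ≤ N) (hW : 2 * (W ∩ B).ncard ≤ N)
    (IH : ∀ D' W' : Set V, D'.ncard < D.ncard → W' ⊆ D' → W'.ncard ≤ N →
      ∀ ψ f, ∃ φ, Good G M D' W' ψ f φ) (ψ f : V → ℕ) : ∃ φ, Good G M D W ψ f φ := by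
  classical
  have fin : ∀ X : Set V, X.Finite := fun X => Set.toFinite X
  have hu : ∃ g : V → V, ∀ x, (∃ u ∈ B, u ∉ W ∧ G.Adj x u) →
      g x ∈ B ∧ g x ∉ W ∧ G.Adj x (g x) := by
    refine ⟨fun v => if h : ∃ u ∈ B, u ∉ W ∧ G.Adj v u then h.choose else v, ?_⟩
    intro v h
    simp only [h, dif_pos]
    exact h.choose_spec
  obtain ⟨g, hg⟩ := hu
  set U : Set V := {y | ∃ x ∈ S, x ∉ W ∧ (∃ u ∈ B, u ∉ W ∧ G.Adj x u) ∧ y = g x} with hU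
  have hUc : U.ncard ≤ a := by
    refine le_trans (le_trans (Set.ncard_le_ncard (t := g '' S) ?_ (fin _))
      (Set.ncard_image_le (fin S))) hS
    rintro y ⟨x, hx, -, -, rfl⟩
    exact ⟨x, hx, rfl⟩
  have hUB : ∀ y ∈ U, y ∈ B ∧ y ∉ W ∧ ∃ x ∈ S, x ∉ W ∧ G.Adj y x := by
    rintro y ⟨x, hx, hxW, he, rfl⟩
    obtain ⟨h1, h2, h3⟩ := hg x he
    exact ⟨h1, h2, x, hx, hxW, h3.symm⟩
  set Z : Set V := S ∪ U ∪ (W ∩ B) with hZ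
  have hZW : (Z \ W).ncard ≤ 2 * a := by
    refine le_trans (Set.ncard_le_ncard (t := S ∪ U) ?_ (fin _)) ?_
    · rintro y ⟨(h | h), hw⟩
      · exact h
      · exact absurd h.1 hw
    · have := Set.ncard_union_le S U
      omega
  have hZc : 2 * Z.ncard ≤ 4 * a + N := by
    have h1 := Set.ncard_union_le S U
    have h2 := Set.ncard_union_le (S ∪ U) (W ∩ B)
    rw [← hZ] at h2
    omega
  have hZSB : ∀ z ∈ Z, z ∈ S ∨ z ∈ B := by
    rintro z ((h | h) | h)
    · exact Or.inl h
    · exact Or.inr (hUB z h).1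
    · exact Or.inr h.2
  -- representatives
  let ND : V → Set V := fun v => {x | x ∈ D ∧ G.Adj v x}
  have hr : ∃ rep : Set V → V, ∀ T, (∃ v ∈ B, v ∉ Z ∧ ND v = T) →
      rep T ∈ B ∧ rep T ∉ Z ∧ ND (rep T) = T := by
    refine ⟨fun T => if h : ∃ v ∈ B, v ∉ Z ∧ ND v = T then h.choose else hA.some, ?_⟩
    intro v h
    simp only [h, dif_pos]
    exact h.choose_spec
  obtain ⟨rep, hrep⟩ := hr
  set R : Set V := {r | ∃ T ⊆ Z, (∃ v ∈ B, v ∉ Z ∧ ND v = T) ∧ r = rep T} with hR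
  have hRc : R.ncard ≤ 2 ^ (2 * a + N) := by
    refine le_trans (le_trans (Set.ncard_le_ncard (t := rep '' (𝒫 Z)) ?_ (fin _))
      (Set.ncard_image_le (Set.toFinite _))) ?_
    · rintro y ⟨T, hT, -, rfl⟩
      exact ⟨T, hT, rfl⟩
    · rw [Set.ncard_powerset _ (fin _)]
      exact Nat.pow_le_pow_right (by norm_num) (by omega)
  have hRp : ∀ r ∈ R, r ∈ B ∧ r ∉ Z ∧ ND r ⊆ Z := by
    rintro r ⟨T, hT, he, rfl⟩
    obtain ⟨h1, h2, h3⟩ := hrep T he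
    exact ⟨h1, h2, by rw [h3]; exact hT⟩
  have hWZ : ∀ w ∈ W, w ∈ A ∨ w ∈ Z := by
    intro w hw
    rcases (hD w).1 (hWD hw) with h | h | h
    · exact Or.inl h
    · exact Or.inr (Or.inl (Or.inl h))
    · exact Or.inr (Or.inr ⟨hw, h⟩)
  set VA : Set V := A ∪ Z ∪ R with hVA
  have hVAD : VA ⊆ D := by
    rintro x ((h | h) | h)
    · exact (hD x).2 (Or.inl h)
    · exact (hD x).2 (Or.inr (hZSB x h))
    · exact (hD x).2 (Or.inr (Or.inr (hRp x h).1))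
  have hVAlt : VA.ncard < D.ncard := by
    by_contra hcon
    have heq : VA = D := Set.eq_of_subset_of_ncard_le hVAD (by omega) (fin _)
    have hBs : B ⊆ U ∪ (W ∩ B) ∪ R := by
      intro x hx
      have : x ∈ VA := heq ▸ (hD x).2 (Or.inr (Or.inr hx))
      rcases this with (h | ((h | h) | h)) | h
      · exact absurd hx (hdA x h).2
      · exact absurd hx (hdS x h)
      · exact Or.inl (Or.inl h)
      · exact Or.inl (Or.inr h)
      · exact Or.inr h
    have h1 := Set.ncard_le_ncard hBs (fin _)
    have h2 := Set.ncard_union_le (U ∪ (W ∩ B)) R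
    have h3 := Set.ncard_union_le U (W ∩ B)
    omega
  obtain ⟨φA, A1, A2, A3, A4, A5⟩ := IH VA W hVAlt (by
    intro w hw
    rcases hWZ w hw with h | h
    · exact Or.inl (Or.inl h)
    · exact Or.inl (Or.inr h)) hWN ψ f
  -- holders
  have hh : ∃ q : V → V, ∀ z, z ∈ VA → z ∉ W → (∃ u ∈ VA, u ∉ W ∧ G.Adj z u) →
      q z ∈ VA ∧ G.Adj z (q z) ∧ ∀ u' ∈ VA, G.Adj z u' → φA u' = φA (q z) → u' = q z := by
    refine ⟨fun z => if h : z ∈ VA ∧ z ∉ W ∧ ∃ u ∈ VA, u ∉ W ∧ G.Adj z u then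
      (A4 z h.1 h.2.1 h.2.2).choose else z, ?_⟩
    intro z h1 h2 h3
    have h : z ∈ VA ∧ z ∉ W ∧ ∃ u ∈ VA, u ∉ W ∧ G.Adj z u := ⟨h1, h2, h3⟩
    simp only [h, dif_pos, not_false_eq_true, and_self]
    exact (A4 z h1 h2 h3).choose_spec
  obtain ⟨q, hq⟩ := hh
  set WB : Set V := Z ∪ {y | ∃ z ∈ Z, z ∉ W ∧ y ∈ R ∧ y = q z} with hWB
  have hWBc : WB.ncard ≤ N := by
    have h1 := Set.ncard_union_le Z {y | ∃ z ∈ Z, z ∉ W ∧ y ∈ R ∧ y = q z}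
    have h2 : {y | ∃ z ∈ Z, z ∉ W ∧ y ∈ R ∧ y = q z}.ncard ≤ 2 * a := by
      refine le_trans (le_trans (Set.ncard_le_ncard (t := q '' (Z \ W)) ?_ (fin _))
        (Set.ncard_image_le (fin _))) hZW
      rintro y ⟨z, hz, hzW, -, rfl⟩
      exact ⟨z, ⟨hz, hzW⟩, rfl⟩
    rw [← hWB] at h1
    omega
  have hWBZR : ∀ w ∈ WB, w ∈ Z ∨ w ∈ R := by
    rintro w (h | ⟨z, -, -, h, -⟩)
    · exact Or.inl h
    · exact Or.inr h
  have hWBA : ∀ w ∈ WB, w ∈ VA := by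
    intro w hw
    rcases hWBZR w hw with h | h
    · exact Or.inl (Or.inr h)
    · exact Or.inr h
  set VB : Set V := B ∪ S with hVB
  have hVBlt : VB.ncard < D.ncard := by
    refine Set.ncard_lt_ncard ⟨?_, ?_⟩ (fin _)
    · rintro x (h | h)
      · exact (hD x).2 (Or.inr (Or.inr h))
      · exact (hD x).2 (Or.inr (Or.inl h))
    · intro h
      obtain ⟨x, hx⟩ := hA
      rcases h ((hD x).2 (Or.inl hx)) with h' | h'
      · exact (hdA x hx).2 h'
      · exact (hdA x hx).1 h'
  obtain ⟨φB, B1, B2, B3, B4, B5⟩ := IH VB WB hVBlt (by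
    intro w hw
    rcases hWBZR w hw with h | h
    · exact (hZSB w h).symm
    · exact Or.inl (hRp w h).1) hWBc φA (fun w => if w ∈ W then f w else φA (q w))
  let φ : V → ℕ := fun v => if v ∈ B then φB v else φA v
  have φ1 : ∀ v, v ∈ A ∨ v ∈ WB → φ v = φA v := by
    rintro v (h | h)
    · simp [φ, (hdA v h).2]
    · by_cases hv : v ∈ B
      · simp only [φ, hv, if_true]; exact B1 v h
      · simp [φ, hv]
  have hSWB : ∀ v ∈ S, v ∈ WB := fun v h => Or.inl (Or.inl (Or.inl h))
  have φ2 : ∀ v ∈ VB, φ v = φB v := by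
    rintro v (h | h)
    · simp [φ, h]
    · rw [φ1 v (Or.inr (hSWB v h)), B1 v (hSWB v h)]
  have nbA : ∀ v ∈ A, ∀ u ∈ D, G.Adj v u → u ∈ A ∨ u ∈ S := by
    intro v hv u hu h
    rcases (hD u).1 hu with h' | h' | h'
    · exact Or.inl h'
    · exact Or.inr h'
    · exact absurd h (hAB v hv u h')
  have nbB : ∀ v ∈ B, ∀ u ∈ D, G.Adj v u → u ∈ VB := by
    intro v hv u hu h
    rcases (hD u).1 hu with h' | h' | h'
    · exact absurd h.symm (hAB u h' v hv)
    · exact Or.inr h'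
    · exact Or.inl h'
  have hASV : ∀ v, v ∈ A ∨ v ∈ S → v ∈ VA := by
    rintro v (h | h)
    · exact Or.inl (Or.inl h)
    · exact Or.inl (Or.inr (Or.inl (Or.inl h)))
  have hASφ : ∀ v, v ∈ A ∨ v ∈ S → φ v = φA v := by
    rintro v (h | h)
    · exact φ1 v (Or.inl h)
    · exact φ1 v (Or.inr (hSWB v h))
  have hWnot : ∀ v ∈ B, v ∉ WB → v ∉ W := by
    intro v hv hn hw
    exact hn (Or.inl (Or.inr ⟨hw, hv⟩))
  have split : ∀ v ∈ D, (v ∈ A ∨ v ∈ WB) ∨ (v ∈ B ∧ v ∉ WB) := by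
    intro v hv
    by_cases hb : v ∈ WB
    · exact Or.inl (Or.inr hb)
    rcases (hD v).1 hv with h' | h' | h'
    · exact Or.inl (Or.inl h')
    · exact absurd (hSWB v h') hb
    · exact Or.inr ⟨h', hb⟩
  have hAWV : ∀ v, v ∈ A ∨ v ∈ WB → v ∈ VA := by
    rintro v (h | h)
    · exact Or.inl (Or.inl h)
    · exact hWBA v h
  refine ⟨φ, ?_, ?_, ?_, ?_, ?_⟩
  · intro w hw
    rw [φ1 w ((hWZ w hw).imp id Or.inl)]
    exact A1 w hw
  · intro v hv hvW
    rcases split v hv with h | h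
    · rw [φ1 v h]; exact A2 v (hAWV v h) hvW
    · rw [φ2 v (Or.inl h.1)]; exact B2 v (Or.inl h.1) h.2
  · intro u hu v hv hn hadj
    by_cases h1 : (u ∈ A ∨ u ∈ WB) ∧ (v ∈ A ∨ v ∈ WB)
    · rw [φ1 u h1.1, φ1 v h1.2]
      exact A3 u (hAWV u h1.1) v (hAWV v h1.2) hn hadj
    · have key : u ∈ VB ∧ v ∈ VB ∧ ¬ (u ∈ WB ∧ v ∈ WB) := by
        rcases split u hu with h | h
        · rcases split v hv with h' | h'
          · exact absurd ⟨h, h'⟩ h1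
          · exact ⟨nbB v h'.1 u hu hadj.symm, Or.inl h'.1, fun h => h'.2 h.2⟩
        · exact ⟨Or.inl h.1, nbB u h.1 v hv hadj, fun h' => h.2 h'.1⟩
      rw [φ2 u key.1, φ2 v key.2.1]
      exact B3 u key.1 v key.2.1 key.2.2 hadj
  · intro v hv hvW hex
    by_cases hvA : v ∈ A
    · obtain ⟨u, hu, huW, hadj⟩ := hex
      obtain ⟨x, hx, hvx, hxu⟩ := A4 v (hASV v (Or.inl hvA)) hvW
        ⟨u, hASV u (nbA v hvA u hu hadj), huW, hadj⟩
      refine ⟨x, hVAD hx, hvx, ?_⟩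
      intro u' hu' ha' he
      have m1 := nbA v hvA u' hu' ha'
      have m2 := nbA v hvA x (hVAD hx) hvx
      rw [hASφ _ m1, hASφ _ m2] at he
      exact hxu u' (hASV _ m1) ha' he
    by_cases hvZ : v ∈ Z
    · have hreq : ∃ u ∈ VA, u ∉ W ∧ G.Adj v u := by
        rcases hvZ with (h | h) | h
        · obtain ⟨u, hu, huW, hadj⟩ := hex
          rcases (hD u).1 hu with h' | h' | h'
          · exact ⟨u, hASV u (Or.inl h'), huW, hadj⟩
          · exact ⟨u, hASV u (Or.inr h'), huW, hadj⟩
          · have he : ∃ u ∈ B, u ∉ W ∧ G.Adj v u := ⟨u, h', huW, hadj⟩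
            obtain ⟨g1, g2, g3⟩ := hg v he
            exact ⟨g v, Or.inl (Or.inr (Or.inl (Or.inr ⟨v, h, hvW, he, rfl⟩))), g2, g3⟩
        · obtain ⟨_, _, x, hx, hxW, hadj⟩ := hUB v h
          exact ⟨x, hASV x (Or.inr hx), hxW, hadj⟩
        · exact absurd h.1 hvW
      obtain ⟨q1, q2, q3⟩ := hq v (Or.inl (Or.inr hvZ)) hvW hreq
      have hqs : q v ∈ A ∨ q v ∈ WB := by
        rcases q1 with (h | h) | h
        · exact Or.inl h
        · exact Or.inr (Or.inl h)
        · exact Or.inr (Or.inr ⟨v, hvZ, hvW, h, rfl⟩)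
      refine ⟨q v, hVAD q1, q2, ?_⟩
      intro u' hu' ha' he
      rw [φ1 _ hqs] at he
      rcases split u' hu' with h | h
      · rw [φ1 _ h] at he
        exact q3 u' (hAWV _ h) ha' he
      · exfalso
        rw [φ2 u' (Or.inl h.1)] at he
        have := B5 v (Or.inl hvZ) u' (Or.inl h.1) h.2 ha'
        simp only [hvW, if_false] at this
        exact this he
    have hvB : v ∈ B := by
      rcases (hD v).1 hv with h | h | h
      · exact absurd h hvA
      · exact absurd (Or.inl (Or.inl h)) hvZ
      · exact h
    by_cases hN : ND v ⊆ Z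
    · -- twin representative
      have he : ∃ v' ∈ B, v' ∉ Z ∧ ND v' = ND v := ⟨v, hvB, hvZ, rfl⟩
      obtain ⟨r1, r2, r3⟩ := hrep (ND v) he
      have hrR : rep (ND v) ∈ R := ⟨ND v, hN, he, rfl⟩
      have hrW : rep (ND v) ∉ W := fun h => r2 (Or.inr ⟨h, r1⟩)
      have tw : ∀ x, x ∈ D → (G.Adj v x ↔ G.Adj (rep (ND v)) x) := by
        intro x hx
        have := Set.ext_iff.1 r3 x
        simp only [ND, Set.mem_ofPred_eq, hx, true_and] at this
        exact this.symm
      obtain ⟨u, hu, huW, hadj⟩ := hex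
      obtain ⟨x, hx, hvx, hxu⟩ := A4 (rep (ND v)) (Or.inr hrR) hrW
        ⟨u, Or.inl (Or.inr (hN ⟨hu, hadj⟩)), huW, (tw u hu).1 hadj⟩
      have hxD := hVAD hx
      have hvx' := (tw x hxD).2 hvx
      have hxZ : x ∈ Z := hN ⟨hxD, hvx'⟩
      refine ⟨x, hxD, hvx', ?_⟩
      intro u' hu' ha' he'
      have huZ : u' ∈ Z := hN ⟨hu', ha'⟩
      rw [φ1 u' (Or.inr (Or.inl huZ)), φ1 x (Or.inr (Or.inl hxZ))] at he'
      exact hxu u' (Or.inl (Or.inr huZ)) ((tw u' hu').1 ha') he'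
    · have hvWB : v ∉ WB := by
        intro h
        rcases hWBZR v h with h' | h'
        · exact hvZ h'
        · exact hN (hRp v h').2.2
      obtain ⟨u, hu, huZ⟩ := Set.not_subset.1 hN
      obtain ⟨huD, hadj⟩ : u ∈ D ∧ G.Adj v u := hu
      have huWB : u ∉ WB := by
        intro h
        rcases hWBZR u h with h' | h'
        · exact huZ h'
        · exact hvZ ((hRp u h').2.2 ⟨hv, hadj.symm⟩)
      obtain ⟨x, hx, hvx, hxu⟩ := B4 v (Or.inl hvB) hvWB ⟨u, nbB v hvB u huD hadj, huWB, hadj⟩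
      refine ⟨x, ?_, hvx, ?_⟩
      · rcases hx with h | h
        · exact (hD x).2 (Or.inr (Or.inr h))
        · exact (hD x).2 (Or.inr (Or.inl h))
      · intro u' hu' ha' he'
        have m1 := nbB v hvB u' hu' ha'
        rw [φ2 _ m1, φ2 _ hx] at he'
        exact hxu u' m1 ha' he'
  · intro w hw u hu huW hadj
    rcases split u hu with h | h
    · rw [φ1 u h]
      exact A5 w hw u (hAWV u h) huW hadj
    · have hwB : w ∈ WB := by
        rcases hWZ w hw with h' | h'
        · exact absurd hadj (hAB w h' u h.1)
        · exact Or.inl h'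
      have := B5 w hwB u (Or.inl h.1) h.2 hadj
      rw [φ2 u (Or.inl h.1)]
      simpa only [hw, if_true] using this

theorem oddModel_mono {G H : SimpleGraph V} (hle : ∀ a b, H.Adj a b → G.Adj a b) {h : ℕ}
    (hm : OddModel H h) : OddModel G h := by
  obtain ⟨ρ, c, hcc, hdis, hmono⟩ := hm
  refine ⟨ρ, c, ?_, hdis, ?_⟩
  · intro i
    refine ⟨(hcc i).1, fun x hx y hy => ?_⟩
    exact Relation.ReflTransGen.mono (r := Link H c (ρ i)) (p := Link G c (ρ i))
      (fun a b hab => ⟨hab.1, hab.2.1, hle _ _ hab.2.2.1, hab.2.2.2⟩)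
      _ _ ((hcc i).2 x hx y hy)
  · intro i j hij
    obtain ⟨x, hx, y, hy, h1, h2⟩ := hmono i j hij
    exact ⟨x, hx, y, hy, hle _ _ h1, h2⟩

theorem hasK_restr {G : SimpleGraph V} {D S : Set V} (hS : S ⊆ D) {T : ℕ}
    (hK : HasK G T S) : HasK (restr G D) T S := by
  obtain ⟨ρ, hsub, hconn, hdis, hadj⟩ := hK
  refine ⟨ρ, hsub, ?_, hdis, ?_⟩
  · intro i
    refine ⟨(hconn i).1, fun x hx y hy => ?_⟩
    exact Relation.ReflTransGen.mono (r := CLink G (ρ i)) (p := CLink (restr G D) (ρ i))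
      (fun a b hab => ⟨hab.1, hab.2.1,
      hS (hsub i hab.1), hS (hsub i hab.2.1), hab.2.2⟩) _ _ ((hconn i).2 x hx y hy)
  · intro i j hij
    obtain ⟨x, hx, y, hy, h1⟩ := hadj i j hij
    exact ⟨x, hx, y, hy, hS (hsub i hx), hS (hsub j hy), h1⟩

theorem main_good (h : ℕ) : ∃ (c N : ℕ), ∀ (V : Type u) [Finite V] (G : SimpleGraph V) (k : ℕ),
    ¬ OddModel G h → HBip G k → ∀ (n : ℕ) (D W : Set V), D.ncard ≤ n → W ⊆ D → W.ncard ≤ N →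
      ∀ ψ f, ∃ φ, Good G (k + c) D W ψ f φ := by
  classical
  obtain ⟨a, ha⟩ : ∃ a, a = 12 * (h * h) + 1 := ⟨_, rfl⟩
  obtain ⟨N, hN⟩ : ∃ N, N = 8 * a := ⟨_, rfl⟩
  obtain ⟨s, hs⟩ : ∃ s, s = 2 ^ (2 * a + N) + a + N := ⟨_, rfl⟩
  obtain ⟨t, ht⟩ := struct_thm.{u} h s
  obtain ⟨T, hT⟩ : ∃ T, T = 2 ^ (h + t) := ⟨_, rfl⟩
  obtain ⟨C, hC⟩ : ∃ C, C = 2 ^ T * (2 ^ T) ^ (2 ^ T) := ⟨_, rfl⟩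
  refine ⟨2 * N + C + 2 * a + s + 1, N, ?_⟩
  intro V _ G k hno HB n
  have fin : ∀ X : Set V, X.Finite := fun X => Set.toFinite X
  induction n using Nat.strong_induction_on with
  | _ n ih =>
  intro D W hDn hWD hWN ψ f
  have IH : ∀ D' W' : Set V, D'.ncard < D.ncard → W' ⊆ D' → W'.ncard ≤ N →
      ∀ ψ f, ∃ φ, Good G (k + (2 * N + C + 2 * a + s + 1)) D' W' ψ f φ := by
    intro D' W' hlt h1 h2
    exact ih D'.ncard (lt_of_lt_of_le hlt hDn) D' W' le_rfl h1 h2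
  by_cases hK : HasK G T (D \ W)
  swap
  · exact noK_good G T N _ D W hWN (by rw [← hC]; omega) hK ψ f
  have hno' : ¬ OddModel (restr G D) h := fun hm =>
    hno (oddModel_mono (H := restr G D) (fun a b hab => hab.2.2) hm)
  obtain ⟨Tr, c, hTr, hTrs⟩ := trees_of_hasK h t T hT.ge hno'
    (hasK_restr (Set.sdiff_subset) hK)
  obtain ⟨Y, B0, κ, hY, hYB, hκ, hst⟩ := ht V (restr G D) Tr c hTr hno'
  by_cases hbig : ∃ v ∈ D, v ∉ Y ∧ v ∉ B0 ∧ ∃ Z A Big : Set V, (Z = ∅ ∨ ∃ z, Z = {z}) ∧ Z ⊆ B0 ∧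
      v ∈ A ∧ (∀ a ∈ A, a ∉ Y ∧ a ∉ B0) ∧
      (∀ a ∈ A, ∀ w, (restr G D).Adj a w → w ∈ A ∨ w ∈ Y ∨ w ∈ Z) ∧
      (∀ b ∈ Big, ∃ i, b ∈ Tr i) ∧ s < Big.ncard ∧ (∀ b ∈ Big, b ∉ A ∧ b ∉ Y ∧ b ∉ Z) ∧
      s < (A ∩ D).ncard
  · obtain ⟨v, hvD, hvY, hvB, Z, A, Big, hZ, hZB, hvA, hA, hcl, hBT, hBig, hBn, hAs⟩ := hbig
    have hZc : Z.ncard ≤ 1 := by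
      rcases hZ with rfl | ⟨z, rfl⟩
      · simp
      · simp
    set A' : Set V := A ∩ D with hA'
    set S : Set V := (Y ∪ Z) ∩ D with hS
    set B' : Set V := {x | x ∈ D ∧ x ∉ A ∧ x ∉ Y ∧ x ∉ Z} with hB'
    have hSc : S.ncard ≤ a := by
      have h1 := Set.ncard_le_ncard (s := S) (t := Y ∪ Z) Set.inter_subset_left (fin _)
      have h2 := Set.ncard_union_le Y Z
      omega
    have hBs : s < B'.ncard := by
      refine lt_of_lt_of_le hBig (Set.ncard_le_ncard ?_ (fin _))
      intro b hb
      obtain ⟨i, hi⟩ := hBT b hb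
      exact ⟨(hTrs i hi).1, hBn b hb⟩
    have e1 : ∀ v, v ∈ D ↔ v ∈ A' ∨ v ∈ S ∨ v ∈ B' := by
      intro x
      constructor
      · intro hx
        by_cases x1 : x ∈ A
        · exact Or.inl ⟨x1, hx⟩
        by_cases x2 : x ∈ Y
        · exact Or.inr (Or.inl ⟨Or.inl x2, hx⟩)
        by_cases x3 : x ∈ Z
        · exact Or.inr (Or.inl ⟨Or.inr x3, hx⟩)
        · exact Or.inr (Or.inr ⟨hx, x1, x2, x3⟩)
      · rintro (hx | hx | hx)
        · exact hx.2
        · exact hx.2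
        · exact hx.1
    have e2 : ∀ v ∈ A', v ∉ S ∧ v ∉ B' := by
      intro x hx
      refine ⟨?_, fun hb => hb.2.1 hx.1⟩
      rintro ⟨(h' | h'), -⟩
      · exact (hA x hx.1).1 h'
      · exact (hA x hx.1).2 (hZB h')
    have e3 : ∀ v ∈ S, v ∉ B' := by
      rintro x ⟨(h' | h'), -⟩ hb
      · exact hb.2.2.1 h'
      · exact hb.2.2.2 h'
    have e4 : ∀ x ∈ A', ∀ y ∈ B', ¬ G.Adj x y := by
      intro x hx y hy hadj
      rcases hcl x hx.1 y ⟨hx.2, hy.1, hadj⟩ with h' | h' | h'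
      · exact hy.2.1 h'
      · exact hy.2.2.1 h'
      · exact hy.2.2.2 h'
    by_cases hWB : 2 * (W ∩ B').ncard ≤ N
    · exact balanced G a N s _ D W A' S B' e1 e2 e3 e4 hSc ⟨v, hvA, hvD⟩ hBs hs.ge hN.ge
        hWD hWN hWB IH ψ f
    · have hWA : 2 * (W ∩ A').ncard ≤ N := by
        have hdis : Disjoint (W ∩ A') (W ∩ B') := by
          rw [Set.disjoint_left]
          rintro x ⟨_, x1⟩ ⟨_, x2⟩
          exact (e2 x x1).2 x2
        have h1 := Set.ncard_union_eq hdis (fin _) (fin _)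
        have h2 : (W ∩ A' ∪ W ∩ B').ncard ≤ W.ncard := by
          refine Set.ncard_le_ncard ?_ (fin _)
          rintro x (hx | hx) <;> exact hx.1
        omega
      have hne : B'.Nonempty := by
        rw [← Set.ncard_pos (fin _)]; omega
      refine balanced G a N s _ D W B' S A' ?_ ?_ ?_ ?_ hSc hne hAs hs.ge hN.ge
        hWD hWN hWA IH ψ f
      · intro x
        rw [e1 x]
        tauto
      · intro x hx
        exact ⟨fun h' => e3 x h' hx, fun h' => (e2 x h').2 hx⟩
      · intro x hx h'
        exact (e2 x h').1 hx
      · intro x hx y hy h'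
        exact e4 y hy x hx h'.symm
  · refine final_coloring G k s (2 * a) _ N D W Y B0 hWN ?_ ?_ ?_ ?_ HB hYB ?_ ?_ ψ f
    · have : 0 < 2 ^ (2 * a + N) := by positivity
      omega
    · omega
    · omega
    · omega
    · refine ⟨κ, ?_⟩
      rintro x ⟨hx, hxD⟩ y ⟨hy, hyD⟩ hadj
      exact hκ x hx y hy ⟨hxD, hyD, hadj⟩
    · intro v hvD hvY hvB
      obtain ⟨Z, A, Big, hZ, hZB, hvA, hA, hcl, hBT, hBig, hBn⟩ := hst v hvY hvB
      refine ⟨Z, A, ?_, hZB, hvA, hA, ?_, ?_⟩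
      · rcases hZ with rfl | ⟨z, rfl⟩
        · exact Set.subsingleton_empty
        · exact Set.subsingleton_singleton
      · intro x hx hxD w hw hadj
        exact hcl x hx w ⟨hxD, hw, hadj⟩
      · by_contra hcon
        exact hbig ⟨v, hvD, hvY, hvB, Z, A, Big, hZ, hZB, hvA, hA, hcl, hBT, hBig, hBn,
          not_le.1 hcon⟩

/-- unique neighbour colors from an `ncard` statement -/
theorem pcf_of_injective [Finite V] (G : SimpleGraph V) : ∃ t, PCFColorable G t := by
  classical
  obtain ⟨n, ⟨e⟩⟩ := Finite.exists_equiv_fin V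
  refine ⟨n, fun v => (e v : ℕ) + 1, ?_, ?_, ?_⟩
  · intro v
    have := (e v).2
    simp only [Finset.mem_Icc]
    omega
  · intro u w hadj heq
    have : e u = e w := Fin.ext (by simpa using heq)
    exact hadj.ne (e.injective this)
  · rintro v ⟨u, hu⟩
    refine ⟨(e u : ℕ) + 1, ?_⟩
    rw [Set.ncard_eq_one]
    refine ⟨u, ?_⟩
    ext x
    simp only [Set.mem_ofPred_eq, Set.mem_singleton_iff]
    constructor
    · rintro ⟨_, h2⟩
      exact e.injective (Fin.ext (by simpa using h2))
    · rintro rfl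
      exact ⟨hu, rfl⟩

theorem hbip_of_chi [Finite V] (G : SimpleGraph V) (k : ℕ) (hk : 0 < k)
    (hc : ∀ s : Set V, (G.induce s).Colorable 2 → chiPCF (G.induce s) ≤ k) : HBip G k := by
  classical
  rintro B ⟨κ, hκ⟩
  have hcol : (G.induce B).Colorable 2 := by
    have C : (G.induce B).Coloring Bool := Coloring.mk (fun x => κ x) (by
      intro x y hxy
      exact hκ x x.2 y y.2 hxy)
    simpa using C.colorable
  have hle := hc B hcol
  obtain ⟨φ, hφ1, hφ2, hφ3⟩ : PCFColorable (G.induce B) (chiPCF (G.induce B)) :=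
    Nat.sInf_mem (s := {t : ℕ | PCFColorable (G.induce B) t}) (pcf_of_injective (G.induce B))
  have hb : ∀ v : B, φ v - 1 < k ∧ 1 ≤ φ v := by
    intro v
    have := Finset.mem_Icc.1 (hφ1 v)
    omega
  let θ : V → Fin k := fun v => if hv : v ∈ B then ⟨φ ⟨v, hv⟩ - 1, (hb ⟨v, hv⟩).1⟩ else ⟨0, hk⟩
  have hθ : ∀ u v (hu : u ∈ B) (hv : v ∈ B), θ u = θ v → φ ⟨u, hu⟩ = φ ⟨v, hv⟩ := by
    intro u v hu hv h
    simp only [θ, hu, hv, dif_pos, Fin.mk.injEq] at h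
    have h1 := (hb ⟨u, hu⟩).2
    have h2 := (hb ⟨v, hv⟩).2
    omega
  refine ⟨θ, ?_, ?_⟩
  · intro u hu v hv hadj h
    exact hφ2 (u := ⟨u, hu⟩) (w := ⟨v, hv⟩) hadj (hθ u v hu hv h)
  · rintro v hv ⟨u, hu, hadj⟩
    obtain ⟨c, hc1⟩ := hφ3 ⟨v, hv⟩ ⟨⟨u, hu⟩, hadj⟩
    obtain ⟨x, hx⟩ := Set.ncard_eq_one.1 hc1
    have hxm : (G.induce B).Adj ⟨v, hv⟩ x ∧ φ x = c := by
      have : x ∈ ({x} : Set B) := rfl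
      rw [← hx] at this
      exact this
    refine ⟨x, x.2, hxm.1, ?_⟩
    intro u' hu' ha' he
    have h1 := hθ u' x hu' x.2 he
    have : (⟨u', hu'⟩ : B) ∈ ({x} : Set B) := by
      rw [← hx]
      exact ⟨ha', h1.trans hxm.2⟩
    exact congrArg Subtype.val (Set.mem_singleton_iff.1 this)

theorem stmt3 (h : ℕ) (hh : 0 < h) :
    ∃ c : ℤ, ∀ (V : Type) [Fintype V] (G : SimpleGraph V),
      ¬ IsOddMinor (⊤ : SimpleGraph (Fin h)) G →
      ∀ k : ℕ, 0 < k →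
        (∀ s : Set V, (G.induce s).Colorable 2 → chiPCF (G.induce s) ≤ k) →
        (chiPCF G : ℤ) ≤ (k : ℤ) + c := by
  obtain ⟨c, N, hmain⟩ := main_good.{0} h
  refine ⟨(c : ℤ), ?_⟩
  intro V _ G hG k hk hbip
  have hno : ¬ OddModel G h := fun hm => hG (isOddMinor_of_oddModel hm)
  obtain ⟨φ, -, g2, g3, g4, -⟩ := hmain V G k hno (hbip_of_chi G k hk hbip) _ Set.univ ∅ le_rfl
    (Set.empty_subset _) (by simp) (fun _ => 0) (fun _ => 0)
  have hp : PCFColorable G (k + c) := by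
    refine ⟨fun v => φ v + 1, ?_, ?_, ?_⟩
    · intro v
      have := g2 v (Set.mem_univ _) (Set.notMem_empty _)
      simp only [Finset.mem_Icc]
      omega
    · intro u w hadj heq
      exact g3 u (Set.mem_univ _) w (Set.mem_univ _) (fun hn => hn.1) hadj (Nat.succ.inj heq)
    · rintro v ⟨u, hu⟩
      obtain ⟨x, -, hvx, hx⟩ := g4 v (Set.mem_univ _) (Set.notMem_empty _)
        ⟨u, Set.mem_univ _, Set.notMem_empty _, hu⟩
      refine ⟨φ x + 1, ?_⟩
      rw [Set.ncard_eq_one]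
      refine ⟨x, ?_⟩
      ext y
      simp only [Set.mem_ofPred_eq, Set.mem_singleton_iff]
      constructor
      · rintro ⟨h1, h2⟩
        exact hx y (Set.mem_univ _) h1 (by omega)
      · rintro rfl
        exact ⟨hvx, rfl⟩
  have : chiPCF G ≤ k + c := Nat.sInf_le (s := {t : ℕ | PCFColorable G t}) hp
  exact_mod_cast this

end CFPaper
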